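/- The only rational points on the smooth projective plane quartic curve C₄ : 7x³z + 3x²y² − 3xyz² + y³z − z⁴ = 0 are (1 : 0 : 0), (0 : 1 : 0), and (0 : 1 : 1). Equivalently, every triple of coprime integers (x, y, z), not all zero, satisfying 7x³z + 3x²y² − 3xyz² + y³z − z⁴ = 0 equals ±(1,0,0), ±(0,1,0), or ±(0,1,1). -/

import Mathlib

section
open NumberField Polynomial Module

namespace C4
section NF
variable {K : Type*} [Field K] [NumberField K]

lemma dim3 (pb : PowerBasis ℚ K) (hm : minpoly ℚ pb.gen = X ^ 3 - C 7) : pb.dim = 3 := by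
  rw [← pb.natDegree_minpoly, hm]
  exact natDegree_X_pow_sub_C

lemma gen3 (pb : PowerBasis ℚ K) (hm : minpoly ℚ pb.gen = X ^ 3 - C 7) : pb.gen ^ 3 = 7 := by
  have h := minpoly.aeval ℚ pb.gen
  rw [hm] at h
  simp at h
  linear_combination h

lemma finrank3 (pb : PowerBasis ℚ K) (hm : minpoly ℚ pb.gen = X ^ 3 - C 7) :
    finrank ℚ K = 3 := by rw [pb.finrank, dim3 pb hm]

lemma norm_form (pb : PowerBasis ℚ K) (hm : minpoly ℚ pb.gen = X ^ 3 - C 7) (a b c : ℚ) :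
    Algebra.norm ℚ ((a : K) + b * pb.gen + c * pb.gen ^ 2)
      = a ^ 3 + 7 * b ^ 3 + 49 * c ^ 3 - 21 * a * b * c := by
  have h3 := gen3 pb hm
  let B : Basis (Fin 3) ℚ K := pb.basis.reindex (finCongr (dim3 pb hm))
  have hB : ∀ i, B i = pb.gen ^ (i : ℕ) := by
    intro i; simp [B]
  let M : Matrix (Fin 3) (Fin 3) ℚ := !![a, 7*c, 7*b; b, a, 7*c; c, b, a]
  have hM : Matrix.toLin B B M = Algebra.lmul ℚ K ((a : K) + b * pb.gen + c * pb.gen ^ 2) := by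
    apply B.ext
    intro j
    rw [Matrix.toLin_self]
    fin_cases j
    · simp [Fin.sum_univ_three, hB, M, Algebra.smul_def]
    · simp [Fin.sum_univ_three, hB, M, Algebra.smul_def]
      linear_combination (-c : K) * h3
    · simp [Fin.sum_univ_three, hB, M, Algebra.smul_def]
      linear_combination (-b - c * pb.gen : K) * h3
  rw [Algebra.norm_apply, ← hM, LinearMap.det_toLin, Matrix.det_fin_three]
  simp [M]
  ring

lemma discr_pb (pb : PowerBasis ℚ K) (hm : minpoly ℚ pb.gen = X ^ 3 - C 7) :
    Algebra.discr ℚ pb.basis = -1323 := by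
  have h := norm_form pb hm 0 0 3
  rw [Algebra.discr_powerBasis_eq_norm, hm, finrank3 pb hm]
  simp only [Rat.cast_zero, zero_mul, add_zero, zero_add, Rat.cast_ofNat, map_mul, map_pow] at h
  simp
  rw [show (2 + 1 : K) = 3 by norm_num, h]
  norm_num

lemma discr_le (pb : PowerBasis ℚ K) (hm : minpoly ℚ pb.gen = X ^ 3 - C 7) :
    |(discr K : ℝ)| ≤ 1323 := by
  have h3 := gen3 pb hm
  let e : Fin pb.dim ≃ Free.ChooseBasisIndex ℤ (𝓞 K) := by
    refine Fintype.equivOfCardEq ?_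
    rw [Fintype.card_fin, ← pb.finrank, ← RingOfIntegers.rank, finrank_eq_card_chooseBasisIndex]
  let ib := (integralBasis K).reindex e.symm
  have hint : IsIntegral ℤ pb.gen := ⟨X ^ 3 - C 7, monic_X_pow_sub_C _ (by norm_num), by simp [h3]⟩
  have hd : Algebra.discr ℚ ib = discr K := by
    rw [coe_discr]
    simp only [ib, Basis.coe_reindex]
    exact Algebra.discr_reindex ℚ (integralBasis K) e.symm
  have hP : ∃ P : Matrix (Fin pb.dim) (Fin pb.dim) ℤ, ib.toMatrix pb.basis = P.map (algebraMap ℤ ℚ) := by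
    have : ∀ i j, ∃ n : ℤ, ib.toMatrix pb.basis i j = n := by
      intro i j
      have hj : IsIntegral ℤ (pb.basis j) := by rw [pb.basis_eq_pow]; exact hint.pow _
      have := integralBasis_repr_apply K (⟨pb.basis j, hj⟩ : 𝓞 K) (e i)
      refine ⟨((RingOfIntegers.basis K).repr ⟨pb.basis j, hj⟩ (e i)), ?_⟩
      rw [← eq_intCast (algebraMap ℤ ℚ), ← this]
      simp [Basis.toMatrix_apply, ib]
    choose P hP using this
    exact ⟨Matrix.of P, by ext i j; rw [hP i j]; simp⟩
  obtain ⟨P, hP⟩ := hP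
  have hdisc : Algebra.discr ℚ pb.basis = ((P.det : ℤ) : ℚ) ^ 2 * discr K := by
    rw [← hd, ← Basis.toMatrix_map_vecMul ib pb.basis, Algebra.discr_of_matrix_vecMul, hP]
    congr 2
    rw [← eq_intCast (algebraMap ℤ ℚ), RingHom.map_det]
    rfl
  rw [discr_pb pb hm] at hdisc
  have hz : (-1323 : ℤ) = P.det ^ 2 * discr K := by exact_mod_cast hdisc
  have : |discr K| ≤ 1323 := by
    have h1 : (1323 : ℤ) = |P.det ^ 2| * |discr K| := by rw [← abs_mul, ← hz]; rfl
    have h2 : P.det ≠ 0 := by rintro h; simp [h] at hz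
    have h4 : 1 ≤ |P.det ^ 2| := Int.one_le_abs (pow_ne_zero _ h2)
    nlinarith [abs_nonneg (discr K)]
  exact_mod_cast this
end NF
end C4
end

section
open NumberField Polynomial Module

namespace C4
section NF2
variable {K : Type*} [Field K] [NumberField K]

lemma nrReal (pb : PowerBasis ℚ K) (hm : minpoly ℚ pb.gen = X ^ 3 - C 7) :
    InfinitePlace.nrRealPlaces K = 1 := by
  classical
  have h1 := InfinitePlace.nrRealPlaces_pos_of_odd_finrank (K := K)
    (by rw [finrank3 pb hm]; decide)
  apply le_antisymm _ h1
  rw [← InfinitePlace.card_real_embeddings, Fintype.card_le_one_iff]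
  rintro ⟨φ, hφ⟩ ⟨ψ, hψ⟩
  have h3 := gen3 pb hm
  have key : hφ.embedding pb.gen = hψ.embedding pb.gen := by
    have a1 : (hφ.embedding pb.gen) ^ 3 = 7 := by rw [← map_pow, h3, map_ofNat]
    have a2 : (hψ.embedding pb.gen) ^ 3 = 7 := by rw [← map_pow, h3, map_ofNat]
    exact (Odd.strictMono_pow (by decide : Odd 3)).injective (a1.trans a2.symm)
  have key2 : φ pb.gen = ψ pb.gen := by
    rw [← hφ.coe_embedding_apply, ← hψ.coe_embedding_apply, key]
  have := pb.algHom_ext (f := φ.toRatAlgHom) (g := ψ.toRatAlgHom) (by simpa using key2)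
  apply Subtype.ext
  ext x
  simpa using DFunLike.congr_fun this x

lemma nrComplex (pb : PowerBasis ℚ K) (hm : minpoly ℚ pb.gen = X ^ 3 - C 7) :
    InfinitePlace.nrComplexPlaces K = 1 := by
  have := InfinitePlace.card_add_two_mul_card_eq_rank K
  rw [nrReal pb hm, finrank3 pb hm] at this
  omega

lemma rank1 (pb : PowerBasis ℚ K) (hm : minpoly ℚ pb.gen = X ^ 3 - C 7) :
    Units.rank K = 1 := by
  rw [Units.rank, InfinitePlace.card_eq_nrRealPlaces_add_nrComplexPlaces, nrReal pb hm,
    nrComplex pb hm]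

lemma ideal_rep (pb : PowerBasis ℚ K) (hm : minpoly ℚ pb.gen = X ^ 3 - C 7)
    (c : ClassGroup (𝓞 K)) : ∃ I : nonZeroDivisors (Ideal (𝓞 K)), ClassGroup.mk0 I = c ∧
      Ideal.absNorm (I : Ideal (𝓞 K)) ≤ 10 := by
  obtain ⟨I, hI, hb⟩ := exists_ideal_in_class_of_norm_le c
  refine ⟨I, hI, ?_⟩
  rw [nrComplex pb hm, finrank3 pb hm] at hb
  have hd := discr_le pb hm
  have hs : √|(discr K : ℝ)| ≤ 36.4 := by
    rw [Real.sqrt_le_left (by norm_num)]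
    exact hd.trans (by norm_num)
  have hpi : 4 / Real.pi ≤ 4 / 3.14 := by
    gcongr; exact Real.pi_gt_d2.le
  have h0 : (0 : ℝ) ≤ √|(discr K : ℝ)| := Real.sqrt_nonneg _
  have : (Ideal.absNorm (I : Ideal (𝓞 K)) : ℝ) ≤ 4 / 3.14 * (6 / 27 * 36.4) := by
    refine hb.trans ?_
    rw [pow_one]
    have : ((Nat.factorial 3 : ℕ) : ℝ) / (3 : ℕ) ^ 3 = 6 / 27 := by norm_num [Nat.factorial]
    push_cast at this ⊢
    rw [this]
    gcongr
  have h11 : (Ideal.absNorm (I : Ideal (𝓞 K)) : ℝ) < 11 := this.trans_lt (by norm_num)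
  have : Ideal.absNorm (I : Ideal (𝓞 K)) < 11 := by exact_mod_cast h11
  omega

/-- norm of integral elements -/
lemma absNorm_form (pb : PowerBasis ℚ K) (hm : minpoly ℚ pb.gen = X ^ 3 - C 7)
    (A : 𝓞 K) (hA : (A : K) = pb.gen) (a b c : ℤ) :
    Ideal.absNorm (Ideal.span {(a : 𝓞 K) + b * A + c * A ^ 2}) =
      (a ^ 3 + 7 * b ^ 3 + 49 * c ^ 3 - 21 * a * b * c).natAbs := by
  rw [Ideal.absNorm_span_singleton]
  congr 1
  have h : ((Algebra.norm ℤ ((a : 𝓞 K) + (b : 𝓞 K) * A + (c : 𝓞 K) * A ^ 2) : ℤ) : ℚ) = 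
     a ^ 3 + 7 * b ^ 3 + 49 * c ^ 3 - 21 * a * b * c := by
    have := Algebra.coe_norm_int ((a : 𝓞 K) + (b : 𝓞 K) * A + (c : 𝓞 K) * A ^ 2)
    rw [this]
    have := norm_form pb hm a b c
    rw [← this]
    congr 1
    simp [hA]
  exact_mod_cast h

lemma prime_quot (A : 𝓞 K) (hA : A ^ 3 = 7) (Q : Ideal (𝓞 K)) (p : ℕ) [hp : Fact p.Prime]
    (hQ : Ideal.absNorm Q = p) (m : ℕ) (hm : ∀ r : ZMod p, r ^ 3 = 7 → r = m) :
    A - m ∈ Q := by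
  have hcard : Nat.card (𝓞 K ⧸ Q) = p := hQ
  have : Finite (𝓞 K ⧸ Q) := Nat.finite_of_card_ne_zero (by rw [hcard]; exact hp.1.ne_zero)
  let := Fintype.ofFinite (𝓞 K ⧸ Q)
  let f := ZMod.ringEquivOfPrime (𝓞 K ⧸ Q) hp.1 (by rw [← Nat.card_eq_fintype_card, hcard])
  have h1 : (f.symm (Ideal.Quotient.mk Q A)) ^ 3 = 7 := by
    rw [← map_pow, ← map_pow, hA, map_ofNat, map_ofNat]
  have h2 := hm _ h1
  rw [RingEquiv.symm_apply_eq] at h2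
  rw [← Ideal.Quotient.eq_zero_iff_mem, map_sub, h2]
  simp
end NF2
end C4
end

section
open NumberField Polynomial Module

namespace C4

lemma span_pair_cube {R : Type*} [CommRing R] (a b g : R) (x0 x1 x2 x3 y0 y1 y2 y3 : R)
    (h0 : a ^ 3 = g * x0) (h1 : a ^ 2 * b = g * x1) (h2 : a * b ^ 2 = g * x2)
    (h3 : b ^ 3 = g * x3)
    (hg : g = y0 * a ^ 3 + y1 * (a ^ 2 * b) + y2 * (a * b ^ 2) + y3 * b ^ 3) :
    Ideal.span {a, b} ^ 3 = Ideal.span {g} := by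
  apply le_antisymm
  · rw [pow_succ, pow_two, Ideal.span_pair_mul_span_pair, Ideal.span_mul_span', Ideal.span_le]
    rintro z hz
    obtain ⟨u, hu, v, hv, rfl⟩ := Set.mem_mul.1 hz
    simp only [Set.mem_insert_iff, Set.mem_singleton_iff] at hu hv
    rw [SetLike.mem_coe, Ideal.mem_span_singleton]
    rcases hu with rfl | rfl | rfl | rfl <;> rcases hv with rfl | rfl
    · exact ⟨x0, by rw [← h0]; ring⟩
    · exact ⟨x1, by rw [← h1]; ring⟩
    · exact ⟨x1, by rw [← h1]; ring⟩
    · exact ⟨x2, by rw [← h2]; ring⟩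
    · exact ⟨x1, by rw [← h1]; ring⟩
    · exact ⟨x2, by rw [← h2]; ring⟩
    · exact ⟨x2, by rw [← h2]; ring⟩
    · exact ⟨x3, by rw [← h3]; ring⟩
  · rw [Ideal.span_singleton_le_iff_mem, hg]
    have ha : a ∈ Ideal.span {a, b} := Ideal.subset_span (by simp)
    have hb : b ∈ Ideal.span {a, b} := Ideal.subset_span (by simp)
    have m : ∀ u v w, u ∈ Ideal.span {a, b} → v ∈ Ideal.span {a, b} → w ∈ Ideal.span {a, b} →
        u * v * w ∈ Ideal.span {a, b} ^ 3 := by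
      intro u v w hu hv hw
      rw [pow_succ, pow_two]
      exact Ideal.mul_mem_mul (Ideal.mul_mem_mul hu hv) hw
    refine add_mem (add_mem (add_mem ?_ ?_) ?_) ?_ <;> apply Ideal.mul_mem_left
    · convert m a a a ha ha ha using 1; ring
    · convert m a a b ha ha hb using 1; ring
    · convert m a b b ha hb hb using 1; ring
    · convert m b b b hb hb hb using 1; ring

section NF3
variable {K : Type*} [Field K] [NumberField K]

lemma nat_cube_inj {a b : ℕ} (h : a ^ 3 = b ^ 3) : a = b := Nat.pow_left_injective (by norm_num : 3 ≠ 0) h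

/-- `P4` is the prime above `2` of degree `2` -/
lemma P4_facts (pb : PowerBasis ℚ K) (hm : minpoly ℚ pb.gen = X ^ 3 - C 7)
    (A : 𝓞 K) (hA : (A : K) = pb.gen) (hA3 : A ^ 3 = 7) :
    (Ideal.span {2, A ^ 2 - A + 1}) ^ 3 = Ideal.span {A ^ 2 - A + 1} ∧
    Ideal.absNorm (Ideal.span {2, A ^ 2 - A + 1}) = 4 ∧
    (Ideal.span {2, A ^ 2 - A + 1}).IsMaximal := by
  have h8 : (A + 1) * (A ^ 2 - A + 1) = 8 := by linear_combination hA3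
  have c3 : (Ideal.span {2, A ^ 2 - A + 1}) ^ 3 = Ideal.span {A ^ 2 - A + 1} := by
    refine span_pair_cube _ _ _ (A+1) 4 (2*(A^2-A+1)) ((A^2-A+1)^2)
      (-(A-2)*((A ^ 2 - A + 1)+3)) (-2) 0 1
       (by linear_combination -hA3) (by ring) (by ring) (by ring) ?_
    linear_combination (-(A-2)*((A ^ 2 - A + 1)+3)) * hA3
  have hn : Ideal.absNorm (Ideal.span {2, A ^ 2 - A + 1}) = 4 := by
    apply nat_cube_inj
    rw [← map_pow, c3]
    have := absNorm_form pb hm A hA 1 (-1) 1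
    convert this using 3
    · push_cast; ring_nf
    · norm_num
  refine ⟨c3, hn, ?_⟩
  have hne : Ideal.span {2, A ^ 2 - A + 1} ≠ ⊤ := by
    intro h; rw [← Ideal.absNorm_eq_one_iff, hn] at h; norm_num at h
  obtain ⟨Q, hQ, hle⟩ := Ideal.exists_le_maximal _ hne
  have he : A ^ 2 - A + 1 ∈ Q := hle (Ideal.subset_span (by simp))
  have hQd : Ideal.absNorm Q ∣ 4 := hn ▸ Ideal.absNorm_dvd_absNorm_of_le hle
  have hQ1 : Ideal.absNorm Q ≠ 1 := by
    rw [Ne, Ideal.absNorm_eq_one_iff]; exact hQ.ne_top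
  have hQ2 : Ideal.absNorm Q ≠ 2 := by
    intro h2
    have := prime_quot A hA3 Q 2 h2 1 (by decide)
    apply hQ.ne_top
    rw [Ideal.eq_top_iff_one]
    have h4 := Q.sub_mem he (Q.mul_mem_left A this)
    convert h4 using 1
    push_cast; ring_nf
  have hQ4 : Ideal.absNorm Q = 4 := by
    have := Nat.le_of_dvd (by norm_num) hQd
    interval_cases hh : Ideal.absNorm Q <;> simp_all
  obtain ⟨R, hR⟩ := Ideal.dvd_iff_le.2 hle
  have hR1 : Ideal.absNorm R = 1 := by
    have := congrArg Ideal.absNorm hR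
    rw [map_mul, hn, hQ4] at this
    omega
  rw [Ideal.absNorm_eq_one_iff] at hR1
  rw [hR1, Ideal.mul_top] at hR
  rw [hR]; exact hQ

lemma prime_mem_two (pb : PowerBasis ℚ K) (hm : minpoly ℚ pb.gen = X ^ 3 - C 7)
    (A : 𝓞 K) (hA : (A : K) = pb.gen) (hA3 : A ^ 3 = 7) (Q : Ideal (𝓞 K)) [hQ : Q.IsPrime]
    (h2 : (2 : 𝓞 K) ∈ Q) : ∃ g, Q ^ 3 = Ideal.span {g} := by
  have h8 : (A + 1) * (A ^ 2 - A + 1) = 8 := by linear_combination hA3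
  have h8' : (A + 1) * (A ^ 2 - A + 1) ∈ Q := by
    rw [h8]; convert Q.mul_mem_left 4 h2 using 1; norm_num
  rcases hQ.mem_or_mem h8' with h | h
  · have c3 : (Ideal.span {2, A + 1}) ^ 3 = Ideal.span {A + 1} := by
      refine span_pair_cube _ _ _ (A ^ 2 - A + 1) 4 (2*(A+1)) ((A+1)^2)
        (6 - (A ^ 2 - A + 1)) (-2) 0 ((A-2)^2)
        (by linear_combination -hA3) (by ring) (by ring) (by ring) ?_
      linear_combination (6 - (A ^ 2 - A + 1)) * hA3
    have hn : Ideal.absNorm (Ideal.span {2, A + 1}) = 2 := by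
      apply nat_cube_inj
      rw [← map_pow, c3]
      have := absNorm_form pb hm A hA 1 1 0
      convert this using 3
      · push_cast; ring_nf
      · norm_num
    have hp : (Ideal.span {2, A + 1}).IsPrime :=
      Ideal.isPrime_of_irreducible_absNorm (by rw [hn]; exact Nat.prime_two)
    have hmx : (Ideal.span {2, A + 1}).IsMaximal := hp.isMaximal (by
      intro h; rw [h] at hn; simp at hn)
    have : Ideal.span {2, A + 1} = Q := hmx.eq_of_le hQ.ne_top (by
      rw [Ideal.span_le]; rintro x (rfl | rfl) <;> assumption)
    exact ⟨_, this ▸ c3⟩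
  · obtain ⟨c3, -, hmx⟩ := P4_facts pb hm A hA hA3
    have : Ideal.span {2, A ^ 2 - A + 1} = Q := hmx.eq_of_le hQ.ne_top (by
      rw [Ideal.span_le]; rintro x (rfl | rfl) <;> assumption)
    exact ⟨_, this ▸ c3⟩

lemma prime_mem_three (pb : PowerBasis ℚ K) (hm : minpoly ℚ pb.gen = X ^ 3 - C 7)
    (A : 𝓞 K) (hA : (A : K) = pb.gen) (hA3 : A ^ 3 = 7) (Q : Ideal (𝓞 K)) [hQ : Q.IsPrime]
    (h2 : (3 : 𝓞 K) ∈ Q) : ∃ g, Q ^ 3 = Ideal.span {g} := by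
  have h8 : (A - 1) ^ 3 = 3 * (2 - (A-1) - (A-1)^2) := by linear_combination hA3
  have h8' : (A - 1) ^ 3 ∈ Q := by
    rw [h8]; exact Q.mul_mem_right _ h2
  have h := hQ.mem_of_pow_mem _ h8'
  have c3 : (Ideal.span {3, A - 1}) ^ 3 = Ideal.span {3} := by
    refine span_pair_cube _ _ _ 9 (3*(A-1)) ((A-1)^2) (2 - (A-1) - (A-1)^2)
        1 0 (-2*(3+(A-1))) (-2*(2+(A-1)))
        (by norm_num) (by ring) (by ring) h8 ?_
    linear_combination (2*(2+(A-1))) * hA3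
  have hn : Ideal.absNorm (Ideal.span {3, A - 1}) = 3 := by
    apply nat_cube_inj
    rw [← map_pow, c3]
    have := absNorm_form pb hm A hA 3 0 0
    convert this using 3
    · push_cast; ring_nf
    · norm_num
  have hp : (Ideal.span {3, A - 1}).IsPrime :=
    Ideal.isPrime_of_irreducible_absNorm (by rw [hn]; exact Nat.prime_three)
  have hmx : (Ideal.span {3, A - 1}).IsMaximal := hp.isMaximal (by
      intro h; rw [h] at hn; simp at hn)
  have : Ideal.span {3, A - 1} = Q := hmx.eq_of_le hQ.ne_top (by
      rw [Ideal.span_le]; rintro x (rfl | rfl) <;> assumption)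
  exact ⟨_, this ▸ c3⟩

lemma prime_mem_five (pb : PowerBasis ℚ K) (hm : minpoly ℚ pb.gen = X ^ 3 - C 7)
    (A : 𝓞 K) (hA : (A : K) = pb.gen) (hA3 : A ^ 3 = 7) (Q : Ideal (𝓞 K)) [hQ : Q.IsPrime]
    (h2 : (5 : 𝓞 K) ∈ Q) (hle : Ideal.absNorm Q ≤ 10) : ∃ g, Q ^ 3 = Ideal.span {g} := by
  have h125 : Ideal.absNorm Q ∣ 5 ^ 3 := by
    have h1 := Ideal.absNorm_dvd_absNorm_of_le ((Ideal.span_singleton_le_iff_mem _).2 h2)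
    have := absNorm_form pb hm A hA 5 0 0
    convert h1 using 1
    convert this.symm using 3
    push_cast; ring_nf
  have hQ1 : Ideal.absNorm Q ≠ 1 := by
    rw [Ne, Ideal.absNorm_eq_one_iff]; exact hQ.ne_top
  have hQ5 : Ideal.absNorm Q = 5 := by
    interval_cases hh : Ideal.absNorm Q <;> simp_all <;> omega
  have h := prime_quot A hA3 Q 5 (hp := ⟨by norm_num⟩) hQ5 3 (by decide)
  have c3 : (Ideal.span {5, A - (3 : ℕ)}) ^ 3 = Ideal.span {8 - 10 * A + 3 * A ^ 2} := by
    push_cast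
    refine span_pair_cube _ _ _ (-(274+143*A+76*A^2)) (58+31*A+17*A^2) (-11-7*A-4*A^2)
        (1+2*A+A^2) (21 * (8 - 10 * A + 3 * A ^ 2)) 0 0 (-41 * (A^2-A+1)^2) ?_ ?_ ?_ ?_ ?_
    · linear_combination (-331+228*A) * hA3
    · linear_combination (77-51*A) * hA3
    · linear_combination (-19+12*A) * hA3
    · linear_combination (5-3*A) * hA3
    · linear_combination (41 * (A^4 - 11*A^3+48*A^2-93*A+ 73) + 164 - 410 * A) * hA3
  have hn : Ideal.absNorm (Ideal.span {5, A - (3 : ℕ)}) = 5 := by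
    apply nat_cube_inj
    rw [← map_pow, c3]
    have := absNorm_form pb hm A hA 8 (-10) 3
    convert this using 3
    · push_cast; ring_nf
    · norm_num
  have hp : (Ideal.span {5, A - (3 : ℕ)}).IsPrime :=
    Ideal.isPrime_of_irreducible_absNorm (by rw [hn]; exact Nat.prime_five)
  have hmx : (Ideal.span {5, A - (3 : ℕ)}).IsMaximal := hp.isMaximal (by
      intro h; rw [h] at hn; simp at hn)
  have : Ideal.span {5, A - (3 : ℕ)} = Q := hmx.eq_of_le hQ.ne_top (by
      rw [Ideal.span_le]; rintro x (rfl | rfl) <;> assumption)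
  exact ⟨_, this ▸ c3⟩

lemma span_A_max (pb : PowerBasis ℚ K) (hm : minpoly ℚ pb.gen = X ^ 3 - C 7)
    (A : 𝓞 K) (hA : (A : K) = pb.gen) : (Ideal.span {A}).IsMaximal := by
  have hn : Ideal.absNorm (Ideal.span {A}) = 7 := by
    have := absNorm_form pb hm A hA 0 1 0
    convert this using 3
    · push_cast; ring_nf
    · norm_num
  have hp : (Ideal.span {A}).IsPrime :=
    Ideal.isPrime_of_irreducible_absNorm (by rw [hn]; exact Nat.prime_seven)
  exact hp.isMaximal (by intro h; rw [h] at hn; simp at hn)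

lemma prime_mem_seven (pb : PowerBasis ℚ K) (hm : minpoly ℚ pb.gen = X ^ 3 - C 7)
    (A : 𝓞 K) (hA : (A : K) = pb.gen) (hA3 : A ^ 3 = 7) (Q : Ideal (𝓞 K)) [hQ : Q.IsPrime]
    (h2 : (7 : 𝓞 K) ∈ Q) : ∃ g, Q ^ 3 = Ideal.span {g} := by
  have h : A ∈ Q := hQ.mem_of_pow_mem 3 (by rw [hA3]; exact h2)
  have : Ideal.span {A} = Q := (span_A_max pb hm A hA).eq_of_le hQ.ne_top (by
      rw [Ideal.span_le]; rintro x rfl; assumption)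
  exact ⟨A ^ 3, by rw [← this, Ideal.span_singleton_pow]⟩

lemma prime_cube (pb : PowerBasis ℚ K) (hm : minpoly ℚ pb.gen = X ^ 3 - C 7)
    (A : 𝓞 K) (hA : (A : K) = pb.gen) (hA3 : A ^ 3 = 7) (Q : Ideal (𝓞 K)) [hQ : Q.IsPrime]
    (hle : Ideal.absNorm Q ≤ 10) (n : ℕ) (h0 : n ≠ 0) (hn : n ≤ 10) (h2 : (n : 𝓞 K) ∈ Q) :
    ∃ g, Q ^ 3 = Ideal.span {g} := by
  induction n using Nat.strong_induction_on with
  | _ n ih =>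
    by_cases h1 : n = 1
    · exact absurd (Ideal.eq_top_of_isUnit_mem Q h2 (by simp [h1])) hQ.ne_top
    obtain ⟨p, hp, k, rfl⟩ := Nat.exists_prime_and_dvd h1
    push_cast at h2
    have hk : k ≠ 0 := by rintro rfl; simp at h0
    have hp2 := hp.two_le
    rcases hQ.mem_or_mem h2 with h | h
    · have : p ≤ 10 := le_trans (Nat.le_mul_of_pos_right _ (Nat.pos_of_ne_zero hk)) hn
      interval_cases p
      · exact prime_mem_two pb hm A hA hA3 Q (by simpa using h)
      · exact prime_mem_three pb hm A hA hA3 Q (by simpa using h)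
      · norm_num at hp
      · exact prime_mem_five pb hm A hA hA3 Q (by simpa using h) hle
      · norm_num at hp
      · exact prime_mem_seven pb hm A hA hA3 Q (by simpa using h)
      all_goals norm_num at hp
    · exact ih k (by nlinarith [Nat.pos_of_ne_zero hk]) hk (by nlinarith) h

lemma class_cube (pb : PowerBasis ℚ K) (hm : minpoly ℚ pb.gen = X ^ 3 - C 7)
    (A : 𝓞 K) (hA : (A : K) = pb.gen) (hA3 : A ^ 3 = 7) (J : Ideal (𝓞 K)) (hJ : J ≠ 0)
    (hle : Ideal.absNorm J ≤ 10) : ∃ g, J ^ 3 = Ideal.span {g} := by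
  have key : ∀ Q : Ideal (𝓞 K), Prime Q → Q ∣ J → ∃ g, Q ^ 3 = Ideal.span {g} := by
    intro Q hQ hd
    have hQp := Ideal.isPrime_of_prime hQ
    have hJ0 : Ideal.absNorm J ≠ 0 := by
      rw [Ne, Ideal.absNorm_eq_zero_iff]; exact hJ
    have h1 : Ideal.absNorm Q ∣ Ideal.absNorm J := Ideal.absNorm_dvd_absNorm_of_le (Ideal.le_of_dvd hd)
    exact prime_cube pb hm A hA hA3 Q ((Nat.le_of_dvd (Nat.pos_of_ne_zero hJ0) h1).trans hle)
      _ hJ0 hle ((Ideal.le_of_dvd hd) (Ideal.absNorm_mem J))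
  clear hle
  induction J using UniqueFactorizationMonoid.induction_on_prime with
  | h₁ => exact absurd rfl hJ
  | h₂ I hI => 
    rw [Ideal.isUnit_iff] at hI
    exact ⟨1, by simp [hI]⟩
  | h₃ I Q hI0 hQ ih =>
    obtain ⟨g, hg⟩ := ih hI0 (fun R hR hd => key R hR (hd.mul_left Q))
    obtain ⟨g', hg'⟩ := key Q hQ (Dvd.intro _ rfl)
    exact ⟨g' * g, by rw [mul_pow, hg, hg', Ideal.span_singleton_mul_span_singleton]⟩

/-- an ideal whose square is principal is principal -/
lemma principal_of_sq (pb : PowerBasis ℚ K) (hm : minpoly ℚ pb.gen = X ^ 3 - C 7)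
    (A : 𝓞 K) (hA : (A : K) = pb.gen) (hA3 : A ^ 3 = 7) (I : Ideal (𝓞 K)) (hI : I ≠ 0)
    (b : 𝓞 K) (hb : I ^ 2 = Ideal.span {b}) : ∃ g, I = Ideal.span {g} := by
  have hI' : I ∈ nonZeroDivisors (Ideal (𝓞 K)) := mem_nonZeroDivisors_of_ne_zero hI
  obtain ⟨J, hJ, hle⟩ := ideal_rep pb hm (ClassGroup.mk0 ⟨I, hI'⟩)
  obtain ⟨g, hg⟩ := class_cube pb hm A hA hA3 J (nonZeroDivisors.ne_zero J.2) hle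
  have h3 : (ClassGroup.mk0 J) ^ 3 = 1 := by
    rw [← map_pow]
    have : (J ^ 3) = ⟨(J : Ideal (𝓞 K)) ^ 3, pow_mem J.2 3⟩ := rfl
    rw [this, ClassGroup.mk0_eq_one_iff]
    rw [hg]; exact ⟨⟨g, rfl⟩⟩
  have h2 : (ClassGroup.mk0 J) ^ 2 = 1 := by
    rw [hJ, ← map_pow]
    have : ((⟨I, hI'⟩ : nonZeroDivisors (Ideal (𝓞 K))) ^ 2) = ⟨I ^ 2, pow_mem hI' 2⟩ := rfl
    rw [this, ClassGroup.mk0_eq_one_iff, hb]; exact ⟨⟨b, rfl⟩⟩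
  have h1 : ClassGroup.mk0 J = 1 := by
    rw [pow_succ, h2, one_mul] at h3; exact h3
  rw [hJ, ClassGroup.mk0_eq_one_iff] at h1
  obtain ⟨g, hg⟩ := h1
  exact ⟨g, hg⟩
end NF3
end C4
end

section
open NumberField Polynomial Module IsDedekindDomain

namespace C4

lemma ideal_even {R : Type*} [CommRing R] [IsDedekindDomain R] (I P0 : Ideal R) (hI : I ≠ 0)
    (h : ∀ v : HeightOneSpectrum R, v.asIdeal ≠ P0 →
      Even ((Associates.mk v.asIdeal).count (Associates.mk I).factors)) :
    ∃ J : Ideal R, I = J ^ 2 ∨ I = J ^ 2 * P0 := by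
  classical
  set m := UniqueFactorizationMonoid.normalizedFactors I with hmdef
  have hev : ∀ Q ∈ m.toFinset, Q ≠ P0 → m.count Q % 2 = 0 := by
    intro Q hQ hne
    rw [Multiset.mem_toFinset] at hQ
    have hpr := UniqueFactorizationMonoid.prime_of_normalized_factor Q hQ
    have := h ⟨Q, Ideal.isPrime_of_prime hpr, hpr.ne_zero⟩ hne
    rw [Ideal.count_associates_factors_eq hI (Ideal.isPrime_of_prime hpr) hpr.ne_zero] at this
    exact Nat.even_iff.1 this
  have hprod : I = ∏ Q ∈ m.toFinset, Q ^ m.count Q := by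
    rw [← Finset.prod_multiset_count]
    exact (associated_iff_eq.1 (UniqueFactorizationMonoid.prod_normalizedFactors hI)).symm
  have h2 : I = (∏ Q ∈ m.toFinset, Q ^ (m.count Q / 2)) ^ 2 * P0 ^ (m.count P0 % 2) := by
    conv_lhs => rw [hprod]
    rw [← Finset.prod_pow, ← Finset.prod_eq_single (s := m.toFinset)
      (f := fun Q => Q ^ (m.count Q % 2)) P0, ← Finset.prod_mul_distrib]
    · apply Finset.prod_congr rfl
      intro Q _
      rw [← pow_mul, ← pow_add]
      congr 1; omega
    · intro Q hQ hne
      simp only [hev Q hQ hne, pow_zero]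
    · intro hne
      rw [Multiset.mem_toFinset, ← Multiset.count_eq_zero] at hne
      simp [hne]
  refine ⟨∏ Q ∈ m.toFinset, Q ^ (m.count Q / 2), ?_⟩
  rcases Nat.mod_two_eq_zero_or_one (m.count P0) with h0 | h0
  · left; rw [h0, pow_zero, mul_one] at h2; exact h2
  · right; rw [h0, pow_one] at h2; exact h2

section NF4
variable {K : Type*} [Field K] [NumberField K]

lemma units_mod_sq (pb : PowerBasis ℚ K) (hm : minpoly ℚ pb.gen = X ^ 3 - C 7)
    (E : (𝓞 K)ˣ) (hE : ∀ v : (𝓞 K)ˣ, E ≠ v ^ 2 ∧ E ≠ - v ^ 2) (u : (𝓞 K)ˣ) :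
    ∃ v : (𝓞 K)ˣ, u = v ^ 2 ∨ u = - v ^ 2 ∨ u = E * v ^ 2 ∨ u = -(E * v ^ 2) := by
  have hr := rank1 pb hm
  have key : ∃ f : (𝓞 K)ˣ, ∀ u : (𝓞 K)ˣ, ∃ n : ℤ, u = f ^ n ∨ u = - f ^ n := by
    have h1 : (1 : ℕ) = Units.rank K := hr.symm
    refine ⟨Units.fundSystem K ⟨0, by omega⟩, fun u => ?_⟩
    obtain ⟨⟨ζ, e⟩, h, -⟩ := Units.exist_unique_eq_mul_prod K u
    refine ⟨e ⟨0, by omega⟩, ?_⟩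
    have hp : ∏ i, (Units.fundSystem K i) ^ (e i) = 
        (Units.fundSystem K ⟨0, by omega⟩) ^ (e ⟨0, by omega⟩) := by
      apply Fintype.prod_eq_single
      intro i hi
      exact absurd (Fin.ext (by have := i.2; simp; omega)) hi
    simp only [hp] at h
    rcases Units.torsion_eq_one_or_neg_one_of_odd_finrank (K := K)
      (by rw [finrank3 pb hm]; decide) ζ with hz | hz
    · left; rw [h, hz, one_mul]
    · right; rw [h, hz, neg_one_mul]
  obtain ⟨f, hf⟩ := key
  have hodd : ∃ g : (𝓞 K)ˣ, f = E * g ^ 2 ∨ f = -(E * g ^ 2) := by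
    obtain ⟨n, hn⟩ := hf E
    obtain ⟨k, hk | hk⟩ := Int.even_or_odd' n
    · exfalso
      have : f ^ n = (f ^ k) ^ 2 := by rw [hk, mul_comm, zpow_mul]; norm_cast
      rw [this] at hn
      rcases hn with hn | hn
      · exact (hE _).1 hn
      · exact (hE _).2 hn
    · have : f ^ n = f * (f ^ k) ^ 2 := by
        rw [hk, zpow_add, mul_comm 2 k, zpow_mul, mul_comm, zpow_one]; norm_cast
      rw [this] at hn
      refine ⟨(f ^ k)⁻¹, ?_⟩
      rcases hn with hn | hn
      · left; rw [hn]; group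
      · right; rw [hn]; rw [neg_mul, neg_neg]; group
  obtain ⟨g, hg⟩ := hodd
  obtain ⟨n, hn⟩ := hf u
  obtain ⟨k, hk | hk⟩ := Int.even_or_odd' n
  · have : f ^ n = (f ^ k) ^ 2 := by rw [hk, mul_comm, zpow_mul]; norm_cast
    rw [this] at hn
    refine ⟨f ^ k, ?_⟩
    tauto
  · have : f ^ n = f * (f ^ k) ^ 2 := by
      rw [hk, zpow_add, mul_comm 2 k, zpow_mul, mul_comm, zpow_one]; norm_cast
    rw [this] at hn
    refine ⟨g * f ^ k, ?_⟩
    rw [mul_pow, ← mul_assoc]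
    generalize f ^ k = w at hn ⊢
    rcases hg with hg | hg <;> rw [hg] at hn
    · tauto
    · rw [neg_mul, neg_neg] at hn; tauto

/-- The key lemma. -/
lemma key_int (pb : PowerBasis ℚ K) (hm : minpoly ℚ pb.gen = X ^ 3 - C 7)
    (A : 𝓞 K) (hA : (A : K) = pb.gen) (hA3 : A ^ 3 = 7)
    (hE : ∀ v : 𝓞 K, 2 - A ≠ v ^ 2 ∧ 2 - A ≠ - v ^ 2) (c : 𝓞 K) (hc : c ≠ 0)
    (hv : ∀ v : HeightOneSpectrum (𝓞 K), A ∉ v.asIdeal → IsSquare (v.valuation K (c : K))) :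
    ∃ s : 𝓞 K, c = s ^ 2 ∨ c = - s ^ 2 ∨ c = (2 - A) * s ^ 2 ∨ c = -((2 - A) * s ^ 2) ∨
      c = A * s ^ 2 ∨ c = - (A * s ^ 2) ∨ c = A * ((2 - A) * s ^ 2) ∨ c = -(A * ((2 - A) * s ^ 2)) := by
  let E : (𝓞 K)ˣ := ⟨2 - A, 4 + 2 * A + A ^ 2, by linear_combination -hA3, by linear_combination -hA3⟩
  have hE' : ∀ v : (𝓞 K)ˣ, E ≠ v ^ 2 ∧ E ≠ - v ^ 2 := by
    intro v
    refine ⟨fun h => (hE v).1 ?_, fun h => (hE v).2 ?_⟩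
    · simpa [E] using congrArg Units.val h
    · simpa [E] using congrArg Units.val h
  have hspan : Ideal.span {c} ≠ 0 := by
    rw [Ne, Ideal.zero_eq_bot, Ideal.span_singleton_eq_bot]; exact hc
  have hA0 : A ≠ 0 := by rintro rfl; norm_num at hA3
  have sqcase : ∀ (d : 𝓞 K) (J : Ideal (𝓞 K)), d ≠ 0 → Ideal.span {d} = J ^ 2 → 
    ∃ s : 𝓞 K, d = s ^ 2 ∨ d = - s ^ 2 ∨ d = (2 - A) * s ^ 2 ∨ d = -((2 - A) * s ^ 2) := by
    intro d J hd hJ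
    have hJ0 : J ≠ 0 := by
      rintro rfl
      rw [zero_pow two_ne_zero, Ideal.zero_eq_bot, Ideal.span_singleton_eq_bot] at hJ
      exact hd hJ
    obtain ⟨g, hg⟩ := principal_of_sq pb hm A hA hA3 J hJ0 d hJ.symm
    rw [hg, Ideal.span_singleton_pow, Ideal.span_singleton_eq_span_singleton] at hJ
    obtain ⟨u, hu⟩ := hJ.symm
    obtain ⟨v, hv⟩ := units_mod_sq pb hm E hE' u
    refine ⟨g * v, ?_⟩
    rw [← hu]
    rcases hv with rfl | rfl | rfl | rfl
    · left; push_cast; ring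
    · right; left; push_cast; ring
    · right; right; left; push_cast; simp only [E]; ring
    · right; right; right; push_cast; simp only [E]; ring
  have hev : ∀ v : HeightOneSpectrum (𝓞 K), v.asIdeal ≠ Ideal.span {A} →
      Even ((Associates.mk v.asIdeal).count (Associates.mk (Ideal.span {c})).factors) := by
    intro v hne
    have hnot : A ∉ v.asIdeal := by
      intro h
      exact hne ((span_A_max pb hm A hA).eq_of_le v.isPrime.ne_top
        (by rw [Ideal.span_singleton_le_iff_mem]; exact h)).symm
    obtain ⟨r, hr⟩ := hv v hnot
    rw [HeightOneSpectrum.valuation_of_algebraMap, HeightOneSpectrum.intValuation_if_neg _ hc] at hr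
    have hr0 : r ≠ 0 := by
      rintro rfl; simp at hr
    have h2 := congrArg WithZero.log hr
    rw [WithZero.log_exp, WithZero.log_mul hr0 hr0] at h2
    have h3 : Even ((((Associates.mk v.asIdeal).count (Associates.mk (Ideal.span {c})).factors : ℕ)) : ℤ) :=
      ⟨-WithZero.log r, by omega⟩
    exact_mod_cast h3
  obtain ⟨J, hJ | hJ⟩ := ideal_even _ _ hspan hev
  · obtain ⟨s, hs⟩ := sqcase c J hc hJ
    exact ⟨s, by tauto⟩
  · have hmem : A ∣ c := by
      rw [← Ideal.mem_span_singleton]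
      have : Ideal.span {c} ≤ Ideal.span {A} := by rw [hJ]; exact Ideal.mul_le_inf.trans inf_le_right
      exact this (Ideal.mem_span_singleton_self c)
    obtain ⟨d, rfl⟩ := hmem
    have hd : d ≠ 0 := by rintro rfl; simp at hc
    rw [← Ideal.span_singleton_mul_span_singleton, mul_comm] at hJ
    have hJ' := mul_right_cancel₀ (by rw [Ne, Ideal.zero_eq_bot, Ideal.span_singleton_eq_bot]; exact hA0) hJ
    obtain ⟨s, hs⟩ := sqcase d J hd hJ'
    refine ⟨s, ?_⟩
    rcases hs with rfl | rfl | rfl | rfl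
    · simp
    · simp
    · simp
    · simp
end NF4
end C4
end

section
open NumberField Polynomial Module IsDedekindDomain

namespace C4

lemma par0 {K Γ : Type*} [Field K] [LinearOrderedCommGroupWithZero Γ] (w : Valuation K Γ)
    (α ξ y : K) (hα : w α = 1) (hξ : ξ ≠ 0)
    (h : y * (y + α * ξ) = ξ * (ξ ^ 2 - α ^ 2 * ξ + α)) : IsSquare (w ξ) := by
  have ha0 : w ξ ≠ 0 := (Valuation.ne_zero_iff w).2 hξ
  have hapos : 0 < w ξ := zero_lt_iff.2 ha0
  have hw := congrArg w h
  rw [map_mul, map_mul] at hw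
  have hαξ : w (α * ξ) = w ξ := by rw [map_mul, hα, one_mul]
  rcases lt_trichotomy (w ξ) 1 with ha | ha | ha
  · have h1 : w (ξ ^ 2 - α ^ 2 * ξ) < w α := by
      rw [hα]
      have : ξ ^ 2 - α ^ 2 * ξ = ξ * (ξ - α ^ 2) := by ring
      rw [this, map_mul]
      have h2 : w (ξ - α ^ 2) ≤ 1 := by
        apply Valuation.map_sub_le w ha.le
        rw [map_pow, hα, one_pow]
      calc w ξ * w (ξ - α ^ 2) ≤ w ξ * 1 := by gcongr
        _ < 1 := by rwa [mul_one]
    rw [Valuation.map_add_eq_of_lt_right w h1, hα, mul_one] at hw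
    by_cases hb : w (α * ξ) < w y
    · rw [Valuation.map_add_eq_of_lt_left w hb] at hw
      exact ⟨_, hw.symm⟩
    · exfalso
      rw [not_lt, hαξ] at hb
      have h3 : w (y + α * ξ) ≤ w ξ := Valuation.map_add_le w hb hαξ.le
      have : w y * w (y + α * ξ) ≤ w ξ * w ξ := mul_le_mul' hb h3
      rw [hw] at this
      have h4 : w ξ * w ξ < w ξ * 1 := by gcongr
      rw [mul_one] at h4
      exact absurd this (not_le.2 h4)
  · rw [ha]; exact ⟨1, by simp⟩
  · have h0 : w ξ < w ξ * w ξ := by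
      calc w ξ = w ξ * 1 := (mul_one _).symm
        _ < w ξ * w ξ := by gcongr
    have h1 : w (ξ ^ 2 - α ^ 2 * ξ) = w (ξ ^ 2) := by
      apply Valuation.map_sub_eq_of_lt_left
      rw [map_mul, map_pow, map_pow, hα, one_pow, one_mul, sq]; exact h0
    have h2 : w (ξ ^ 2 - α ^ 2 * ξ + α) = w (ξ ^ 2) := by
      rw [Valuation.map_add_eq_of_lt_left, h1]
      rw [h1, hα, map_pow, sq]; exact ha.trans h0
    rw [h2, map_pow] at hw
    by_cases hb : w (α * ξ) < w y
    · rw [Valuation.map_add_eq_of_lt_left w hb] at hw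
      refine ⟨w y / w ξ, ?_⟩
      rw [div_mul_div_comm, hw, eq_div_iff (mul_ne_zero ha0 ha0), sq]
    · exfalso
      rw [not_lt, hαξ] at hb
      have h3 : w (y + α * ξ) ≤ w ξ := Valuation.map_add_le w hb hαξ.le
      have : w y * w (y + α * ξ) ≤ w ξ * w ξ := mul_le_mul' hb h3
      rw [hw] at this
      have h4 : w ξ * w ξ < w ξ * w ξ ^ 2 := by
        rw [sq]; gcongr
      exact absurd this (not_le.2 h4)

lemma par1 {K Γ : Type*} [Field K] [LinearOrderedCommGroupWithZero Γ] (w : Valuation K Γ)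
    (α X t : K) (hα : w α = 1) (h6 : w 6 ≤ 1) (hX : X ≠ 0)
    (h : X * t ^ 2 = X ^ 2 + 6 * α ^ 2 * X - α) : IsSquare (w X) := by
  have ha0 : w X ≠ 0 := (Valuation.ne_zero_iff w).2 hX
  have hapos : 0 < w X := zero_lt_iff.2 ha0
  have hw := congrArg w h
  rw [map_mul, map_pow] at hw
  have h6a : w (6 * α ^ 2) ≤ 1 := by rw [map_mul, map_pow, hα, one_pow, mul_one]; exact h6
  have h6x : w (6 * α ^ 2 * X) ≤ w X := by
    rw [map_mul]
    calc w (6 * α ^ 2) * w X ≤ 1 * w X := by gcongr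
      _ = w X := one_mul _
  rcases lt_trichotomy (w X) 1 with ha | ha | ha
  · have h1 : w (X ^ 2 + 6 * α ^ 2 * X) < w α := by
      rw [hα]
      refine Valuation.map_add_lt w ?_ (h6x.trans_lt ha)
      rw [map_pow]; exact pow_lt_one₀ hapos.le ha two_ne_zero
    rw [Valuation.map_sub_eq_of_lt_right w h1, hα] at hw
    refine ⟨(w t)⁻¹, ?_⟩
    rw [← mul_inv, ← sq]
    exact (eq_inv_of_mul_eq_one_left hw)
  · rw [ha]; exact ⟨1, by simp⟩
  · have h0 : w X < w X * w X := by
      calc w X = w X * 1 := (mul_one _).symm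
        _ < w X * w X := by gcongr
    have h1 : w (X ^ 2 + 6 * α ^ 2 * X) = w (X ^ 2) := by
      apply Valuation.map_add_eq_of_lt_left
      rw [map_pow, sq (w X)]; exact h6x.trans_lt h0
    have h2 : w (X ^ 2 + 6 * α ^ 2 * X - α) = w (X ^ 2) := by
      rw [Valuation.map_sub_eq_of_lt_left, h1]
      rw [h1, hα, map_pow, sq]; exact ha.trans h0
    rw [h2, map_pow, sq (w X)] at hw
    exact ⟨w t, by rw [← sq]; exact (mul_left_cancel₀ ha0 hw).symm⟩

section NF5
variable {K : Type*} [Field K] [NumberField K]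

lemma key_field (pb : PowerBasis ℚ K) (hm : minpoly ℚ pb.gen = X ^ 3 - C 7)
    (φ : K →+* ℝ) (hns : ∀ t : K, 2 - pb.gen ≠ t ^ 2) (γ : K) (hγ : 0 < φ γ)
    (hv : ∀ (Γ : Type) (_ : LinearOrderedCommGroupWithZero Γ) (w : Valuation K Γ),
      w pb.gen = 1 → w 6 ≤ 1 → IsSquare (w γ)) :
    ∃ s : K, s ≠ 0 ∧ (γ = s ^ 2 ∨ γ = pb.gen * s ^ 2 ∨ γ = (2 - pb.gen) * s ^ 2 ∨
      γ = pb.gen * (2 - pb.gen) * s ^ 2) := by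
  have h3 := gen3 pb hm
  have hint : IsIntegral ℤ pb.gen := by
    refine ⟨X ^ 3 - C 7, monic_X_pow_sub_C _ (by norm_num), ?_⟩
    simp [h3]
  have hinj : Function.Injective (algebraMap (𝓞 K) K) := RingOfIntegers.coe_injective
  obtain ⟨A, hA⟩ : ∃ A : 𝓞 K, algebraMap (𝓞 K) K A = pb.gen := ⟨⟨pb.gen, hint⟩, rfl⟩
  have hA3 : A ^ 3 = 7 := by
    apply hinj; rw [map_pow, hA, h3, map_ofNat]
  have hφ3 : (φ pb.gen) ^ 3 = 7 := by rw [← map_pow, h3, map_ofNat]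
  have hφα : 0 < φ pb.gen := by
    by_contra hc
    have := mul_nonneg (sq_nonneg (φ pb.gen)) (neg_nonneg.2 (not_lt.1 hc))
    nlinarith
  have hφε : 0 < φ (2 - pb.gen) := by
    rw [map_sub, map_ofNat]
    by_contra hc
    have h2 : 2 ≤ φ pb.gen := by linarith
    have : (2:ℝ) ^ 3 ≤ φ pb.gen ^ 3 := by gcongr
    rw [hφ3] at this; norm_num at this
  have e1 : algebraMap (𝓞 K) K (2 - A) = 2 - pb.gen := by rw [map_sub, hA, map_ofNat]
  have e2 : algebraMap (𝓞 K) K (A * (2 - A)) = pb.gen * (2 - pb.gen) := by rw [map_mul, hA, e1]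
  have hE : ∀ v : 𝓞 K, 2 - A ≠ v ^ 2 ∧ 2 - A ≠ - v ^ 2 := by
    intro v
    constructor
    · intro h
      apply hns (algebraMap (𝓞 K) K v)
      rw [← e1, h, map_pow]
    · intro h
      rw [← e1, h, map_neg, map_neg, map_pow, map_pow] at hφε
      nlinarith [sq_nonneg (φ (algebraMap (𝓞 K) K v))]
  have hγ0 : γ ≠ 0 := by rintro rfl; simp at hγ
  obtain ⟨a, b, hb, hab⟩ := IsFractionRing.div_surjective (A := 𝓞 K) γ
  have hb0 : algebraMap (𝓞 K) K b ≠ 0 := by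
    intro h0
    exact nonZeroDivisors.ne_zero hb (hinj (by rw [h0, map_zero]))
  have hab' : algebraMap (𝓞 K) K (a * b) = γ * (algebraMap (𝓞 K) K b) ^ 2 := by
    rw [← hab, map_mul]
    field_simp
  have hc : a * b ≠ 0 := by
    intro h0
    rw [h0, map_zero] at hab'
    exact (mul_ne_zero hγ0 (pow_ne_zero 2 hb0)) hab'.symm
  obtain ⟨s, hs⟩ := key_int pb hm A hA hA3 hE (a * b) hc (by
    intro v hvA
    change IsSquare (v.valuation K (algebraMap (𝓞 K) K (a * b)))
    rw [hab', map_mul, map_pow]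
    have h1 : v.valuation K pb.gen = 1 := by
      rw [← hA]
      exact (v.valuation_eq_one_iff_notMem).2 hvA
    have h6 : v.valuation K 6 ≤ 1 := by
      have : v.valuation K (algebraMap (𝓞 K) K 6) ≤ 1 := v.valuation_le_one (K := K) (6 : 𝓞 K)
      rwa [map_ofNat] at this
    obtain ⟨r, hr⟩ := hv _ _ (v.valuation K) h1 h6
    exact ⟨r * v.valuation K (algebraMap (𝓞 K) K b), by rw [hr, sq, mul_mul_mul_comm]⟩)
  have hγe : ∀ c : 𝓞 K, a * b = c * s ^ 2 →
      γ = algebraMap (𝓞 K) K c * (algebraMap (𝓞 K) K s / algebraMap (𝓞 K) K b) ^ 2 := by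
    intro c hc
    rw [hc, map_mul, map_pow] at hab'
    field_simp
    exact hab'.symm
  have hs0 : algebraMap (𝓞 K) K s ≠ 0 := by
    intro h0
    have : s = 0 := hinj (by rw [h0, map_zero])
    subst this
    simp only [ne_eq, OfNat.ofNat_ne_zero, not_false_eq_true, zero_pow, mul_zero, neg_zero, or_self] at hs
    exact hc hs
  have hneg : ∀ c : 𝓞 K, 0 < φ (algebraMap (𝓞 K) K c) → a * b ≠ -(c * s ^ 2) := by
    intro c hc h
    have := hγe (-c) (by rw [h]; ring)
    rw [this, map_mul, map_pow, map_neg, map_neg] at hγ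
    nlinarith [sq_nonneg (φ (algebraMap (𝓞 K) K s / algebraMap (𝓞 K) K b))]
  refine ⟨algebraMap (𝓞 K) K s / algebraMap (𝓞 K) K b, div_ne_zero hs0 hb0, ?_⟩
  rcases hs with hs | hs | hs | hs | hs | hs | hs | hs
  · left; have := hγe 1 (by rw [hs]; ring); rwa [map_one, one_mul] at this
  · exact absurd (by rw [hs]; ring) (hneg 1 (by simp))
  · right; right; left; rw [← e1]; exact hγe _ hs
  · exact absurd hs (hneg _ (by rw [e1]; exact hφε))
  · right; left; rw [← hA]; exact hγe _ hs
  · exact absurd hs (hneg _ (by rw [hA]; exact hφα))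
  · right; right; right; rw [← e2]; exact hγe _ (by rw [hs]; ring)
  · exact absurd (by rw [hs]; ring) (hneg (A * (2 - A)) (by rw [e2, map_mul]; positivity))

/-- Classes of points on the curve. -/
lemma classA0 (pb : PowerBasis ℚ K) (hm : minpoly ℚ pb.gen = X ^ 3 - C 7)
    (φ : K →+* ℝ) (hns : ∀ t : K, 2 - pb.gen ≠ t ^ 2) (ξ η : K) (hξ : ξ ≠ 0)
    (h : η ^ 2 = ξ * (4 * ξ ^ 2 - 3 * pb.gen ^ 2 * ξ + 4 * pb.gen)) :
    ∃ s : K, s ≠ 0 ∧ (ξ = s ^ 2 ∨ ξ = pb.gen * s ^ 2 ∨ ξ = (2 - pb.gen) * s ^ 2 ∨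
      ξ = pb.gen * (2 - pb.gen) * s ^ 2) := by
  have h3 := gen3 pb hm
  have hφ3 : (φ pb.gen) ^ 3 = 7 := by rw [← map_pow, h3, map_ofNat]
  have hφα : 0 < φ pb.gen := by
    by_contra hc
    have := mul_nonneg (sq_nonneg (φ pb.gen)) (neg_nonneg.2 (not_lt.1 hc))
    nlinarith
  apply key_field pb hm φ hns
  · have hh := congrArg φ h
    simp only [map_mul, map_pow, map_add, map_sub, map_ofNat] at hh
    have hne : φ ξ ≠ 0 := by rwa [Ne, map_eq_zero]
    have hpos : 0 < 4 * φ ξ ^ 2 - 3 * φ pb.gen ^ 2 * φ ξ + 4 * φ pb.gen := by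
      have : 16 * (4 * φ ξ ^ 2 - 3 * φ pb.gen ^ 2 * φ ξ + 4 * φ pb.gen)
        = (8 * φ ξ - 3 * φ pb.gen ^ 2) ^ 2 + φ pb.gen := by
        linear_combination (-9 * φ pb.gen) * hφ3
      nlinarith [sq_nonneg (8 * φ ξ - 3 * φ pb.gen ^ 2)]
    by_contra hc
    have hlt : φ ξ < 0 := lt_of_le_of_ne (not_lt.1 hc) hne
    nlinarith [mul_neg_of_neg_of_pos hlt hpos, sq_nonneg (φ η)]
  · intro Γ _ w hw _
    refine par0 w pb.gen ξ ((η - pb.gen * ξ) / 2) hw hξ ?_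
    linear_combination h / 4

lemma classA1 (pb : PowerBasis ℚ K) (hm : minpoly ℚ pb.gen = X ^ 3 - C 7)
    (φ : K →+* ℝ) (hns : ∀ t : K, 2 - pb.gen ≠ t ^ 2) (X t : K) (hX : 0 < φ X)
    (h : X * t ^ 2 = X ^ 2 + 6 * pb.gen ^ 2 * X - pb.gen) :
    ∃ s : K, s ≠ 0 ∧ (X = s ^ 2 ∨ X = pb.gen * s ^ 2 ∨ X = (2 - pb.gen) * s ^ 2 ∨
      X = pb.gen * (2 - pb.gen) * s ^ 2) := by
  apply key_field pb hm φ hns X hX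
  intro Γ _ w hw h6
  exact par1 w pb.gen X t hw h6 (by rintro rfl; simp at hX) h
end NF5
end C4
end

section
set_option linter.unusedSectionVars false
namespace C4

@[simp, norm_cast] lemma coe_ofNat_R {K : Type*} [Field K] (R : Subring K) (n : ℕ) [n.AtLeastTwo] :
    ((ofNat(n) : R) : K) = ofNat(n) := rfl

/-- Local data at the prime of degree two above two. -/
structure Loc {K : Type*} [Field K] (R : Subring K) (A : R) {F : Type*} [Field F]
    (ρ : R →+* F) : Prop where
  cube : A ^ 3 = 7
  ker : ∀ a, ρ a = 0 → ∃ b, a = 2 * b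
  two : (2 : F) = 0
  unit : ∀ a, ρ a ≠ 0 → ∃ b, a * b = 1
  w : ρ A ^ 2 + ρ A + 1 = 0
  res : ∀ x : F, x = 0 ∨ x = 1 ∨ x = ρ A ∨ x = ρ A ^ 2
  frac : ∀ x : K, x ≠ 0 → ∃ u : R, ρ u ≠ 0 ∧
    (x = u ∨ ∃ m : ℕ, x = 2 ^ (m + 1) * u ∨ x * 2 ^ (m + 1) = u)

section
variable {K : Type*} [Field K] [CharZero K] {R : Subring K} {A : R} {F : Type*} [Field F]
    {ρ : R →+* F}

namespace Loc

lemma two_ne : (2 : R) ≠ 0 := by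
  intro h
  have := congrArg (fun x : R => (x : K)) h
  norm_num at this

lemma rho2 (L : Loc R A ρ) (a : R) : ρ (2 * a) = 0 := by
  rw [map_mul, map_ofNat, L.two, zero_mul]

lemma cong (L : Loc R A ρ) {a b : R} (h : ρ a = ρ b) : ∃ c, a = b + 2 * c := by
  obtain ⟨c, hc⟩ := L.ker (a - b) (by rw [map_sub, h, sub_self])
  exact ⟨c, by linear_combination hc⟩

lemma kap (L : Loc R A ρ) : ∃ κ, A ^ 2 = A - 1 + 8 * κ := by
  obtain ⟨b, hb⟩ := L.unit (A + 1) (by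
    intro h
    rw [map_add, map_one] at h
    have := L.w
    have h1 := L.two
    have : (1 : F) = 0 := by linear_combination this - ρ A * h
    exact one_ne_zero this)
  exact ⟨b, by linear_combination b * L.cube - (A ^ 2 - A + 1) * hb⟩

lemma w3 (L : Loc R A ρ) : ρ A ^ 3 = 1 := by
  linear_combination (ρ A - 1) * L.w

lemma wne (L : Loc R A ρ) : ρ A ≠ 0 := by
  intro h; have := L.w3; rw [h] at this; norm_num at this

lemma wne1 (L : Loc R A ρ) : ρ A ≠ 1 := by
  intro h; have := L.w; rw [h] at this
  have : (1 : F) = 0 := by linear_combination this - L.two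
  exact one_ne_zero this

lemma sqinj (L : Loc R A ρ) {x y : F} (h : x ^ 2 = y ^ 2) : x = y := by
  have h2 := L.two
  have : (x - y) ^ 2 = 0 := by linear_combination h + (y ^ 2 - x * y) * h2
  exact sub_eq_zero.1 (pow_eq_zero_iff two_ne_zero |>.1 this)

lemma mem_of_sq (L : Loc R A ρ) (x : K) (a : R) (h : x ^ 2 = a) : ∃ t : R, x = t := by
  by_cases hx : x = 0
  · exact ⟨0, by simp [hx]⟩
  obtain ⟨u, hu, h1 | ⟨m, h1 | h1⟩⟩ := L.frac x hx
  · exact ⟨u, h1⟩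
  · exact ⟨2 ^ (m + 1) * u, by push_cast; exact h1⟩
  · exfalso
    have : u ^ 2 = 2 * (2 * (2 ^ m) ^ 2 * a) := by
      apply Subtype.ext
      have e : ((2 * (2 * (2 ^ m) ^ 2 * a) : R) : K) = 2 * (2 * (2 ^ m) ^ 2 * a) := rfl
      rw [e, ← h, Subring.coe_pow, ← h1]; ring
    have h2 := congrArg ρ this
    rw [L.rho2, map_pow] at h2
    exact hu (pow_eq_zero_iff two_ne_zero |>.1 h2)

/-- An integral square root. -/
lemma mem_of_unit_sq (L : Loc R A ρ) (x : K) (a c : R) (hc : ρ c ≠ 0) (h : c * x ^ 2 = a) :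
    ∃ t : R, x = t ∧ c * t ^ 2 = a := by
  obtain ⟨b, hb⟩ := L.unit c hc
  have hb' : (c : K) * b = 1 := by exact_mod_cast congrArg (fun x : R => (x : K)) hb
  obtain ⟨t, ht⟩ := L.mem_of_sq x (b * a) (by
    push_cast; rw [← h]; linear_combination (-x ^ 2) * hb')
  refine ⟨t, ht, ?_⟩
  apply Subtype.ext
  push_cast
  rw [← ht, h]

lemma lin2 (L : Loc R A ρ) (a b : ℤ) (h : ρ (a + b * A) = 0) : (2 : ℤ) ∣ a ∧ (2 : ℤ) ∣ b := by
  have h2 := L.two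
  have key : ∀ n : ℤ, ((n : F) = 0 ∧ (2 : ℤ) ∣ n) ∨ ((n : F) = 1 ∧ ¬ (2 : ℤ) ∣ n) := by
    intro n
    obtain ⟨k, hk | hk⟩ := Int.even_or_odd' n
    · left; rw [hk]; push_cast; rw [h2]; simp
    · right; rw [hk]; push_cast; rw [h2]; constructor
      · simp
      · omega
  rw [map_add, map_mul, map_intCast, map_intCast] at h
  rcases key a with ⟨ha, ha'⟩ | ⟨ha, ha'⟩ <;> rcases key b with ⟨hb, hb'⟩ | ⟨hb, hb'⟩ <;>
    rw [ha, hb] at h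
  · exact ⟨ha', hb'⟩
  · exfalso; apply L.wne; linear_combination h
  · exfalso; apply one_ne_zero (α := F); linear_combination h
  · exfalso; apply L.wne1; linear_combination h - h2

lemma lin4 (L : Loc R A ρ) (a b c : ℤ) (h : ∃ t : R, a + b * A + c * A ^ 2 = 4 * t) :
    (4 : ℤ) ∣ a - c ∧ (4 : ℤ) ∣ b + c := by
  obtain ⟨t, ht⟩ := h
  obtain ⟨κ, hκ⟩ := L.kap
  have h1 : ((a - c : ℤ) : R) + ((b + c : ℤ) : R) * A = 2 * (2 * (t - 2 * c * κ)) := by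
    push_cast
    linear_combination ht - c * hκ
  obtain ⟨⟨x, hx⟩, ⟨y, hy⟩⟩ := L.lin2 _ _ (by rw [h1, L.rho2])
  rw [hx, hy] at h1
  have h3 : (x : R) + y * A = 2 * (t - 2 * c * κ) := by
    apply mul_left_cancel₀ (two_ne (K := K))
    push_cast at h1
    linear_combination h1
  obtain ⟨⟨x', hx'⟩, ⟨y', hy'⟩⟩ := L.lin2 _ _ (by rw [h3, L.rho2])
  omega

/-- Unit squares modulo four. -/
lemma sq4 (L : Loc R A ρ) (u : R) (hu : ρ u ≠ 0) :
    (∃ t, u ^ 2 = 1 + 4 * t) ∨ (∃ t, u ^ 2 = A ^ 2 + 4 * t) ∨ (∃ t, u ^ 2 = - A + 4 * t) := by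
  rcases L.res (ρ u) with h | h | h | h
  · exact absurd h hu
  · left
    obtain ⟨c, hc⟩ := L.cong (a := u) (b := 1) (by rw [h, map_one])
    exact ⟨c + c ^ 2, by rw [hc]; ring⟩
  · right; left
    obtain ⟨c, hc⟩ := L.cong (a := u) (b := A) h
    exact ⟨A * c + c ^ 2, by rw [hc]; ring⟩
  · right; right
    obtain ⟨c, hc⟩ := L.cong (a := u) (b := A ^ 2) (by rw [h, map_pow])
    exact ⟨A ^ 2 * c + c ^ 2 + 2 * A, by rw [hc]; linear_combination A * L.cube⟩

lemma M4a (L : Loc R A ρ) (u t : R) : A ≠ u ^ 2 + 4 * t := by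
  intro h
  have hu : ρ u ≠ 0 := by
    intro h0
    have := congrArg ρ h
    rw [map_add, map_pow, h0, show (4:R) * t = 2 * (2 * t) by ring, L.rho2] at this
    exact L.wne (by rw [this]; ring)
  rcases L.sq4 u hu with ⟨s, hs⟩ | ⟨s, hs⟩ | ⟨s, hs⟩
  · have := L.lin4 (-1) 1 0 ⟨s + t, by push_cast; linear_combination h + hs⟩
    omega
  · have := L.lin4 0 1 (-1) ⟨s + t, by push_cast; linear_combination h + hs⟩
    omega
  · have := L.lin4 0 2 0 ⟨s + t, by push_cast; linear_combination h + hs⟩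
    omega

lemma M4b (L : Loc R A ρ) (u t : R) : 2 - A ≠ u ^ 2 + 4 * t := by
  intro h
  have hu : ρ u ≠ 0 := by
    intro h0
    have := congrArg ρ h
    rw [map_add, map_pow, h0, show (4:R) * t = 2 * (2 * t) by ring, L.rho2, map_sub, map_ofNat] at this
    exact L.wne (by linear_combination L.two - this)
  rcases L.sq4 u hu with ⟨s, hs⟩ | ⟨s, hs⟩ | ⟨s, hs⟩
  · have := L.lin4 1 (-1) 0 ⟨s + t, by push_cast; linear_combination h + hs⟩
    omega
  · have := L.lin4 2 (-1) (-1) ⟨s + t, by push_cast; linear_combination h + hs⟩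
    omega
  · have := L.lin4 2 0 0 ⟨s + t, by push_cast; linear_combination h + hs⟩
    omega

lemma M4c (L : Loc R A ρ) (u t : R) : A * (2 - A) ≠ u ^ 2 + 4 * t := by
  intro h
  have hu : ρ u ≠ 0 := by
    intro h0
    have := congrArg ρ h
    rw [map_add, map_pow, h0, show (4:R) * t = 2 * (2 * t) by ring, L.rho2, map_mul, map_sub, map_ofNat] at this
    exact L.wne (by linear_combination (ρ A) ^ 3 * L.two - ρ A ^ 2 * this - ρ A * L.w3)
  rcases L.sq4 u hu with ⟨s, hs⟩ | ⟨s, hs⟩ | ⟨s, hs⟩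
  · have := L.lin4 (-1) 2 (-1) ⟨s + t, by push_cast; linear_combination h + hs⟩
    omega
  · have := L.lin4 0 2 (-2) ⟨s + t, by push_cast; linear_combination h + hs⟩
    omega
  · have := L.lin4 0 3 (-1) ⟨s + t, by push_cast; linear_combination h + hs⟩
    omega

/-- The four square classes. -/
def Cls (A : R) (x : K) : Prop := ∃ s : K, s ≠ 0 ∧ (x = s ^ 2 ∨ x = A * s ^ 2 ∨ x = (2 - A) * s ^ 2 ∨
      x = A * (2 - A) * s ^ 2)

lemma rhoE (L : Loc R A ρ) : ρ (2 - A) ≠ 0 := by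
  rw [map_sub, map_ofNat, L.two, zero_sub, neg_ne_zero]; exact L.wne

/-- A unit congruent to a square modulo four has trivial class. -/
lemma class_one (L : Loc R A ρ) (x : K) (hx : Cls A x) (c u t : R) (m : K)
    (hc : ρ c ≠ 0) (hxc : x * m ^ 2 = c)
    (hcu : c = u ^ 2 + 4 * t) : ∃ s : K, s ≠ 0 ∧ x = s ^ 2 := by
  obtain ⟨s, hs, h⟩ := hx
  have main : ∀ d : R, ρ d ≠ 0 → (∀ u t, d ≠ u ^ 2 + 4 * t) → x ≠ d * s ^ 2 := by
    intro d hd hn hx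
    obtain ⟨v, hv, hv'⟩ := L.mem_of_unit_sq (s * m) c d hd (by rw [← hxc, hx]; ring)
    have hvu : ρ v ≠ 0 := by
      intro h0; apply hc; rw [← hv', map_mul, map_pow, h0]; ring
    obtain ⟨b, hb⟩ := L.unit v hvu
    refine hn (u * b) (t * b ^ 2) ?_
    have : d * v ^ 2 * b ^ 2 = (u ^ 2 + 4 * t) * b ^ 2 := by rw [hv', hcu]
    linear_combination this - d * (v * b + 1) * hb
  refine ⟨s, hs, ?_⟩
  rcases h with h | h | h | h
  · exact h
  · exact absurd h (main A L.wne L.M4a)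
  · exact absurd (by push_cast; exact h) (main (2 - A) L.rhoE L.M4b)
  · refine absurd (by push_cast; exact h) (main (A * (2 - A)) ?_ L.M4c)
    rw [map_mul]; exact mul_ne_zero L.wne L.rhoE

end Loc
end
end C4
end

section
set_option linter.unusedSectionVars false
namespace C4
section
variable {K : Type*} [Field K] [CharZero K] {R : Subring K} {A : R} {F : Type*} [Field F]
    {ρ : R →+* F}
namespace Loc

lemma toK {a b : R} (h : a = b) : (a : K) = b := congrArg _ h

lemma cubeK (L : Loc R A ρ) : (A : K) ^ 3 = 7 := by
  have := toK L.cube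
  push_cast at this
  exact this

/-- A solution of the auxiliary equation is a square modulo four. -/
lemma sqX (L : Loc R A ρ) (X t : K) (hcl : Cls A X)
    (h : X * t ^ 2 = X ^ 2 + 6 * A ^ 2 * X - A) : ∃ s : K, s ≠ 0 ∧ X = s ^ 2 := by
  have h2 := L.two
  have hw := L.w
  have hw3 := L.w3
  obtain ⟨κ, hκ⟩ := L.kap
  have hd : ∃ (d : R) (s : K), ρ d ≠ 0 ∧ s ≠ 0 ∧ X = d * s ^ 2 := by
    obtain ⟨s, hs, h | h | h | h⟩ := hcl
    · exact ⟨1, s, by simp, hs, by simpa using h⟩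
    · exact ⟨A, s, L.wne, hs, h⟩
    · exact ⟨2 - A, s, L.rhoE, hs, by push_cast; exact h⟩
    · exact ⟨A * (2 - A), s, by rw [map_mul]; exact mul_ne_zero L.wne L.rhoE, hs,
        by push_cast; exact h⟩
  obtain ⟨d, s, hd, hs, hX⟩ := hd
  obtain ⟨v, hv, hsv⟩ := L.frac s hs
  set D : R := d * v ^ 2 with hD
  have hDu : ρ D ≠ 0 := by rw [hD, map_mul, map_pow]; exact mul_ne_zero hd (pow_ne_zero 2 hv)
  obtain ⟨D', hD'⟩ := L.unit D hDu
  have hDK : (D : K) = d * v ^ 2 := by rw [hD]; push_cast; ring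
  rcases hsv with h1 | ⟨m, h1 | h1⟩
  · -- unit case
    have hXD : X = D := by rw [hX, h1, hDK]
    rw [hXD] at h
    obtain ⟨T, rfl, hT⟩ := L.mem_of_unit_sq t (D ^ 2 + 6 * A ^ 2 * D - A) D hDu
      (by push_cast; exact h)
    have hu : ∃ u w, D = u ^ 2 + 2 * w := by
      rcases L.res (ρ D) with h | h | h | h
      · exact absurd h hDu
      · obtain ⟨c, hc⟩ := L.cong (a := D) (b := 1 ^ 2) (by rw [h, map_pow, map_one, one_pow])
        exact ⟨1, c, hc⟩
      · obtain ⟨c, hc⟩ := L.cong (a := D) (b := (A ^ 2) ^ 2) (by 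
          rw [h, map_pow, map_pow]; linear_combination (-ρ A) * hw3)
        exact ⟨A ^ 2, c, hc⟩
      · obtain ⟨c, hc⟩ := L.cong (a := D) (b := A ^ 2) (by rw [h, map_pow])
        exact ⟨A, c, hc⟩
    obtain ⟨u, w, huw⟩ := hu
    by_cases hT0 : ρ T = 0
    · obtain ⟨T', rfl⟩ := L.ker T hT0
      have e1 := congrArg ρ hT
      simp only [map_mul, map_pow, map_add, map_sub, map_ofNat] at e1
      have e2 : ρ D = ρ (A ^ 2) := by
        apply L.sqinj
        rw [map_pow]
        linear_combination -e1 - ρ A * (hw3) + (2 * ρ D * ρ T' ^ 2 - 3 * ρ A ^ 2 * ρ D) * h2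
      obtain ⟨c, hc⟩ := L.cong e2
      have e3 : D * T' ^ 2 = 12 * A + 4 * A ^ 2 * c + c ^ 2 := by
        have : (2 * 2) * (D * T' ^ 2) = (2 * 2) * (12 * A + 4 * A ^ 2 * c + c ^ 2) := by
          have : D * (2 * T') ^ 2 = (A ^ 2 + 2 * c) ^ 2 + 6 * A ^ 2 * (A ^ 2 + 2 * c) - A := by
            rw [hT, hc]
          linear_combination this + (7 * A) * L.cube
        exact mul_left_cancel₀ (mul_ne_zero two_ne two_ne) this
      by_cases hc0 : ρ c = 0
      · obtain ⟨c', rfl⟩ := L.ker c hc0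
        exact L.class_one X hcl D A c' 1 hDu (by rw [hXD]; ring) (by rw [hc]; ring)
      · exfalso
        have hT' : ρ T' ≠ 0 := by
          intro h0
          have := congrArg ρ e3
          simp only [map_mul, map_pow, map_add, map_ofNat, h0] at this
          apply hc0
          apply pow_eq_zero_iff two_ne_zero |>.1
          linear_combination -this - (6 * ρ A + 2 * ρ A ^ 2 * ρ c) * h2
        have e4 : ρ c = ρ (A * T') := by
          apply L.sqinj
          have := congrArg ρ e3
          simp only [map_mul, map_pow, map_add, map_ofNat] at this
          rw [e2, map_pow] at this
          rw [map_mul]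
          linear_combination -this - (6 * ρ A + 2 * ρ A ^ 2 * ρ c) * h2
        obtain ⟨g, hg⟩ := L.cong e4
        have e5 : c * T' ^ 2 = 2 * (3 * A + A ^ 2 * c + A * T' * g + g ^ 2) := by
          apply mul_left_cancel₀ (two_ne (K := K))
          have : (A ^ 2 + 2 * c) * T' ^ 2 = 12 * A + 4 * A ^ 2 * c + (A * T' + 2 * g) ^ 2 := by
            rw [← hc, e3, ← hg]
          linear_combination this
        have e6 := congrArg ρ e5
        rw [L.rho2, map_mul, map_pow] at e6
        exact (mul_ne_zero hc0 (pow_ne_zero 2 hT')) e6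
    · have e1 := congrArg ρ hT
      simp only [map_mul, map_pow, map_add, map_sub, map_ofNat] at e1
      have hρD : ρ D = ρ u ^ 2 := by rw [huw, map_add, L.rho2, map_pow, add_zero]
      have e2 : ρ (u * T) = ρ (u ^ 2 + A ^ 2) := by
        apply L.sqinj
        rw [hρD] at e1
        simp only [map_mul, map_pow, map_add]
        linear_combination e1 + (3 * ρ A ^ 2 * ρ u ^ 2 - ρ u ^ 2 * ρ A ^ 2 - ρ A) * h2 - ρ A * hw3
      obtain ⟨g, hg⟩ := L.cong e2
      have e3 : w * T ^ 2 = 2 * (u ^ 2 * w + w ^ 2 + A ^ 2 * u ^ 2 + 3 * A ^ 2 * w - 2 * A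
          - (u ^ 2 + A ^ 2) * g - g ^ 2) := by
        apply mul_left_cancel₀ (two_ne (K := K))
        have e4 : (u ^ 2 + 2 * w) * T ^ 2 = (u ^ 2 + 2 * w) ^ 2 + 6 * A ^ 2 * (u ^ 2 + 2 * w) - A := by
          rw [← huw, hT]
        have e5 : (u * T) ^ 2 = (u ^ 2 + A ^ 2 + 2 * g) ^ 2 := by rw [hg]
        linear_combination e4 - e5 - A * L.cube
      have e6 := congrArg ρ e3
      rw [L.rho2, map_mul, map_pow] at e6
      have hw0 : ρ w = 0 := by
        rcases mul_eq_zero.1 e6 with h | h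
        · exact h
        · exact absurd (pow_eq_zero_iff two_ne_zero |>.1 h) hT0
      obtain ⟨w', rfl⟩ := L.ker w hw0
      exact L.class_one X hcl D u w' 1 hDu (by rw [hXD]; ring) (by rw [huw]; ring)
  · -- positive valuation
    have hXD : X = (2 ^ (m + 1)) ^ 2 * D := by rw [hX, h1, hDK]; ring
    obtain ⟨T, hT, hT'⟩ := L.mem_of_unit_sq (2 ^ (m + 1) * t)
      ((2 ^ (m + 1)) ^ 4 * D ^ 2 + 6 * A ^ 2 * (2 ^ (m + 1)) ^ 2 * D - A) D hDu
      (by push_cast; rw [hXD] at h; linear_combination h)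
    have hTu : ρ T ≠ 0 := by
      intro h0
      have := congrArg ρ hT'
      simp only [map_mul, map_pow, map_add, map_sub, map_ofNat, h0, h2] at this
      apply L.wne
      simp only [zero_pow (Nat.succ_ne_zero m)] at this
      linear_combination this
    obtain ⟨S, hS⟩ := L.unit T hTu
    refine L.class_one X hcl D (A ^ 2 * S) (S ^ 2 * (4 * (2 ^ m) ^ 4 * D ^ 2 + 6 * A ^ 2 * (2 ^ m) ^ 2 * D
      - 2 * A)) (2 ^ (m + 1))⁻¹ hDu (by rw [hXD]; field_simp) ?_
    have : D * T ^ 2 * S ^ 2 = ((2 ^ (m + 1)) ^ 4 * D ^ 2 + 6 * A ^ 2 * (2 ^ (m + 1)) ^ 2 * D - A) * S ^ 2 := by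
      rw [hT']
    linear_combination this - D * (T * S + 1) * hS - S ^ 2 * A * L.cube
  · -- negative valuation
    have hXD : X * (2 ^ (m + 1)) ^ 2 = D := by rw [hX, hDK, ← h1]; ring
    obtain ⟨T, hT, hT'⟩ := L.mem_of_unit_sq (2 ^ (m + 1) * t)
      (D ^ 2 + 6 * A ^ 2 * (2 ^ (m + 1)) ^ 2 * D - (2 ^ (m + 1)) ^ 4 * A) D hDu
      (by push_cast; rw [← hXD]; linear_combination (2 ^ (m + 1)) ^ 4 * h)
    refine L.class_one X hcl D T (-(D' * (6 * A ^ 2 * (2 ^ m) ^ 2 * D - 4 * (2 ^ m) ^ 4 * A)))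
      (2 ^ (m + 1)) hDu hXD ?_
    linear_combination (-D') * hT' - (D - T ^ 2) * hD'

lemma halve (L : Loc R A ρ) (φ : K →+* ℝ)
    (hA1 : ∀ X t : K, 0 < φ X → X * t ^ 2 = X ^ 2 + 6 * A ^ 2 * X - A → Cls A X)
    (s η : K) (hs : s ≠ 0) (h : η ^ 2 = s ^ 2 * (4 * (s ^ 2) ^ 2 - 3 * A ^ 2 * s ^ 2 + 4 * A)) :
    ∃ q m : K, q ≠ 0 ∧ (m * s = η ∨ m * s = - η) ∧ q ^ 2 = 8 * s ^ 2 - 3 * A ^ 2 + 4 * m ∧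
      q ^ 4 + 6 * A ^ 2 * q ^ 2 - A = 16 * s ^ 2 * q ^ 2 := by
  have h3 := L.cubeK
  obtain ⟨m, rfl⟩ : ∃ m, η = m * s := ⟨η / s, by field_simp⟩
  have hm : m ^ 2 = 4 * (s ^ 2) ^ 2 - 3 * A ^ 2 * s ^ 2 + 4 * A := by
    have : s ^ 2 * m ^ 2 = s ^ 2 * (4 * (s ^ 2) ^ 2 - 3 * A ^ 2 * s ^ 2 + 4 * A) := by
      linear_combination h
    exact mul_left_cancel₀ (pow_ne_zero 2 hs) this
  have key : ∀ m : K, m ^ 2 = 4 * (s ^ 2) ^ 2 - 3 * A ^ 2 * s ^ 2 + 4 * A → 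
      0 < φ (8 * s ^ 2 - 3 * A ^ 2 + 4 * m) → ∃ q : K, q ≠ 0 ∧ q ^ 2 = 8 * s ^ 2 - 3 * A ^ 2 + 4 * m ∧
      q ^ 4 + 6 * A ^ 2 * q ^ 2 - A = 16 * s ^ 2 * q ^ 2 := by
    intro m hm hpos
    have e : (8 * s ^ 2 - 3 * A ^ 2 + 4 * m) * (4 * s) ^ 2 = 
      (8 * s ^ 2 - 3 * A ^ 2 + 4 * m) ^ 2 + 6 * A ^ 2 * (8 * s ^ 2 - 3 * A ^ 2 + 4 * m) - A := by
      linear_combination (-16) * hm + 9 * A * h3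
    obtain ⟨q, hq0, hq⟩ := L.sqX _ _ (hA1 _ _ hpos e) e
    refine ⟨q, hq0, hq.symm, ?_⟩
    rw [hq] at e
    linear_combination -e
  have hprod : φ (8 * s ^ 2 - 3 * A ^ 2 + 4 * m) * φ (8 * s ^ 2 - 3 * A ^ 2 + 4 * (-m)) = - φ A := by
    rw [← map_mul, ← map_neg]
    congr 1
    linear_combination (-16) * hm + 9 * A * h3
  have hφ3 : (φ A) ^ 3 = 7 := by rw [← map_pow, h3, map_ofNat]
  have hφα : 0 < φ A := by
    by_contra hc
    have := mul_nonneg (sq_nonneg (φ A)) (neg_nonneg.2 (not_lt.1 hc))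
    nlinarith
  by_cases hp : 0 < φ (8 * s ^ 2 - 3 * A ^ 2 + 4 * m)
  · obtain ⟨q, h1, h2, h3⟩ := key m hm hp
    exact ⟨q, m, h1, Or.inl rfl, h2, h3⟩
  · have : 0 < φ (8 * s ^ 2 - 3 * A ^ 2 + 4 * (-m)) := by
      by_contra hq
      have := mul_nonneg (neg_nonneg.2 (not_lt.1 hp)) (neg_nonneg.2 (not_lt.1 hq))
      nlinarith
    obtain ⟨q, h1, h2, h3⟩ := key (-m) (by rw [neg_sq]; exact hm) this
    exact ⟨q, -m, h1, Or.inr (by ring), h2, h3⟩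
end Loc
end
end C4
end

section
set_option linter.unusedSectionVars false
namespace C4
section
variable {K : Type*} [Field K] [CharZero K] {R : Subring K} {A : R} {F : Type*} [Field F]
    {ρ : R →+* F}

/-- The elliptic curve. -/
def E0 (A : R) (ξ η : K) : Prop := η ^ 2 = ξ * (4 * ξ ^ 2 - 3 * A ^ 2 * ξ + 4 * A)

/-- Global facts. -/
structure Glob (A : R) : Prop where
  A0 : ∀ ξ η : K, ξ ≠ 0 → E0 A ξ η → Loc.Cls A ξ
  halve : ∀ s η : K, s ≠ 0 → E0 A (s ^ 2) η →
    ∃ q m : K, q ≠ 0 ∧ (m * s = η ∨ m * s = - η) ∧ q ^ 2 = 8 * s ^ 2 - 3 * A ^ 2 + 4 * m ∧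
      q ^ 4 + 6 * A ^ 2 * q ^ 2 - A = 16 * s ^ 2 * q ^ 2

namespace Loc

lemma AneK (L : Loc R A ρ) : (A : K) ≠ 0 := by
  intro h; have := L.cubeK; rw [h] at this; norm_num at this

lemma pair (L : Loc R A ρ) (s q x x' : K) (h : q ^ 4 + 6 * A ^ 2 * q ^ 2 - A = 16 * s ^ 2 * q ^ 2)
    (hx : 8 * x = 3 * A ^ 2 + q ^ 2 + 4 * s * q) (hx' : 8 * x' = 3 * A ^ 2 + q ^ 2 - 4 * s * q) :
    x * x' = A ∧ E0 A x (q * x) ∧ E0 A x' (q * x') := by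
  have h3 := L.cubeK
  have hp : x * x' = A := by
    have : 64 * (x * x') = 64 * A := by
      linear_combination 8 * x' * hx + (3 * A ^ 2 + q ^ 2 + 4 * s * q) * hx' + h + 9 * A * h3
    exact mul_left_cancel₀ (by norm_num) this
  have hs : 4 * (x + x') = 3 * A ^ 2 + q ^ 2 := by linear_combination (hx + hx') / 2
  refine ⟨hp, ?_, ?_⟩
  · unfold E0
    linear_combination (-x ^ 2) * hs + 4 * x * hp
  · unfold E0
    linear_combination (-x' ^ 2) * hs + 4 * x' * hp

lemma tors (L : Loc R A ρ) (x x' η : K) (hp : x * x' = A) (h : E0 A x η) :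
    ∃ η', E0 A x' η' := by
  have h3 := L.cubeK
  have hA := L.AneK
  have hx : x ≠ 0 := by rintro rfl; exact hA (by rw [← hp]; ring)
  refine ⟨η * x' / x, ?_⟩
  unfold E0 at *
  rw [← hp] at h ⊢
  field_simp
  rw [h]; ring

lemma qunit (L : Loc R A ρ) (q : K) (B : R) (hq : q ≠ 0)
    (h : q ^ 4 + 6 * A ^ 2 * q ^ 2 - A = B * q ^ 2) :
    ∃ Q : R, q = Q ∧ ρ Q ≠ 0 ∧ Q ^ 4 + 6 * A ^ 2 * Q ^ 2 - A = B * Q ^ 2 := by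
  obtain ⟨Q, hQ, h1 | ⟨m, h1 | h1⟩⟩ := L.frac q hq
  · subst h1
    exact ⟨Q, rfl, hQ, Subtype.ext (by push_cast; exact h)⟩
  · exfalso
    have : A = 2 * (8 * (2 ^ m) ^ 4 * Q ^ 4 + 2 * (6 * A ^ 2 - B) * (2 ^ m) ^ 2 * Q ^ 2) := by
      apply Subtype.ext; push_cast; rw [h1] at h; linear_combination -h
    apply L.wne
    rw [this, L.rho2]
  · exfalso
    have : Q ^ 4 = 2 * (8 * (2 ^ m) ^ 4 * A - 2 * (6 * A ^ 2 - B) * (2 ^ m) ^ 2 * Q ^ 2) := by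
      apply Subtype.ext; push_cast; rw [← h1]; linear_combination (2 ^ (m + 1)) ^ 4 * h
    apply hQ
    have := congrArg ρ this
    rw [L.rho2, map_pow] at this
    exact pow_eq_zero_iff (by norm_num) |>.1 this

lemma rho4 (L : Loc R A ρ) (a : R) : ρ (4 * a) = 0 := by
  rw [show (4:R) * a = 2 * (2 * a) by ring, L.rho2]
lemma rho8 (L : Loc R A ρ) (a : R) : ρ (8 * a) = 0 := by
  rw [show (8:R) * a = 2 * (4 * a) by ring, L.rho2]

lemma four_eq (L : Loc R A ρ) {x : F} (h : x ^ 4 = ρ A) : x = ρ A := by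
  apply L.sqinj
  apply L.sqinj
  linear_combination h - ρ A * L.w3

/-- Unit halving data. -/
lemma halfdata (L : Loc R A ρ) (G : Glob A) (s : R) (η : K) (hs : ρ s ≠ 0)
    (h : E0 A ((s : K) ^ 2) η) : ∃ q g : R, q = A + 2 * g ∧
      q ^ 4 + 6 * A ^ 2 * q ^ 2 - A = 16 * s ^ 2 * q ^ 2 ∧ 
      (A ^ 2 + A * g + g ^ 2) ^ 2 = 4 * A + s ^ 2 * q ^ 2 := by
  have hs0 : (s : K) ≠ 0 := by
    intro h0
    have : s = 0 := Subtype.ext h0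
    rw [this, map_zero] at hs
    exact hs rfl
  obtain ⟨q, m, hq0, -, -, hq⟩ := G.halve s η hs0 h
  obtain ⟨Q, rfl, hQ, hQ'⟩ := L.qunit q (16 * s ^ 2) hq0 (by push_cast; exact hq)
  have e1 : ρ Q = ρ A := by
    apply L.four_eq
    have := congrArg ρ hQ'
    simp only [map_mul, map_pow, map_add, map_sub, map_ofNat] at this
    linear_combination this + (8 * ρ s ^ 2 * ρ Q ^ 2 - 3 * ρ A ^ 2 * ρ Q ^ 2) * L.two
  obtain ⟨g, hg⟩ := L.cong e1
  refine ⟨Q, g, hg, hQ', ?_⟩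
  have : (2 * 2) * ((2 * 2) * (A ^ 2 + A * g + g ^ 2) ^ 2) = (2 * 2) * ((2 * 2) * (4 * A + s ^ 2 * Q ^ 2)) := by
    have e : 4 * (A ^ 2 + A * g + g ^ 2) = Q ^ 2 + 3 * A ^ 2 := by rw [hg]; ring
    linear_combination (4 * (A ^ 2 + A * g + g ^ 2) + Q ^ 2 + 3 * A ^ 2) * e + hQ' + 9 * A * L.cube
  have h4 : (2 * 2 : R) ≠ 0 := mul_ne_zero two_ne two_ne
  exact mul_left_cancel₀ h4 (mul_left_cancel₀ h4 this)

lemma L1 (L : Loc R A ρ) (G : Glob A) (s : R) (η : K) (hs : ρ s ≠ 0)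
    (h : E0 A ((s : K) ^ 2) η) : ρ s = ρ A := by
  obtain ⟨q, g, hq, -, h2⟩ := L.halfdata G s η hs h
  have hw := L.w
  have hw3 := L.w3
  have h0 := L.two
  have e := congrArg ρ h2
  rw [hq] at e
  simp only [map_mul, map_pow, map_add, map_ofNat] at e
  have e1 : ρ A ^ 2 + ρ A * ρ g + ρ g ^ 2 = ρ s * ρ A := by
    apply L.sqinj
    linear_combination e + (2 * ρ A + ρ s ^ 2 * (2 * ρ A * ρ g + 2 * ρ g ^ 2)) * h0
  apply mul_right_cancel₀ L.wne
  rw [← e1]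
  rcases L.res (ρ g) with hg | hg | hg | hg
  · rw [hg]; ring
  · exfalso
    rw [hg] at e1
    exact (mul_ne_zero hs L.wne) (by rw [← e1]; linear_combination hw)
  · rw [hg]; linear_combination ρ A ^ 2 * h0
  · exfalso
    rw [hg] at e1
    exact (mul_ne_zero hs L.wne) (by rw [← e1]; linear_combination hw + (1 + ρ A) * hw3)

lemma unit_ne {a : R} (h : ρ a ≠ 0) : (a : K) ≠ 0 := by
  intro h0
  have : a = 0 := Subtype.ext h0
  rw [this, map_zero] at h
  exact h rfl

/-- Points reducing to 1 or alpha have class in the nontrivial coset. -/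
lemma L1' (L : Loc R A ρ) (G : Glob A) (ξ : R) (η : K) (hξ : ρ ξ ≠ 0) (hξ' : ρ ξ ≠ ρ A ^ 2)
    (h : E0 A (ξ : K) η) : ∃ v : R, ξ = (2 - A) * v ^ 2 ∨ ξ = A * (2 - A) * v ^ 2 := by
  have hw3 := L.w3
  obtain ⟨s, hs, hc⟩ := G.A0 ξ η (unit_ne hξ) h
  rcases hc with hc | hc | hc | hc
  · exfalso
    obtain ⟨v, rfl⟩ := L.mem_of_sq s ξ hc.symm
    have e : ξ = v ^ 2 := Subtype.ext (by push_cast; exact hc)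
    rw [hc] at h
    have := L.L1 G v η (by intro h0; apply hξ; rw [e, map_pow, h0]; ring) h
    apply hξ'
    rw [e, map_pow, this]
  · exfalso
    obtain ⟨v, rfl, e⟩ := L.mem_of_unit_sq s ξ A L.wne hc.symm
    have hv : ρ v ≠ 0 := by intro h0; apply hξ; rw [← e, map_mul, map_pow, h0]; ring
    obtain ⟨b, hb⟩ := L.unit v hv
    have hbK : (v : K) * b = 1 := by exact_mod_cast toK hb
    obtain ⟨η', h'⟩ := L.tors ξ (b ^ 2) η (by
      rw [hc]; linear_combination A * (v * b + 1) * hbK) h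
    have e1 : ρ v * ρ b = 1 := by rw [← map_mul, hb, map_one]
    have := L.L1 G b η' (by intro h0; rw [h0, mul_zero] at e1; exact zero_ne_one e1) h'
    apply hξ'
    rw [← e, map_mul, map_pow]
    rw [this] at e1
    linear_combination ρ A ^ 2 * (ρ v * ρ A + 1) * e1 - ρ v ^ 2 * ρ A * hw3
  · obtain ⟨v, rfl, e⟩ := L.mem_of_unit_sq s ξ (2 - A) L.rhoE (by push_cast; exact hc.symm)
    exact ⟨v, Or.inl e.symm⟩
  · obtain ⟨v, rfl, e⟩ := L.mem_of_unit_sq s ξ (A * (2 - A))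
      (by rw [map_mul]; exact mul_ne_zero L.wne L.rhoE) (by push_cast; exact hc.symm)
    exact ⟨v, Or.inr e.symm⟩

lemma CL (L : Loc R A ρ) (G : Glob A) (ξ η : K) (j : ℕ) (c : R) (hc : ρ c ≠ 0)
    (hξ : ξ * (2 ^ (j + 2)) ^ 2 = c) (h : E0 A ξ η) : ∃ s : K, s ≠ 0 ∧ ξ = s ^ 2 := by
  have hξ0 : ξ ≠ 0 := by
    rintro rfl
    rw [zero_mul] at hξ
    exact unit_ne hc hξ.symm
  obtain ⟨f, rfl⟩ : ∃ f, η = f * ξ := ⟨η / ξ, by field_simp⟩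
  have hf : f ^ 2 * ξ = 4 * ξ ^ 2 - 3 * A ^ 2 * ξ + 4 * A := by
    apply mul_left_cancel₀ hξ0
    unfold E0 at h
    linear_combination h
  obtain ⟨T, hT, e⟩ := L.mem_of_unit_sq (2 ^ (j + 1) * f)
    (c ^ 2 - 12 * A ^ 2 * c * (2 ^ j) ^ 2 + 256 * (2 ^ j) ^ 4 * A) c hc (by
      push_cast; rw [← hξ]; linear_combination (64 * (2 ^ j) ^ 4) * hf)
  obtain ⟨b, hb⟩ := L.unit c hc
  refine L.class_one ξ (G.A0 ξ _ hξ0 h) c T (3 * A ^ 2 * (2 ^ j) ^ 2 - 64 * (2 ^ j) ^ 4 * A * b) _ hc hξ ?_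
  linear_combination (-b) * e - (c - T ^ 2 - 12 * A ^ 2 * (2 ^ j) ^ 2) * hb

end Loc
end
end C4
end

section
set_option linter.unusedSectionVars false
namespace C4
section
variable {K : Type*} [Field K] [CharZero K] {R : Subring K} {A : R} {F : Type*} [Field F]
    {ρ : R →+* F}
namespace Loc

lemma cancel8 {a b : R} (h : 8 * a = 8 * b) : a = b := by
  have : (8 : R) ≠ 0 := by
    rw [show (8:R) = 2 * (2 * 2) by norm_num]
    exact mul_ne_zero two_ne (mul_ne_zero two_ne two_ne)
  exact mul_left_cancel₀ this h

lemma cancel4 {a b : R} (h : 4 * a = 4 * b) : a = b :=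
  cancel8 (by linear_combination 2 * h)

lemma cancel2 {a b : R} (h : 2 * a = 2 * b) : a = b :=
  cancel8 (by linear_combination 4 * h)

lemma w2ne (L : Loc R A ρ) : ρ A ≠ ρ A ^ 2 := by
  intro h
  apply L.wne1
  apply mul_left_cancel₀ L.wne
  linear_combination -h

/-- Points that reduce to alpha. -/
lemma yform (L : Loc R A ρ) (G : Glob A) (y : R) (η : K) (hy : ρ y = ρ A) (h : E0 A (y : K) η) :
    ∃ e t : R, (e = 1 ∨ e = -1) ∧ y = e * (2 - A) + 4 * t := by
  have h0 := L.two
  have h3 := L.cube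
  have hw3 := L.w3
  obtain ⟨v, hv | hv⟩ := L.L1' G y η (by rw [hy]; exact L.wne) (by rw [hy]; exact L.w2ne) h
  · have : ρ v = ρ 1 := by
      apply L.sqinj
      apply mul_left_cancel₀ L.wne
      rw [map_one]
      have := congrArg ρ hv
      simp only [map_mul, map_pow, map_sub, map_ofNat] at this
      linear_combination -this + hy + ρ v ^ 2 * (ρ A - 1) * h0
    obtain ⟨c, hc⟩ := L.cong this
    exact ⟨1, (2 - A) * (c + c ^ 2), Or.inl rfl, by rw [hv, hc]; ring⟩
  · have : ρ v = ρ A := by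
      apply L.sqinj
      apply mul_left_cancel₀ (pow_ne_zero 2 L.wne)
      have := congrArg ρ hv
      simp only [map_mul, map_pow, map_sub, map_ofNat] at this
      linear_combination -this + hy + ρ v ^ 2 * (ρ A ^ 2 - ρ A) * h0 - ρ A * hw3
    obtain ⟨c, hc⟩ := L.cong this
    refine ⟨-1, 4 - 2 * A + A * (2 - A) * (A * c + c ^ 2), Or.inr rfl, ?_⟩
    rw [hv, hc]
    linear_combination (2 - A) * h3

lemma fin3 (L : Loc R A ρ) (G : Glob A) (z s2 e : R) (η : K) (hz : z = s2 ^ 2)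
    (hz2 : ρ z = ρ A ^ 2) (h : E0 A (z : K) η) (he : z ^ 2 + A = 8 * e * z) : ρ e = 0 := by
  have h0 := L.two
  have h3 := L.cube
  have hw := L.w
  have hw3 := L.w3
  have hs2 : ρ s2 = ρ A := by
    apply L.sqinj; rw [← hz2, hz, map_pow]
  obtain ⟨q, g, hq, hqq, hh⟩ := L.halfdata G s2 η (by rw [hs2]; exact L.wne)
    (by rw [hz] at h; push_cast at h; exact h)
  obtain ⟨κ, hκ⟩ := L.kap
  have h4h : 4 * (A ^ 2 + A * g + g ^ 2) = q ^ 2 + 3 * A ^ 2 := by rw [hq]; ring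
  generalize A ^ 2 + A * g + g ^ 2 = H at hh h4h
  have hρq : ρ q = ρ A := by rw [hq, map_add, L.rho2, add_zero]
  have hρH : ρ H = ρ (s2 * q) := by
    apply L.sqinj
    have := congrArg ρ hh
    simp only [map_mul, map_pow, map_add, map_ofNat] at this ⊢
    linear_combination this + 2 * ρ A * h0
  obtain ⟨b, hb⟩ := L.cong hρH
  have hbb : b * (b + s2 * q) = A := by
    apply cancel4
    rw [hb] at hh
    linear_combination hh
  have hp := L.pair (s2 : K) q ((b + s2 * q : R) : K) b (by exact_mod_cast toK hqq)
    (by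
      have : 8 * (b + s2 * q) = 3 * A ^ 2 + q ^ 2 + 4 * s2 * q := by
        rw [hb] at h4h; linear_combination h4h
      exact_mod_cast toK this)
    (by
      have : 8 * b = 3 * A ^ 2 + q ^ 2 - 4 * s2 * q := by
        rw [hb] at h4h; linear_combination h4h
      exact_mod_cast toK this)
  have hF : ρ b * (ρ b + ρ A ^ 2) = ρ A := by
    have := congrArg ρ hbb
    rw [map_mul, map_add, map_mul, hs2, hρq] at this
    linear_combination this
  obtain ⟨y, y', η', hyy, hyH, hy, hE⟩ : ∃ (y y' : R) (η' : K), y * y' = A ∧ y + y' = H ∧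
      ρ y = ρ A ∧ E0 A (y : K) η' := by
    have case1 : ρ b = ρ A → ∃ (y y' : R) (η' : K), y * y' = A ∧ y + y' = H ∧
      ρ y = ρ A ∧ E0 A (y : K) η' := fun hb' =>
      ⟨b, b + s2 * q, _, hbb, by rw [hb]; ring, hb', hp.2.2⟩
    rcases L.res (ρ b) with hb' | hb' | hb' | hb'
    · exfalso; rw [hb'] at hF; exact L.wne (by rw [← hF]; ring)
    · refine ⟨b + s2 * q, b, _, by rw [← hbb]; ring, by rw [hb]; ring, ?_, hp.2.1⟩
      rw [map_add, map_mul, hs2, hρq, hb']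
      linear_combination hw - ρ A * h0
    · exact case1 hb'
    · exfalso; rw [hb'] at hF
      exact L.wne (by rw [← hF]; linear_combination ρ A ^ 4 * h0)
  obtain ⟨ε, t, hε, hy4⟩ := L.yform G y η' hy hE
  have hε2 : ε ^ 2 = 1 := by rcases hε with rfl | rfl <;> norm_num
  obtain ⟨t', ht'⟩ : ∃ t', H = ε * A ^ 2 + 4 * t' := by
    refine ⟨ε * (2 + A + 2 * κ) + ε * (4 + 2 * A + A ^ 2) * (2 * t * ε * (2 - A) + 4 * t ^ 2)
      - t * (4 + 2 * A + A ^ 2) * ε * H, ?_⟩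
    have e1 : y * H = y ^ 2 + A := by rw [← hyH]; linear_combination hyy
    have e2 : (2 - A) * (4 + 2 * A + A ^ 2) = 1 := by linear_combination -h3
    rw [hy4] at e1
    linear_combination (ε * (4 + 2 * A + A ^ 2)) * e1 - (ε ^ 2 * H  - ε ^ 3 * (2 - A)) * e2 +
      (- H + ε * (2 - A)) * hε2 + ε * hκ + ε * h3
  obtain ⟨τ, hτ⟩ : ∃ τ, z * A ^ 2 = 3 * A + 8 * τ := by
    have e3 : z * (4 * H - 3 * A ^ 2) = H ^ 2 - 4 * A := by
      rw [hz]; linear_combination s2 ^ 2 * h4h - hh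
    rcases hε with rfl | rfl
    · refine ⟨A ^ 2 * t' + 2 * t' ^ 2 - 2 * t' * z, ?_⟩
      rw [ht'] at e3
      linear_combination e3 + A * h3
    · refine ⟨- A ^ 2 * t' + 2 * t' ^ 2 - 2 * t' * z + A ^ 2 * z, ?_⟩
      rw [ht'] at e3
      linear_combination e3 + A * h3
  have hz' : z = - 3 * A ^ 2 + 8 * (z - A * τ) := by
    linear_combination -A * hτ + z * h3
  generalize z - A * τ = y0 at hz'
  have e5 : e * z = 2 * (4 * A - 3 * A ^ 2 * y0 + 4 * y0 ^ 2) := by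
    apply cancel8
    have : z ^ 2 + A = 16 * (4 * A - 3 * A ^ 2 * y0 + 4 * y0 ^ 2) := by
      rw [hz']; linear_combination 9 * A * h3
    linear_combination this - he
  have := congrArg ρ e5
  rw [L.rho2, map_mul, hz2] at this
  exact (mul_eq_zero.1 this).resolve_right (pow_ne_zero 2 L.wne)
end Loc
end
end C4
end

section
set_option linter.unusedSectionVars false
namespace C4
section
variable {K : Type*} [Field K] [CharZero K] {R : Subring K} {A : R} {F : Type*} [Field F]
    {ρ : R →+* F}
namespace Loc

lemma fin4 (L : Loc R A ρ) (G : Glob A) (z e y : R) (η : K)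
    (hz2 : ρ z = ρ A ^ 2) (h : E0 A (z : K) η) (he : z ^ 2 + A = 8 * e * z)
    (hz4 : z = A ^ 2 + 4 * y) : ρ e = 0 := by
  have hzne : ρ z ≠ 0 := by rw [hz2]; exact pow_ne_zero 2 L.wne
  obtain ⟨s, hs, hzs⟩ := L.class_one (z : K) (G.A0 z η (unit_ne hzne) h) z A y 1 hzne (by ring) hz4
  obtain ⟨s2, rfl⟩ := L.mem_of_sq s z hzs.symm
  exact L.fin3 G z s2 e η (Subtype.ext (by push_cast; exact hzs)) hz2 h he

lemma small2 (L : Loc R A ρ) (G : Glob A) (u Q z z' : R) (η η' : K) (k : ℕ) (hu : ρ u = ρ A)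
    (hQ : ρ Q ≠ 0) (hzz : z * z' = A) (hs : z + z' = 8 * u ^ 2 + 4 * 2 ^ k * u * Q)
    (hz : ρ z = ρ A ^ 2) (hz' : ρ z' = ρ A ^ 2) (h : E0 A (z : K) η) (h' : E0 A (z' : K) η') :
    ρ Q = ρ A := by
  have h0 := L.two
  have h3 := L.cube
  have hw := L.w
  have hw3 := L.w3
  obtain ⟨x, hx⟩ := L.cong (a := z) (b := A ^ 2) (by rw [hz, map_pow])
  rcases k with _ | k
  · have e1 : 2 * A + A ^ 2 * x + x ^ 2 = (2 * u ^ 2 + u * Q) * z := by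
      apply cancel4
      have : z ^ 2 + A = (8 * u ^ 2 + 4 * u * Q) * z := by linear_combination -hzz + z * hs
      rw [hx] at this ⊢
      linear_combination this - A * h3
    have e2 := congrArg ρ e1
    simp only [map_mul, map_pow, map_add, map_ofNat] at e2
    rw [hz, hu] at e2
    have e3 : ρ Q = ρ x * (ρ x + ρ A ^ 2) := by
      linear_combination -e2 - ρ Q * hw3 + (ρ A - ρ A ^ 4) * h0
    rcases L.res (ρ x) with hx | hx | hx | hx
    · exfalso; rw [hx] at e3; exact hQ (by rw [e3]; ring)
    · rw [e3, hx]; linear_combination hw - ρ A * h0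
    · rw [e3, hx]; linear_combination hw + hw3 - ρ A * h0
    · exfalso; rw [hx] at e3; exact hQ (by rw [e3]; linear_combination ρ A ^ 4 * h0)
  · have e0 : z + z' = 8 * (u ^ 2 + 2 ^ k * u * Q) := by rw [hs]; ring
    have ez : z ^ 2 + A = 8 * (u ^ 2 + 2 ^ k * u * Q) * z := by linear_combination -hzz + z * e0
    have ez' : z' ^ 2 + A = 8 * (u ^ 2 + 2 ^ k * u * Q) * z' := by
      linear_combination -hzz + z' * e0
    have key : ρ (u ^ 2 + 2 ^ k * u * Q) = 0 := by
      generalize u ^ 2 + 2 ^ k * u * Q = e at *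
      have e1 : 2 * A + A ^ 2 * x + x ^ 2 = 2 * (e * z) := by
        apply cancel4
        rw [hx] at ez ⊢
        linear_combination ez - A * h3
      have e2 := congrArg ρ e1
      rw [L.rho2, map_add, map_add, L.rho2, map_mul, map_pow] at e2
      have e3 : ρ x * (ρ A ^ 2 + ρ x) = 0 := by rw [map_pow] at e2; linear_combination e2
      rcases mul_eq_zero.1 e3 with hx0 | hx0
      · obtain ⟨y, hy⟩ := L.ker x hx0
        exact L.fin4 G z e y η hz h ez (by rw [hx, hy]; ring)
      · obtain ⟨y, hy⟩ := L.cong (a := x) (b := A ^ 2) (by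
          rw [map_pow]; linear_combination hx0 - ρ A ^ 2 * h0)
        refine L.fin4 G z' e (2 * e - y - A ^ 2) η' hz' h' ez' ?_
        rw [hx, hy] at e0
        linear_combination e0
    rw [map_add, map_mul, map_mul, map_pow, map_pow, map_ofNat, h0, hu] at key
    rcases k with _ | k
    · have : ρ A * (ρ A + ρ Q) = 0 := by linear_combination key
      have := (mul_eq_zero.1 this).resolve_left L.wne
      linear_combination this - ρ A * h0
    · exfalso
      rw [pow_succ] at key
      exact pow_ne_zero 2 L.wne (by linear_combination key)

lemma small1 (L : Loc R A ρ) (G : Glob A) (s q : K) (S Q p : R) (k : ℕ)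
    (hS : s * 2 ^ (k + 3) = S) (hq : q = 2 ^ (k + 1) * Q) (hQ : ρ Q ≠ 0)
    (h : q ^ 4 + 6 * A ^ 2 * q ^ 2 - A = 16 * s ^ 2 * q ^ 2) (hp : S * Q = - A ^ 2 + 4 * p) :
    ρ Q = ρ A := by
  have h0 := L.two
  have h3 := L.cube
  have hw := L.w
  have hw3 := L.w3
  have hsq : 4 * s * q = - A ^ 2 + 4 * p := by
    have : ((S * Q : R) : K) = - A ^ 2 + 4 * p := by rw [hp]; push_cast; rfl
    push_cast at this
    rw [← this, hq, ← hS]; ring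
  have e1 : A - A ^ 2 * p + 2 * p ^ 2 = 2 * (2 ^ k) ^ 4 * Q ^ 4 + 3 * A ^ 2 * (2 ^ k) ^ 2 * Q ^ 2 := by
    apply cancel8
    have : (S * Q) ^ 2 = 16 * (2 ^ k) ^ 4 * Q ^ 4 + 24 * A ^ 2 * (2 ^ k) ^ 2 * Q ^ 2 - A := by
      apply Subtype.ext
      push_cast
      rw [hq] at h
      rw [← hS]
      linear_combination -h
    rw [hp] at this
    linear_combination this - A * h3
  obtain ⟨g, hg⟩ := L.cong (a := p + (2 ^ k) ^ 2 * Q ^ 2) (b := A ^ 2) (by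
    have := congrArg ρ e1
    simp only [map_mul, map_pow, map_add, map_sub, map_ofNat] at this ⊢
    linear_combination (-ρ A) * this - (ρ p  + ((2:F) ^ k) ^ 2 * ρ Q ^ 2) * hw3 +
      (ρ A * ρ p ^ 2 -ρ A * ((2:F) ^ k) ^ 4 * ρ Q ^ 4 - ρ A ^ 3 * ((2:F) ^ k) ^ 2 * ρ Q ^ 2) * h0)
  have hgK : (p : K) + (2 ^ k) ^ 2 * Q ^ 2 = A ^ 2 + 2 * g := by exact_mod_cast toK hg
  have hpair := L.pair s q ((3 * A ^ 2 + 4 * g) / 4) ((3 * A ^ 2 + q ^ 2 - 4 * s * q) / 8) h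
    (by rw [hsq, hq]; linear_combination (-4) * hgK) (by ring)
  generalize (3 * (A : K) ^ 2 + q ^ 2 - 4 * s * q) / 8 = ξ at hpair
  obtain ⟨hA, -, hE⟩ := hpair
  have hx0 : ρ (3 * A ^ 2 + 4 * g) = ρ A ^ 2 := by
    rw [map_add, L.rho4, map_mul, map_pow, map_ofNat]; linear_combination ρ A ^ 2 * h0
  obtain ⟨b, hb⟩ := L.unit (3 * A ^ 2 + 4 * g) (by rw [hx0]; exact pow_ne_zero 2 L.wne)
  have hbK : (3 * (A : K) ^ 2 + 4 * g) * b = 1 := by exact_mod_cast toK hb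
  have hρb : ρ b = ρ A := by
    have := congrArg ρ hb
    rw [map_mul, hx0, map_one] at this
    linear_combination ρ A * this - ρ b * hw3
  have hξ : ξ = 4 * A * b := by linear_combination 4 * b * hA - ξ * hbK
  have hAb : ρ (A * b) ≠ 0 := by rw [map_mul, hρb]; exact mul_ne_zero L.wne L.wne
  have hξ0 : ξ ≠ 0 := by
    rintro rfl; exact L.AneK (by rw [← hA]; ring)
  obtain ⟨s1, hs1, hs1'⟩ := L.class_one ξ (G.A0 ξ _ hξ0 hE) (A * b) A (-(5 + g * A) * A * b)
    (1 / 2) hAb (by rw [hξ]; push_cast; ring) (by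
      linear_combination A ^ 2 * hb - 3 * A * b * h3)
  obtain ⟨u, hu⟩ := L.mem_of_sq (s1 / 2) (A * b) (by push_cast; rw [div_pow, ← hs1', hξ]; ring)
  have hs1u : s1 = 2 * u := by rw [← hu]; ring
  have hu2 : u ^ 2 = A * b := by
    apply Subtype.ext; push_cast; rw [← hu, div_pow, ← hs1', hξ]; ring
  have hρu : ρ u = ρ A := by
    apply L.sqinj; rw [← map_pow, hu2, map_mul, hρb]; ring
  rw [hs1'] at hE
  obtain ⟨q1, m, hq1, hm, hq1m, hquart⟩ := G.halve s1 _ hs1 hE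
  obtain ⟨Y, rfl, hY, hY4⟩ := L.qunit q1 (64 * u ^ 2) hq1 (by
    push_cast; rw [hs1u] at hquart; linear_combination hquart)
  have hρY : ρ Y = ρ A := by
    apply L.four_eq
    have := congrArg ρ hY4
    simp only [map_mul, map_pow, map_add, map_sub, map_ofNat] at this
    linear_combination this + (32 * ρ u ^ 2 * ρ Y ^ 2 - 3 * ρ A ^ 2 * ρ Y ^ 2) * h0
  have main : ∀ Q1 : R, ρ Q1 ≠ 0 → m = 4 * 2 ^ k * Q1 * u → ρ Q1 = ρ A := by
    intro Q1 hQ1 hm1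
    have hp2 := L.pair s1 Y ((4 * u ^ 2 + 2 * 2 ^ k * Q1 * u + u * Y : R) : K)
      ((4 * u ^ 2 + 2 * 2 ^ k * Q1 * u - u * Y : R) : K) hquart
      (by rw [hq1m, hm1, hs1u]; push_cast; ring) (by rw [hq1m, hm1, hs1u]; push_cast; ring)
    have hzz : (4 * u ^ 2 + 2 * 2 ^ k * Q1 * u + u * Y) * (4 * u ^ 2 + 2 * 2 ^ k * Q1 * u - u * Y)
      = A := Subtype.ext (by rw [← hp2.1]; push_cast; rfl)
    refine L.small2 G u Q1 _ _ _ _ k hρu hQ1 hzz (by ring) ?_ ?_ hp2.2.1 hp2.2.2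
    · simp only [map_mul, map_pow, map_add, map_sub, map_ofNat]
      rw [hρu, hρY]
      linear_combination (2 * ρ A ^ 2 + (2:F) ^ k * ρ Q1 * ρ A) * h0
    · simp only [map_mul, map_pow, map_add, map_sub, map_ofNat]
      rw [hρu, hρY]
      linear_combination (ρ A ^ 2 + (2:F) ^ k * ρ Q1 * ρ A) * h0
  have hqs : (q * s1 ^ 2) = (4 * 2 ^ k * Q * u) * s1 := by rw [hq, hs1u]; ring
  rcases hm with hm | hm
  · exact main Q hQ (mul_right_cancel₀ hs1 (by rw [hm, hqs]))
  · have := main (-Q) (by rw [map_neg]; exact neg_ne_zero.2 hQ)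
      (mul_right_cancel₀ hs1 (by rw [hm, hqs]; push_cast; ring))
    rw [map_neg] at this
    linear_combination -this - ρ A * h0

lemma small (L : Loc R A ρ) (G : Glob A) (s q : K) (S Q : R) (k : ℕ)
    (hS : s * 2 ^ (k + 3) = S) (hq : q = 2 ^ (k + 1) * Q) (hQ : ρ Q ≠ 0)
    (h : q ^ 4 + 6 * A ^ 2 * q ^ 2 - A = 16 * s ^ 2 * q ^ 2) :
    ρ S = ρ A := by
  have h0 := L.two
  have h3 := L.cube
  have hw := L.w
  have hw3 := L.w3
  have e1 : (S * Q) ^ 2 = 16 * (2 ^ k) ^ 4 * Q ^ 4 + 24 * A ^ 2 * (2 ^ k) ^ 2 * Q ^ 2 - A := by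
    apply Subtype.ext
    push_cast
    rw [hq] at h
    rw [← hS]
    linear_combination -h
  have e2 : ρ (S * Q) = ρ (A ^ 2) := by
    apply L.sqinj
    rw [← map_pow, e1]
    simp only [map_mul, map_pow, map_add, map_sub, map_ofNat]
    linear_combination (8 * ((2:F) ^ k) ^ 4 * ρ Q ^ 4 + 12 * ρ A ^ 2 * ((2:F) ^ k) ^ 2 * ρ Q ^ 2
      - ρ A) * h0 - ρ A * hw3
  have hQw : ρ Q = ρ A := by
    obtain ⟨r, hr⟩ := L.cong e2
    have e3 : r * (r + A ^ 2) = 2 * (2 * (2 ^ k) ^ 4 * Q ^ 4 + 3 * A ^ 2 * (2 ^ k) ^ 2 * Q ^ 2 - A) := by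
      apply cancel4
      rw [hr] at e1
      linear_combination e1 - A * h3
    have e4 := congrArg ρ e3
    rw [L.rho2, map_mul, map_add, map_pow] at e4
    rcases mul_eq_zero.1 e4 with e5 | e5
    · obtain ⟨p, hp⟩ := L.ker r e5
      refine L.small1 G (-s) q (-S) Q (-p) k (by push_cast; rw [← hS]; ring) hq hQ
        (by rw [h]; ring) ?_
      rw [hp] at hr
      linear_combination -hr
    · obtain ⟨p, hp⟩ := L.cong (a := r) (b := A ^ 2) (by
        rw [map_pow]; linear_combination e5 - ρ A ^ 2 * h0)
      refine L.small1 G s q S Q (p + A ^ 2) k hS hq hQ h ?_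
      rw [hr, hp]; ring
  rw [map_mul, map_pow, hQw] at e2
  exact mul_right_cancel₀ L.wne (by rw [e2]; ring)
end Loc
end
end C4
end

section
set_option linter.unusedSectionVars false
namespace C4
section
variable {K : Type*} [Field K] [CharZero K] {R : Subring K} {A : R} {F : Type*} [Field F]
    {ρ : R →+* F}
namespace Loc

lemma large1 (L : Loc R A ρ) (G : Glob A) (k : ℕ)
    (ih : ∀ (s η : K) (S : R), E0 A (s ^ 2) η → s * 2 ^ (k + 2) = S → ρ S ≠ 0 → ρ S = ρ A)
    (s q : K) (S Q T : R) (hS : s * 2 ^ (k + 3) = S) (hq : q * 2 ^ (k + 1) = Q) (hQ : ρ Q ≠ 0)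
    (h : q ^ 4 + 6 * A ^ 2 * q ^ 2 - A = 16 * s ^ 2 * q ^ 2) (hT : Q + S = 2 * T)
    (hTQ : ρ T = ρ Q) : ρ Q = ρ A := by
  have h0 := L.two
  have hpair := L.pair s q ((3 * A ^ 2 + q ^ 2 + 4 * s * q) / 8)
    ((3 * A ^ 2 + q ^ 2 - 4 * s * q) / 8) h (by ring) (by ring)
  have hTK : (Q : K) + S = 2 * T := by exact_mod_cast toK hT
  have hc : (3 * A ^ 2 + q ^ 2 + 4 * s * q) / 8 * (2 ^ (k + 2)) ^ 2 =
      ((6 * A ^ 2 * (2 ^ k) ^ 2 + Q * T : R) : K) := by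
    have : (Q : K) * T = Q * (Q + S) / 2 := by rw [hTK]; ring
    push_cast
    rw [this, ← hS, ← hq]; ring
  have hρc : ρ (6 * A ^ 2 * (2 ^ k) ^ 2 + Q * T) = ρ Q ^ 2 := by
    simp only [map_mul, map_pow, map_add, map_sub, map_ofNat]
    rw [hTQ]
    linear_combination 3 * ρ A ^ 2 * ((2:F) ^ k) ^ 2 * h0
  obtain ⟨s', hs', hs''⟩ := L.CL G _ _ k _ (by rw [hρc]; exact pow_ne_zero 2 hQ) hc hpair.2.1
  rw [hs''] at hc
  obtain ⟨S', hS'⟩ := L.mem_of_sq (s' * 2 ^ (k + 2)) _ (by rw [mul_pow]; exact hc)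
  have : S' ^ 2 = 6 * A ^ 2 * (2 ^ k) ^ 2 + Q * T := by
    apply Subtype.ext
    rw [← hc]; push_cast; rw [← hS']; ring
  have e : ρ S' = ρ Q := by
    apply L.sqinj; rw [← map_pow, this, hρc]
  rw [← e]
  exact ih s' _ S' (by rw [← hs'']; exact hpair.2.1) hS' (by rw [e]; exact hQ)

lemma large (L : Loc R A ρ) (G : Glob A) (k : ℕ)
    (ih : ∀ (s η : K) (S : R), E0 A (s ^ 2) η → s * 2 ^ (k + 2) = S → ρ S ≠ 0 → ρ S = ρ A)
    (s q : K) (S Q : R) (hS : s * 2 ^ (k + 3) = S) (hq : q * 2 ^ (k + 1) = Q) (hQ : ρ Q ≠ 0)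
    (h : q ^ 4 + 6 * A ^ 2 * q ^ 2 - A = 16 * s ^ 2 * q ^ 2) : ρ S = ρ A := by
  have h0 := L.two
  have e1 : Q ^ 4 + 24 * A ^ 2 * (2 ^ k) ^ 2 * Q ^ 2 - 16 * (2 ^ k) ^ 4 * A = S ^ 2 * Q ^ 2 := by
    apply Subtype.ext
    push_cast
    rw [← hS, ← hq]
    linear_combination (2 ^ (k + 1)) ^ 4 * h
  have e2 : ρ Q = ρ S := by
    apply L.sqinj
    apply mul_right_cancel₀ (pow_ne_zero 2 hQ)
    have := congrArg ρ e1
    simp only [map_mul, map_pow, map_add, map_sub, map_ofNat] at this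
    linear_combination this + (8 * ((2:F) ^ k) ^ 4 * ρ A - 12 * ρ A ^ 2 * ((2:F) ^ k) ^ 2 * ρ Q ^ 2) * h0
  rw [← e2]
  obtain ⟨T, hT⟩ := L.ker (Q + S) (by rw [map_add, ← e2]; linear_combination ρ Q * h0)
  have e3 : Q ^ 2 * (T * (T - Q)) = 2 * (3 * A ^ 2 * (2 ^ k) ^ 2 * Q ^ 2 - 2 * (2 ^ k) ^ 4 * A) := by
    apply cancel4
    have : S = 2 * T - Q := by linear_combination hT
    rw [this] at e1
    linear_combination -e1
  have e4 := congrArg ρ e3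
  rw [L.rho2, map_mul, map_mul, map_sub, map_pow] at e4
  rcases mul_eq_zero.1 ((mul_eq_zero.1 e4).resolve_left (pow_ne_zero 2 hQ)) with e5 | e5
  · refine L.large1 G k ih (-s) q (-S) Q (Q - T) (by push_cast; rw [← hS]; ring) hq hQ
      (by rw [h]; ring) (by linear_combination -hT) (by rw [map_sub, e5, sub_zero])
  · exact L.large1 G k ih s q S Q T hS hq hQ h hT (sub_eq_zero.1 e5)

lemma claimA (L : Loc R A ρ) (G : Glob A) (k : ℕ) :
    ∀ (s η : K) (S : R), E0 A (s ^ 2) η → s * 2 ^ (k + 2) = S → ρ S ≠ 0 → ρ S = ρ A := by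
  have h0 := L.two
  have hw := L.w
  have hw3 := L.w3
  induction k with
  | zero =>
    intro s η S h hS hρ
    have hs : s ≠ 0 := by
      rintro rfl; rw [zero_mul] at hS; exact unit_ne hρ hS.symm
    obtain ⟨q, m, hq, -, -, hqq⟩ := G.halve s η hs h
    obtain ⟨Q, rfl, hQ, e⟩ := L.qunit q (S ^ 2) hq (by push_cast; rw [← hS]; linear_combination hqq)
    have e1 := congrArg ρ e
    simp only [map_mul, map_pow, map_add, map_sub, map_ofNat] at e1
    have e2 : ρ S ^ 2 * ρ Q ^ 2 = ρ Q ^ 4 + ρ A := by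
      linear_combination -e1 + (3 * ρ A ^ 2 * ρ Q ^ 2 - ρ A) * h0
    apply L.sqinj
    rcases L.res (ρ Q) with hx | hx | hx | hx
    · exact absurd hx hQ
    · rw [hx] at e2; linear_combination e2 + hw - ρ A ^ 2 * h0
    · exfalso
      rw [hx] at e2
      apply mul_ne_zero (pow_ne_zero 2 hρ) (pow_ne_zero 2 L.wne)
      linear_combination e2 + ρ A * hw3 + ρ A * h0
    · rw [hx] at e2
      linear_combination ρ A ^ 2 * e2 + (-ρ S ^ 2 * (ρ A ^ 3 + 1) + ρ A ^ 7 + ρ A ^ 4 + ρ A + 1) * hw3 + hw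
        - ρ A ^ 2 * h0
  | succ k ih =>
    intro s η S h hS hρ
    have hs : s ≠ 0 := by
      rintro rfl; rw [zero_mul] at hS; exact unit_ne hρ hS.symm
    obtain ⟨q, m, hq, -, -, hqq⟩ := G.halve s η hs h
    have hq2 : (2 ^ (k + 1)) ^ 2 * (q ^ 4 + 6 * A ^ 2 * q ^ 2 - A) = (S : K) ^ 2 * q ^ 2 := by
      rw [← hS, hqq]; ring
    obtain ⟨Q, hQ, h1 | ⟨m, h1 | h1⟩⟩ := L.frac q hq
    · exfalso
      have : S ^ 2 * Q ^ 2 = 2 * (2 * (2 ^ k) ^ 2 * (Q ^ 4 + 6 * A ^ 2 * Q ^ 2 - A)) := by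
        apply Subtype.ext; push_cast; rw [← h1]; linear_combination -hq2
      have e := congrArg ρ this
      rw [L.rho2, map_mul, map_pow, map_pow] at e
      exact mul_ne_zero (pow_ne_zero 2 hρ) (pow_ne_zero 2 hQ) e
    · rcases lt_trichotomy m k with hm | rfl | hm
      · exfalso
        obtain ⟨d, rfl⟩ := Nat.exists_eq_add_of_lt hm
        have : S ^ 2 * Q ^ 2 = 2 * (2 * (2 ^ d) ^ 2 * 
            ((2 ^ (m + 1) * Q) ^ 4 + 6 * A ^ 2 * (2 ^ (m + 1) * Q) ^ 2 - A)) := by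
          apply Subtype.ext; push_cast
          apply mul_left_cancel₀ (pow_ne_zero 2 (pow_ne_zero (m + 1) (two_ne_zero (α := K))))
          rw [h1] at hq2
          linear_combination -hq2
        have e := congrArg ρ this
        rw [L.rho2, map_mul, map_pow, map_pow] at e
        exact mul_ne_zero (pow_ne_zero 2 hρ) (pow_ne_zero 2 hQ) e
      · exact L.small G s q S Q m hS h1 hQ hqq
      · exfalso
        obtain ⟨d, rfl⟩ := Nat.exists_eq_add_of_lt hm
        have : A = 2 * (- (2 * (2 ^ d) ^ 2 * S ^ 2 * Q ^ 2) +
            8 * (2 ^ (k + d + 1)) ^ 4 * Q ^ 4 + 12 * A ^ 2 * (2 ^ (k + d + 1)) ^ 2 * Q ^ 2) := by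
          apply Subtype.ext; push_cast
          apply mul_left_cancel₀ (pow_ne_zero 2 (pow_ne_zero (k + 1) (two_ne_zero (α := K))))
          rw [h1] at hq2
          linear_combination -hq2
        apply L.wne
        rw [this, L.rho2]
    · have hqQ : q = Q / 2 ^ (m + 1) := by rw [← h1]; field_simp
      have hq3 : (2 ^ (k + 1)) ^ 2 * (Q ^ 4 + 6 * A ^ 2 * (2 ^ (m + 1)) ^ 2 * Q ^ 2 -
          (2 ^ (m + 1)) ^ 4 * A) = (S : K) ^ 2 * Q ^ 2 * (2 ^ (m + 1)) ^ 2 := by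
        rw [← h1]; linear_combination (2 ^ (m + 1)) ^ 4 * hq2
      rcases lt_trichotomy m k with hm | rfl | hm
      · exfalso
        obtain ⟨d, rfl⟩ := Nat.exists_eq_add_of_lt hm
        have : S ^ 2 * Q ^ 2 = 2 * (2 * (2 ^ d) ^ 2 *
            (Q ^ 4 + 6 * A ^ 2 * (2 ^ (m + 1)) ^ 2 * Q ^ 2 - (2 ^ (m + 1)) ^ 4 * A)) := by
          apply Subtype.ext; push_cast
          apply mul_left_cancel₀ (pow_ne_zero 2 (pow_ne_zero (m + 1) (two_ne_zero (α := K))))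
          linear_combination -hq3
        have e := congrArg ρ this
        rw [L.rho2, map_mul, map_pow, map_pow] at e
        exact mul_ne_zero (pow_ne_zero 2 hρ) (pow_ne_zero 2 hQ) e
      · exact L.large G m ih s q S Q hS h1 hQ hqq
      · exfalso
        obtain ⟨d, rfl⟩ := Nat.exists_eq_add_of_lt hm
        have : Q ^ 4 = 2 * (2 * (2 ^ d) ^ 2 * S ^ 2 * Q ^ 2 -
            12 * A ^ 2 * (2 ^ (k + d + 1)) ^ 2 * Q ^ 2 + 8 * (2 ^ (k + d + 1)) ^ 4 * A) := by
          apply Subtype.ext; push_cast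
          apply mul_left_cancel₀ (pow_ne_zero 2 (pow_ne_zero (k + 1) (two_ne_zero (α := K))))
          linear_combination hq3
        have e := congrArg ρ this
        rw [L.rho2, map_pow] at e
        exact pow_ne_zero 4 hQ e
end Loc
end
end C4
end

section
set_option linter.unusedSectionVars false
namespace C4
section
variable {K : Type*} [Field K] [CharZero K] {R : Subring K} {A : R} {F : Type*} [Field F]
    {ρ : R →+* F}
namespace Loc

lemma line (a l n x g x3 η η' : K) (hne : x ≠ g) (hn : n = η - l * x) (hl : l * (x - g) = η - η')
    (h : η ^ 2 = x * (4 * x ^ 2 - 3 * a ^ 2 * x + 4 * a))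
    (h' : η' ^ 2 = g * (4 * g ^ 2 - 3 * a ^ 2 * g + 4 * a))
    (h3 : 4 * x3 = l ^ 2 + 3 * a ^ 2 - 4 * x - 4 * g) :
    n ^ 2 = 4 * x * g * x3 ∧
      (l * x3 + n) ^ 2 = x3 * (4 * x3 ^ 2 - 3 * a ^ 2 * x3 + 4 * a) := by
  have e1 : η = l * x + n := by rw [hn]; ring
  have e2 : η' = l * g + n := by rw [hn]; linear_combination hl
  rw [e1] at h
  rw [e2] at h'
  have e3 : 4 * a - 2 * l * n = 4 * (x3 * (x + g) + x * g) := by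
    apply mul_left_cancel₀ (sub_ne_zero.2 hne)
    linear_combination h' - h - (x - g) * (x + g) * h3
  have e4 : n ^ 2 = 4 * x * g * x3 := by
    linear_combination h + x * e3 + x ^ 2 * h3
  refine ⟨e4, ?_⟩
  linear_combination -x3 * e3 + e4 - x3 ^ 2 * h3

lemma AneOne (L : Loc R A ρ) : (A : K) - 1 ≠ 0 := by
  intro h
  have h1 : (A : K) = 1 := by linear_combination h
  have := L.cubeK
  rw [h1] at this
  norm_num at this

lemma transl (L : Loc R A ρ) (ξ η η' l s x3 : K) (h : E0 A ξ η) (hs : s ≠ 0)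
    (hξ : ξ = (2 - A) * s ^ 2) (hη' : η' ^ 2 = ((A + 1) / 3) ^ 2) (hne : ξ ≠ (A ^ 2 - 1) / 3)
    (hl : l * (ξ - (A ^ 2 - 1) / 3) = η - η')
    (h3 : 4 * x3 = l ^ 2 + 3 * A ^ 2 - 4 * ξ - 4 * ((A ^ 2 - 1) / 3)) :
    ∃ η3 s3, E0 A x3 η3 ∧ x3 = s3 ^ 2 := by
  have hc := L.cubeK
  obtain ⟨e1, e2⟩ := line (A : K) l (η - l * ξ) ξ _ x3 η η' hne rfl hl h (by
    rw [hη']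
    linear_combination (-(4 * (A : K) ^ 3 - 12 * A + 28) / 27 + (A ^ 3 + 7 - 2 * A) / 3 - 4 / 3) * hc) h3
  refine ⟨_, 3 * (η - l * ξ) / (2 * s * (A - 1) ^ 2), e2, ?_⟩
  have hA1 := L.AneOne
  rw [hξ] at e1
  have e3 : 4 * s ^ 2 * (A - 1) ^ 4 * x3 = 9 * (η - l * ξ) ^ 2 := by
    rw [hξ, e1]
    linear_combination 4 * s ^ 2 * x3 * (A - 1) * hc
  field_simp
  linear_combination e3
end Loc
end
end C4
end

section
set_option linter.unusedSectionVars false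
namespace C4
section
variable {K : Type*} [Field K] [CharZero K] {R : Subring K} {A : R} {F : Type*} [Field F]
    {ρ : R →+* F}
namespace Loc

/-- Classes allowed by the norm condition. -/
def Cls2 (A : R) (x : K) : Prop := ∃ s : K, s ≠ 0 ∧ (x = s ^ 2 ∨ x = (2 - A) * s ^ 2)

lemma w2ne1 (L : Loc R A ρ) : ρ A ^ 2 ≠ 1 := by
  intro h
  apply L.wne1
  linear_combination L.w3 - ρ A * h

lemma cls2R (L : Loc R A ρ) (ξ m : K) (c : R) (h : Cls2 A ξ) (hc : ξ * m ^ 2 = c) :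
    ∃ S : R, c = S ^ 2 ∨ c = (2 - A) * S ^ 2 := by
  obtain ⟨s, hs, h | h⟩ := h
  · obtain ⟨S, hS⟩ := L.mem_of_sq (s * m) c (by rw [← hc, h]; ring)
    refine ⟨S, Or.inl (Subtype.ext ?_)⟩
    push_cast; rw [← hS, ← hc, h]; ring
  · obtain ⟨S, hS, e⟩ := L.mem_of_unit_sq (s * m) c (2 - A) L.rhoE (by
      push_cast; rw [← hc, h]; ring)
    exact ⟨S, Or.inr e.symm⟩

lemma not4 (L : Loc R A ρ) (a b c : ℤ) (t : R) (h : (a : R) + b * A + c * A ^ 2 = 4 * t)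
    (hn : ¬ ((4 : ℤ) ∣ a - c ∧ (4 : ℤ) ∣ b + c)) : False :=
  hn (L.lin4 a b c ⟨t, h⟩)

lemma sq1 (L : Loc R A ρ) (S : R) (h : ρ S = 1) : ∃ t, S ^ 2 = 1 + 4 * t := by
  obtain ⟨c, hc⟩ := L.cong (a := S) (b := 1) (by rw [h, map_one])
  exact ⟨c + c ^ 2, by rw [hc]; ring⟩

lemma sqA (L : Loc R A ρ) (S : R) (h : ρ S = ρ A) : ∃ t, S ^ 2 = A ^ 2 + 4 * t := by
  obtain ⟨c, hc⟩ := L.cong h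
  exact ⟨A * c + c ^ 2, by rw [hc]; ring⟩

lemma sqA2 (L : Loc R A ρ) (S : R) (h : ρ S = ρ A ^ 2) : ∃ t, S ^ 2 = - A + 4 * t := by
  obtain ⟨c, hc⟩ := L.cong (a := S) (b := A ^ 2) (by rw [h, map_pow])
  exact ⟨2 * A + A ^ 2 * c + c ^ 2, by rw [hc]; linear_combination A * L.cube⟩

lemma one_cases (L : Loc R A ρ) (c : R) (hc : ρ c = 1) (S : R) (h : c = S ^ 2 ∨ c = (2 - A) * S ^ 2) :
    (∃ t, c = 1 + 4 * t) ∨ ∃ t, c = 1 + 2 * A ^ 2 + 4 * t := by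
  have h0 := L.two
  rcases h with h | h
  · left
    obtain ⟨t, ht⟩ := L.sq1 S (L.sqinj (by rw [← map_pow, ← h, hc]; ring))
    exact ⟨t, by rw [h, ht]⟩
  · right
    obtain ⟨t, ht⟩ := L.sqA S (L.sqinj (by
      have e := congrArg ρ h
      rw [hc, map_mul, map_sub, map_ofNat, h0, map_pow] at e
      linear_combination (-(ρ A ^ 2)) * e - ρ S ^ 2 * L.w3 + (ρ S ^ 2 * ρ A ^ 3) * h0))
    exact ⟨-2 + (2 - A) * t, by rw [h, ht]; linear_combination -L.cube⟩

lemma X1 (L : Loc R A ρ) (ξ m : K) (c t : R) (h : Cls2 A ξ) (hc : ξ * m ^ 2 = c)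
    (ht : c = - A - A ^ 2 + 4 * t) : False := by
  have h0 := L.two
  obtain ⟨S, hS⟩ := L.cls2R ξ m c h hc
  have hρ : ρ c = 1 := by
    rw [ht, map_add, L.rho4, map_sub, map_neg, map_pow]
    linear_combination -L.w
  rcases L.one_cases c hρ S hS with ⟨t', h'⟩ | ⟨t', h'⟩
  · exact L.not4 1 1 1 (t - t') (by push_cast; linear_combination ht - h') (by decide)
  · exact L.not4 1 1 3 (t - t') (by push_cast; linear_combination ht - h') (by decide)

lemma X2 (L : Loc R A ρ) (ξ m : K) (c t : R) (h : Cls2 A ξ) (hc : ξ * m ^ 2 = c)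
    (ht : c = - 1 + 4 * t) : False := by
  have h0 := L.two
  obtain ⟨S, hS⟩ := L.cls2R ξ m c h hc
  have hρ : ρ c = 1 := by
    rw [ht, map_add, L.rho4, map_neg, map_one]
    linear_combination -h0
  rcases L.one_cases c hρ S hS with ⟨t', h'⟩ | ⟨t', h'⟩
  · exact L.not4 2 0 0 (t - t') (by push_cast; linear_combination ht - h') (by decide)
  · exact L.not4 2 0 2 (t - t') (by push_cast; linear_combination ht - h') (by decide)

lemma caseL (L : Loc R A ρ) (G : Glob A) (ξ η : K) (k : ℕ) (c : R) (h : E0 A ξ η)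
    (hc : ξ * (2 ^ (k + 2)) ^ 2 = c) (hρ : ρ c ≠ 0) : ρ c = ρ A ^ 2 := by
  obtain ⟨s, hs, rfl⟩ := L.CL G ξ η k c hρ hc h
  obtain ⟨S, hS⟩ := L.mem_of_sq (s * 2 ^ (k + 2)) c (by rw [← hc]; ring)
  have e : c = S ^ 2 := Subtype.ext (by push_cast; rw [← hS, ← hc]; ring)
  rw [e, map_pow, L.claimA G k s η S h hS (by intro h0; apply hρ; rw [e, map_pow, h0]; ring)]

lemma fdata (L : Loc R A ρ) (ξ η : K) (c : R) (h : E0 A ξ η) (hc : ξ * 2 ^ 2 = c) (hρ : ρ c ≠ 0) :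
    ∃ f b : R, c * b = 1 ∧ η = f * ξ ∧ f ^ 2 = c - 3 * A ^ 2 + 16 * A * b := by
  obtain ⟨b, hb⟩ := L.unit c hρ
  have hbK : (c : K) * b = 1 := by exact_mod_cast toK hb
  have hc0 := unit_ne hρ
  have hξ : ξ ≠ 0 := by rintro rfl; rw [zero_mul] at hc; exact hc0 hc.symm
  have hξc : ξ = c / 4 := by rw [← hc]; ring
  unfold E0 at h
  have e : (η / ξ) ^ 2 = ((c - 3 * A ^ 2 + 16 * A * b : R) : K) := by
    have : (b : K) = 1 / c := by field_simp; linear_combination hbK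
    rw [div_pow, h]; push_cast; rw [this, hξc]; field_simp; ring
  obtain ⟨f, hf⟩ := L.mem_of_sq _ _ e
  refine ⟨f, b, hb, ?_, ?_⟩
  · rw [← hf]; field_simp
  · apply Subtype.ext; rw [← e, hf]; push_cast; rfl

lemma caseII (L : Loc R A ρ) (ξ η : K) (c : R) (h : E0 A ξ η) (hC : Cls2 A ξ)
    (hc : ξ * 2 ^ 2 = c) (hρ : ρ c = 1) : False := by
  have h0 := L.two
  obtain ⟨f, b, hb, -, hf⟩ := L.fdata ξ η c h hc (by rw [hρ]; exact one_ne_zero)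
  obtain ⟨t, ht⟩ := L.sqA2 f (L.sqinj (by
    rw [← map_pow, hf]
    simp only [map_mul, map_pow, map_add, map_sub, map_ofNat]
    rw [hρ]
    linear_combination L.w + (8 * ρ A * ρ b - 2 * ρ A ^ 2 - ρ A) * h0 - ρ A * L.w3))
  refine L.X1 ξ 2 c (A ^ 2 - 4 * A * b + t) hC hc ?_
  linear_combination -hf + ht

lemma third (L : Loc R A ρ) : ∃ g : R, 3 * g = 1 := by
  apply L.unit
  rw [map_ofNat]
  intro h
  exact one_ne_zero (α := F) (by linear_combination h - L.two)

lemma caseI (L : Loc R A ρ) (G : Glob A) (ξ η : K) (c t : R) (h : E0 A ξ η) (hC : Cls2 A ξ)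
    (hc : ξ * 2 ^ 2 = c) (hct : c = 2 - A + 4 * t) : False := by
  have h0 := L.two
  obtain ⟨g, hg⟩ := L.third
  have hgK : (3 : K) * g = 1 := by exact_mod_cast toK hg
  have hg' : (g : K) = 1 / 3 := by linear_combination hgK / 3
  have hρg : ρ g = 1 := by
    have := congrArg ρ hg
    rw [map_mul, map_one, map_ofNat] at this
    linear_combination this - ρ g * h0
  have hρ : ρ c = ρ A := by
    rw [hct, map_add, L.rho4, map_sub, map_ofNat, h0]
    linear_combination -ρ A * h0
  obtain ⟨f, b, hb, hη, hf⟩ := L.fdata ξ η c h hc (by rw [hρ]; exact L.wne)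
  obtain ⟨s, hs, hs' | hs'⟩ := hC
  · obtain ⟨S, hS⟩ := L.mem_of_sq (s * 2) c (by rw [← hc, hs']; ring)
    have : c = S ^ 2 := Subtype.ext (by push_cast; rw [← hc, ← hS, hs']; ring)
    exact L.M4b S (-t) (by rw [← this, hct]; ring)
  · have hD : ρ (c - 4 * ((A ^ 2 - 1) * g)) ≠ 0 := by
      rw [map_sub, L.rho4, hρ, sub_zero]; exact L.wne
    obtain ⟨d, hd⟩ := L.unit _ hD
    have hdK : ((c : K) - 4 * ((A ^ 2 - 1) * g)) * d = 1 := by exact_mod_cast toK hd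
    have hDK : (c : K) - 4 * ((A ^ 2 - 1) * g) ≠ 0 := by
      intro h; rw [h, zero_mul] at hdK; exact zero_ne_one hdK
    have hbK : (c : K) * b = 1 := by exact_mod_cast toK hb
    have hfK : (f : K) ^ 2 = c - 3 * A ^ 2 + 16 * A * b := by exact_mod_cast toK hf
    obtain ⟨μ, hμ⟩ : ∃ μ : R, μ = (f * ((A ^ 2 - 1) * g) - (A + 1) * g) * d := ⟨_, rfl⟩
    have hμK : (μ : K) = (f * ((A ^ 2 - 1) * g) - (A + 1) * g) * d := by exact_mod_cast toK hμ
    have hξc : ξ = c / 4 := by rw [← hc]; ring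
    obtain ⟨η3, s3, hE, h3⟩ := L.transl ξ η ((A + 1) / 3) (f + 4 * μ) s
      ((4 * A * b + 2 * f * μ + 4 * μ ^ 2 - (A ^ 2 - 1) * g : R) : K) h hs hs' rfl
      (by
        intro h
        apply hDK
        rw [hξc] at h
        rw [hg']; linear_combination 4 * h)
      (by
        rw [hη, hμK, hξc]
        rw [hg'] at hdK ⊢
        linear_combination (f * ((A ^ 2 - 1) * (1 / 3)) - (A + 1) * (1 / 3)) * hdK)
      (by
        push_cast
        rw [hg', hξc]
        linear_combination -hfK)
    obtain ⟨S, rfl⟩ := L.mem_of_sq s3 _ h3.symm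
    have e : S ^ 2 = 4 * A * b + 2 * f * μ + 4 * μ ^ 2 - (A ^ 2 - 1) * g :=
      Subtype.ext (by rw [h3]; push_cast; rfl)
    have e1 : ρ S = ρ A ^ 2 := by
      apply L.sqinj
      rw [← map_pow, e]
      simp only [map_mul, map_pow, map_add, map_sub, map_ofNat, map_one]
      rw [hρg]
      linear_combination (2 * ρ A * ρ b + ρ f * ρ μ + 2 * ρ μ ^ 2 - ρ A ^ 2 - ρ A) * h0
        + L.w - ρ A * L.w3
    have e2 := L.L1 G S η3 (by rw [e1]; exact pow_ne_zero 2 L.wne) (by rw [← h3]; exact hE)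
    exact L.w2ne (by rw [← e1, e2])

lemma caseIV (L : Loc R A ρ) (G : Glob A) (ξ Λ : R) (η η' l : K) (k : ℕ) (h : E0 A (ξ : K) η)
    (hC : Cls2 A (ξ : K)) (hρ : ρ ξ = ρ A) (hη' : η' ^ 2 = ((A + 1) / 3) ^ 2)
    (hne : (ξ : K) ≠ (A ^ 2 - 1) / 3) (hl : l * (ξ - (A ^ 2 - 1) / 3) = η - η')
    (hΛ : l * 2 ^ k = Λ) (hk : k = 0 → ρ Λ = ρ A ^ 2) (hk' : k ≠ 0 → ρ Λ = 1) : False := by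
  have h0 := L.two
  obtain ⟨g, hg⟩ := L.third
  have hgK : (3 : K) * g = 1 := by exact_mod_cast toK hg
  have hg' : (g : K) = 1 / 3 := by linear_combination hgK / 3
  obtain ⟨s, hs, hs' | hs'⟩ := hC
  · obtain ⟨S, rfl⟩ := L.mem_of_sq s ξ hs'.symm
    have e : ξ = S ^ 2 := Subtype.ext (by push_cast; exact hs')
    have e1 : ρ S = ρ A ^ 2 := by
      apply L.sqinj
      rw [← map_pow, ← e, hρ]; linear_combination -ρ A * L.w3
    have e2 := L.L1 G S η (by rw [e1]; exact pow_ne_zero 2 L.wne) (by rw [← hs']; exact h)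
    exact L.w2ne (by rw [← e1, e2])
  · obtain ⟨η3, s3, hE, h3⟩ := L.transl ξ η η' l s
      ((l ^ 2 + 3 * A ^ 2 - 4 * ξ - 4 * ((A ^ 2 - 1) / 3)) / 4) h hs hs' hη' hne hl (by ring)
    rcases k with _ | j
    · obtain ⟨t, ht⟩ := L.sqA2 Λ (hk rfl)
      have htK : (Λ : K) ^ 2 = - A + 4 * t := by exact_mod_cast toK ht
      refine L.X1 _ 2 (- A - A ^ 2 + 4 * (t + A ^ 2 - ξ - (A ^ 2 - 1) * g)) (t + A ^ 2 - ξ - (A ^ 2 - 1) * g)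
        ⟨s3, ?_, Or.inl h3⟩ ?_ rfl
      · rintro rfl
        have e : - A - A ^ 2 + 4 * (t + A ^ 2 - ξ - (A ^ 2 - 1) * g) = 0 := by
          apply Subtype.ext; push_cast
          rw [hg']
          rw [show l = Λ by rw [← hΛ]; ring] at h3
          linear_combination 4 * h3 - htK
        have e1 := congrArg ρ e
        rw [map_add, L.rho4, map_sub, map_neg, map_pow, map_zero] at e1
        exact one_ne_zero (α := F) (by linear_combination L.w + e1)
      · push_cast
        rw [hg', show l = Λ by rw [← hΛ]; ring]
        linear_combination htK
    · have := L.caseL G _ η3 j (Λ ^ 2 + 4 * ((2 ^ j) ^ 2 * (3 * A ^ 2 - 4 * ξ - 4 * ((A ^ 2 - 1) * g))))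
        hE (by push_cast; rw [hg', ← hΛ]; ring) (by
          rw [map_add, L.rho4, map_pow, hk' (by omega)]; simp)
      rw [map_add, L.rho4, map_pow, hk' (by omega)] at this
      apply L.w2ne1
      rw [← this]; ring
end Loc
end
end C4
end

section
set_option linter.unusedSectionVars false
namespace C4
section
variable {K : Type*} [Field K] [CharZero K] {R : Subring K} {A : R} {F : Type*} [Field F]
    {ρ : R →+* F}
namespace Loc

/-- First coordinate of the image on the elliptic curve. -/
def Xi (A : R) (x y z : ℤ) : K := -((y : K) + A * x - A ^ 2 * z) / (3 * z)
/-- Second coordinate. -/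
def Eta (A : R) (x y z : ℤ) : K := (2 * (x : K) * y - A * (A * x + y) * z - z ^ 2) / (3 * z ^ 2)

lemma ptE (L : Loc R A ρ) (x y z : ℤ) (hz : z ≠ 0)
    (h : 7 * x ^ 3 * z + 3 * x ^ 2 * y ^ 2 - 3 * x * y * z ^ 2 + y ^ 3 * z - z ^ 4 = 0) :
    E0 A (Xi A x y z) (Eta A x y z) := by
  have hK : 7 * (x : K) ^ 3 * z + 3 * x ^ 2 * y ^ 2 - 3 * x * y * z ^ 2 + y ^ 3 * z - z ^ 4 = 0 := by
    exact_mod_cast congrArg (fun n : ℤ => (n : K)) h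
  have hzK : (z : K) ≠ 0 := by exact_mod_cast hz
  have h3 := L.cubeK
  unfold E0 Xi Eta
  field_simp
  linear_combination (4 : K) * hK + (-6 * (x : K) * A ^ 2 * z ^ 3 + 4 * x ^ 3 * z - 6 * y * A * z ^ 3
    + z ^ 4 * (5 * A ^ 3 - 1)) * h3

lemma rodd (L : Loc R A ρ) {n : ℤ} (h : Odd n) : ρ (n : R) = 1 := by
  obtain ⟨k, rfl⟩ := h
  push_cast
  rw [map_add, L.rho2, map_one, zero_add]

lemma reven (L : Loc R A ρ) {n : ℤ} (h : Even n) : ρ (n : R) = 0 := by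
  obtain ⟨k, rfl⟩ := h
  push_cast
  rw [← two_mul, L.rho2]

lemma oddsq {n : ℤ} (h : Odd n) : ∃ a : ℤ, n ^ 2 = 1 + 4 * a := by
  obtain ⟨k, rfl⟩ := h
  exact ⟨k + k ^ 2, by ring⟩

lemma inv4 (L : Loc R A ρ) {z : ℤ} (h : Odd z) : ∃ i r : R, 3 * (z : R) * i = 1 ∧ i = - z + 4 * r ∧
    ρ i = 1 := by
  obtain ⟨i, hi⟩ := L.unit (3 * (z : R)) (by
    rw [map_mul, L.rodd h, map_ofNat, mul_one]
    intro h; exact one_ne_zero (α := F) (by linear_combination h - L.two))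
  obtain ⟨a, ha⟩ := oddsq h
  have haR : (z : R) ^ 2 = 1 + 4 * a := by exact_mod_cast congrArg (fun n : ℤ => (n : R)) ha
  have e : i = - z + 4 * (i + 3 * a * i) := by
    linear_combination (-(z : R)) * hi + 3 * i * haR
  refine ⟨i, _, hi, e, ?_⟩
  rw [e, map_add, L.rho4, map_neg, L.rodd h]
  linear_combination -L.two

lemma two_adic {n : ℤ} (h : n ≠ 0) : ∃ (k : ℕ) (m : ℤ), n = 2 ^ k * m ∧ Odd m := by
  obtain ⟨k, m, hm, hn⟩ := Nat.exists_eq_two_pow_mul_odd (Int.natAbs_ne_zero.2 h)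
  have hm' : Odd (m : ℤ) := by exact_mod_cast hm
  rcases Int.natAbs_eq n with e | e
  · exact ⟨k, m, by rw [e, hn]; push_cast; rfl, hm'⟩
  · exact ⟨k, -m, by rw [e, hn]; push_cast; ring, hm'.neg⟩

lemma val {b z u a : ℤ} (hb : b ≠ 0) (hz : z ≠ 0) (hu : Odd u) (ha : Odd a) (h : z * u = a * b ^ 2) :
    ∃ (k : ℕ) (b' z' : ℤ), b = 2 ^ k * b' ∧ z = (2 ^ k) ^ 2 * z' ∧ Odd b' ∧ Odd z' := by
  obtain ⟨k, b', rfl, hb'⟩ := two_adic hb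
  obtain ⟨n, z', rfl, hz'⟩ := two_adic hz
  refine ⟨k, b', z', rfl, ?_, hb', hz'⟩
  have h1 : Odd (z' * u) := hz'.mul hu
  have h2 : Odd (a * b' ^ 2) := ha.mul hb'.pow
  rcases lt_trichotomy n (2 * k) with hn | rfl | hn
  · exfalso
    obtain ⟨d, hd⟩ := Nat.exists_eq_add_of_lt hn
    have : z' * u = 2 * (2 ^ d * (a * b' ^ 2)) := by
      apply mul_left_cancel₀ (pow_ne_zero n (two_ne_zero (α := ℤ)))
      have e : (2 : ℤ) ^ (2 * k) = 2 ^ n * 2 ^ d * 2 := by rw [hd]; ring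
      rw [pow_mul'] at e
      linear_combination h + a * b' ^ 2 * e
    rw [this] at h1
    exact (Int.not_odd_iff_even.2 (even_two_mul _)) h1
  · rw [pow_mul']
  · exfalso
    obtain ⟨d, hd⟩ := Nat.exists_eq_add_of_lt hn
    have : a * b' ^ 2 = 2 * (2 ^ d * (z' * u)) := by
      apply mul_left_cancel₀ (pow_ne_zero (2 * k) (two_ne_zero (α := ℤ)))
      have e : (2 : ℤ) ^ n = 2 ^ (2 * k) * 2 ^ d * 2 := by rw [hd]; ring
      rw [e] at h
      rw [pow_mul'] at h ⊢
      linear_combination -h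
    rw [this] at h2
    exact (Int.not_odd_iff_even.2 (even_two_mul _)) h2

lemma xiR (x y z' : ℤ) (P : ℤ) (i : R) (hP : P ≠ 0) (hi : 3 * (z' : R) * i = 1) :
    Xi A x y (P ^ 2 * z') * (P : K) ^ 2 = ((-((y : R) + A * x - A ^ 2 * (P ^ 2 * z')) * i : R) : K) := by
  have hiK : 3 * (z' : K) * i = 1 := by exact_mod_cast toK hi
  have hz : (z' : K) ≠ 0 := by
    intro h; rw [h] at hiK; simp at hiK
  have hPK : (P : K) ≠ 0 := by exact_mod_cast hP
  have : (i : K) = 1 / (3 * z') := by field_simp; linear_combination hiK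
  unfold Xi
  push_cast
  rw [this]
  field_simp

lemma ptI (L : Loc R A ρ) (G : Glob A)
    (hN : ∀ x y z : ℤ, z ≠ 0 → 7 * x ^ 3 * z + 3 * x ^ 2 * y ^ 2 - 3 * x * y * z ^ 2 + y ^ 3 * z - z ^ 4 = 0 →
      Cls2 A (Xi A x y z)) (x y z : ℤ) (hz : z ≠ 0)
    (h : 7 * x ^ 3 * z + 3 * x ^ 2 * y ^ 2 - 3 * x * y * z ^ 2 + y ^ 3 * z - z ^ 4 = 0)
    (hx : Odd x) (hy : Even y) (hze : Even z) : False := by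
  have h0 := L.two
  have hu : Odd (7 * x ^ 3 - 3 * x * y * z + y ^ 3 - z ^ 3) := by
    obtain ⟨a, rfl⟩ := hx
    obtain ⟨b, rfl⟩ := hy
    obtain ⟨c, rfl⟩ := hze
    refine ⟨28 * a ^ 3 + 42 * a ^ 2 + 21 * a + 3 - 6 * (2 * a + 1) * b * c + 4 * b ^ 3 - 4 * c ^ 3, ?_⟩
    ring
  have hy0 : y ≠ 0 := by
    rintro rfl
    have : z * (7 * x ^ 3 - 3 * x * 0 * z + 0 ^ 3 - z ^ 3) = 0 := by linear_combination h
    have := (mul_eq_zero.1 this).resolve_left hz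
    rw [this] at hu
    exact absurd hu (by decide)
  obtain ⟨k, y', z', rfl, rfl, hy', hz'⟩ := val hy0 hz hu
    (show Odd (-3 * x ^ 2) from (by decide : Odd (-3 : ℤ)).mul hx.pow) (by linear_combination h)
  have hE := L.ptE x _ _ hz h
  have hC := hN x _ _ hz h
  obtain ⟨i, r, hi, hir, hρi⟩ := L.inv4 hz'
  have hxi := xiR (A := A) x (2 ^ k * y') z' (2 ^ k) i (by positivity) hi
  rcases k with _ | _ | k
  · rw [pow_zero, one_mul] at hy
    exact (Int.not_odd_iff_even.2 hy) hy'
  · obtain ⟨d, hd⟩ : ∃ d : ℤ, x * z' = 3 + 4 * d := by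
      have hx2 := oddsq hx
      have hy2 := oddsq hy'
      obtain ⟨a, ha⟩ := hx2
      obtain ⟨b, hb⟩ := hy2
      have e : 7 * x ^ 3 * z' + 3 * x ^ 2 * y' ^ 2 - 24 * x * y' * z' ^ 2 + 8 * y' ^ 3 * z' - 64 * z' ^ 4 = 0 := by
        have : (4 : ℤ) * (7 * x ^ 3 * z' + 3 * x ^ 2 * y' ^ 2 - 24 * x * y' * z' ^ 2 + 8 * y' ^ 3 * z'
            - 64 * z' ^ 4) = 4 * 0 := by linear_combination h
        exact mul_left_cancel₀ (by norm_num) this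
      have e2 : 7 * (1 + 4 * a) * (x * z') + 3 * (1 + 4 * a) * (1 + 4 * b) - 24 * x * y' * z' ^ 2 +
          8 * y' ^ 3 * z' - 64 * z' ^ 4 = 0 := by rw [← ha, ← hb]; linear_combination e
      refine ⟨7 * a * (x * z') + 2 * (x * z') + 3 * (a + b + 4 * a * b) - 6 * x * y' * z' ^ 2 +
          2 * y' ^ 3 * z' - 16 * z' ^ 4, ?_⟩
      linear_combination -e2
    obtain ⟨m, hm⟩ := hy'.mul hz'
    have hdR : (x : R) * z' = 3 + 4 * d := by exact_mod_cast congrArg (fun n : ℤ => (n : R)) hd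
    have hmR : (y' : R) * z' = 2 * m + 1 := by exact_mod_cast congrArg (fun n : ℤ => (n : R)) hm
    refine L.caseI G _ _ _ (m + A + A * d - (2 * y' + A * x) * r + A ^ 2 * z' * i) hE hC
      (by convert hxi using 2; push_cast; ring) ?_
    push_cast
    linear_combination (-(2 * (y' : R) + A * x)) * hir + 2 * hmR + A * hdR
  · have hρ : ρ (-(((2 ^ (k + 2) * y' : ℤ) : R) + A * x - A ^ 2 * (((2 ^ (k + 2) : ℤ) : R) ^ 2 * z')) * i) = ρ A := by
      rw [map_mul, hρi, map_neg, map_sub, map_add, map_mul, L.rodd hx, L.reven hy]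
      have e : ρ (((2 ^ (k + 2) : ℤ) : R)) = 0 := L.reven ⟨2 ^ (k + 1), by ring⟩
      rw [map_mul, map_mul, map_pow, map_pow, e]
      linear_combination -ρ A * h0
    have := L.caseL G _ _ k _ hE (by convert hxi using 2; push_cast; ring)
      (by rw [hρ]; exact L.wne)
    rw [hρ] at this
    exact L.w2ne this

lemma ptII (L : Loc R A ρ) (G : Glob A)
    (hN : ∀ x y z : ℤ, z ≠ 0 → 7 * x ^ 3 * z + 3 * x ^ 2 * y ^ 2 - 3 * x * y * z ^ 2 + y ^ 3 * z - z ^ 4 = 0 →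
      Cls2 A (Xi A x y z)) (x y z : ℤ) (hz : z ≠ 0)
    (h : 7 * x ^ 3 * z + 3 * x ^ 2 * y ^ 2 - 3 * x * y * z ^ 2 + y ^ 3 * z - z ^ 4 = 0)
    (hx : Even x) (hy : Odd y) (hze : Even z) : False := by
  have h0 := L.two
  have hu : Odd (7 * x ^ 3 - 3 * x * y * z + y ^ 3 - z ^ 3) := by
    have h1 : Odd (y ^ 3) := hy.pow
    have h2 : Even (7 * x ^ 3 - 3 * x * y * z - z ^ 3) := by
      obtain ⟨b, rfl⟩ := hx
      obtain ⟨c, rfl⟩ := hze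
      exact ⟨28 * b ^ 3 - 6 * b * y * c - 4 * c ^ 3, by ring⟩
    have := h2.add_odd h1
    convert this using 1; ring
  have hx0 : x ≠ 0 := by
    rintro rfl
    have : z * (7 * 0 ^ 3 - 3 * 0 * y * z + y ^ 3 - z ^ 3) = 0 := by linear_combination h
    have := (mul_eq_zero.1 this).resolve_left hz
    rw [this] at hu
    exact absurd hu (by decide)
  obtain ⟨k, x', z', rfl, rfl, hx', hz'⟩ := val hx0 hz hu
    (show Odd (-3 * y ^ 2) from (by decide : Odd (-3 : ℤ)).mul hy.pow) (by linear_combination h)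
  have hE := L.ptE _ y _ hz h
  have hC := hN _ y _ hz h
  obtain ⟨i, r, hi, hir, hρi⟩ := L.inv4 hz'
  have hxi := xiR (A := A) (2 ^ k * x') y z' (2 ^ k) i (by positivity) hi
  have hρ : k ≠ 0 → ρ (-((y : R) + A * ((2 ^ k * x' : ℤ) : R) - A ^ 2 * (((2 ^ k : ℤ) : R) ^ 2 * z')) * i) = 1 := by
    intro hk
    rw [map_mul, hρi, map_neg, map_sub, map_add, map_mul, L.rodd hy, L.reven hx]
    have e : ρ (((2 ^ k : ℤ) : R)) = 0 := L.reven (by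
      obtain ⟨k, rfl⟩ := Nat.exists_eq_succ_of_ne_zero hk
      exact ⟨2 ^ k, by rw [pow_succ]; ring⟩)
    rw [map_mul, map_mul, map_pow, map_pow, e]
    linear_combination -h0
  rcases k with _ | _ | k
  · rw [pow_zero, one_mul] at hx
    exact (Int.not_odd_iff_even.2 hx) hx'
  · exact L.caseII _ _ _ hE hC (by convert hxi using 2; push_cast; ring) (hρ (by omega))
  · have := L.caseL G _ _ k _ hE (by convert hxi using 2; push_cast; ring)
      (by rw [hρ (by omega)]; exact one_ne_zero)
    rw [hρ (by omega)] at this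
    exact L.w2ne1 this.symm

end Loc
end
end C4
end

section
set_option linter.unusedSectionVars false
namespace C4
section
variable {K : Type*} [Field K] [CharZero K] {R : Subring K} {A : R} {F : Type*} [Field F]
    {ρ : R →+* F}
namespace Loc

lemma ptIII (L : Loc R A ρ)
    (hN : ∀ x y z : ℤ, z ≠ 0 → 7 * x ^ 3 * z + 3 * x ^ 2 * y ^ 2 - 3 * x * y * z ^ 2 + y ^ 3 * z - z ^ 4 = 0 →
      Cls2 A (Xi A x y z)) (x y z : ℤ) (hz : z ≠ 0)
    (h : 7 * x ^ 3 * z + 3 * x ^ 2 * y ^ 2 - 3 * x * y * z ^ 2 + y ^ 3 * z - z ^ 4 = 0)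
    (hx : Odd x) (hy : Even y) (hzo : Odd z) : False := by
  have hC := hN x y z hz h
  obtain ⟨i, r, hi, hir, hρi⟩ := L.inv4 hzo
  have hxi := xiR (A := A) x y z 1 i (by norm_num) hi
  rw [one_pow, one_mul] at hxi
  obtain ⟨b, hb⟩ := hy
  obtain ⟨a, ha⟩ := oddsq hx
  obtain ⟨c, hc⟩ := oddsq hzo
  obtain ⟨e, he⟩ : ∃ e, x * b = b + 2 * e := by
    obtain ⟨t, rfl⟩ := hx
    exact ⟨t * b, by ring⟩
  obtain ⟨g, hg⟩ : ∃ g, b * z = b + 2 * g := by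
    obtain ⟨t, rfl⟩ := hzo
    exact ⟨t * b, by ring⟩
  obtain ⟨d, hd⟩ : ∃ d : ℤ, x * z = 2 * b - 1 + 4 * d := by
    have e2 : 7 * (1 + 4 * a) * (x * z) + 12 * x ^ 2 * b ^ 2 - 6 * (b + 2 * e) * (1 + 4 * c) + 8 * b ^ 3 * z
        - (1 + 4 * c) ^ 2 = 0 := by
      rw [← ha, ← hc, ← he]; rw [hb] at h; linear_combination h
    refine ⟨2 * (x * z) + 7 * a * (x * z) + 3 * x ^ 2 * b ^ 2 - 2 * b - 3 * e - 6 * c * (b + 2 * e)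
      + 2 * b ^ 3 * z - 2 * c - 4 * c ^ 2, ?_⟩
    linear_combination -e2
  have hdR : (x : R) * z = 2 * b - 1 + 4 * d := by exact_mod_cast congrArg (fun n : ℤ => (n : R)) hd
  have hgR : (b : R) * z = b + 2 * g := by exact_mod_cast congrArg (fun n : ℤ => (n : R)) hg
  have hcR : (z : R) ^ 2 = 1 + 4 * c := by exact_mod_cast congrArg (fun n : ℤ => (n : R)) hc
  have hbR : (y : R) = b + b := by exact_mod_cast congrArg (fun n : ℤ => (n : R)) hb
  obtain ⟨κ, hκ⟩ := L.kap
  obtain ⟨m, hm | hm⟩ := Int.even_or_odd' b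
  · have hmR : (b : R) = 2 * m := by exact_mod_cast congrArg (fun n : ℤ => (n : R)) hm
    refine L.X1 _ 1 _ (g + A * d - A ^ 2 * c + m + A * m - (2 * b + A * x - A ^ 2 * z) * r) hC
      (by convert hxi using 2; push_cast; ring) ?_
    push_cast
    linear_combination (-((y : R) + A * x - A ^ 2 * z)) * hir + A * hdR + 2 * hgR - A ^ 2 * hcR
      + ((z : R) - 4 * r) * hbR + (2 + 2 * A) * hmR
  · have hmR : (b : R) = 2 * m + 1 := by exact_mod_cast congrArg (fun n : ℤ => (n : R)) hm
    refine L.X2 _ 1 _ (g + A * d - A ^ 2 * c + m + A * m - (2 * b + A * x - A ^ 2 * z) * r + 1 - 2 * κ) hC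
      (by convert hxi using 2; push_cast; ring) ?_
    push_cast
    linear_combination (-((y : R) + A * x - A ^ 2 * z)) * hir + A * hdR + 2 * hgR - A ^ 2 * hcR
      + ((z : R) - 4 * r) * hbR + (2 + 2 * A) * hmR - hκ

lemma ptIV (L : Loc R A ρ) (G : Glob A)
    (hN : ∀ x y z : ℤ, z ≠ 0 → 7 * x ^ 3 * z + 3 * x ^ 2 * y ^ 2 - 3 * x * y * z ^ 2 + y ^ 3 * z - z ^ 4 = 0 →
      Cls2 A (Xi A x y z)) (x y z : ℤ) (hz : z ≠ 0)
    (h : 7 * x ^ 3 * z + 3 * x ^ 2 * y ^ 2 - 3 * x * y * z ^ 2 + y ^ 3 * z - z ^ 4 = 0)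
    (hx : Even x) (hy : Odd y) (hzo : Odd z) (hx0 : x ≠ 0) : False := by
  have h0 := L.two
  have hw := L.w
  have hw3 := L.w3
  have hE := L.ptE x y z hz h
  have hC := hN x y z hz h
  obtain ⟨i, r, hi, hir, hρi⟩ := L.inv4 hzo
  have hxi := xiR (A := A) x y z 1 i (by norm_num) hi
  rw [one_pow, one_mul] at hxi
  obtain ⟨k, x', hxk, hx'⟩ := two_adic hx0
  obtain ⟨k, rfl⟩ : ∃ j, k = j + 1 := by
    rcases k with _ | k
    · exfalso; rw [pow_zero, one_mul] at hxk; rw [hxk] at hx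
      exact (Int.not_odd_iff_even.2 hx) hx'
    · exact ⟨k, rfl⟩
  have hxR : (x : R) = 2 ^ (k + 1) * x' := by exact_mod_cast congrArg (fun n : ℤ => (n : R)) hxk
  have hρx := L.reven hx
  have hρy := L.rodd hy
  have hρz := L.rodd hzo
  have hρx' := L.rodd hx'
  obtain ⟨W, hW⟩ := L.unit ((z : R) * (y ^ 2 + y * z + z ^ 2)) (by
    simp only [map_mul, map_add, map_pow, hρy, hρz]
    intro h; exact one_ne_zero (α := F) (by linear_combination h - h0))
  have hρW : ρ W = 1 := by
    have := congrArg ρ hW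
    simp only [map_mul, map_add, map_pow, hρy, hρz, map_one] at this
    linear_combination this - ρ W * h0
  obtain ⟨μ, hμ⟩ : ∃ μ : R, μ = -(7 * (x : R) ^ 2 * z + 3 * x * y ^ 2 - 3 * y * z ^ 2) * W := ⟨_, rfl⟩
  have hR : 7 * (x : R) ^ 3 * z + 3 * x ^ 2 * y ^ 2 - 3 * x * y * z ^ 2 + y ^ 3 * z - z ^ 4 = 0 := by
    exact_mod_cast congrArg (fun n : ℤ => (n : R)) h
  have hxμ : (y : R) = z + x * μ := by
    rw [hμ]
    linear_combination W * hR - (y - z) * hW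
  have hρμ : ρ μ = 1 := by
    rw [hμ]
    simp only [map_mul, map_add, map_pow, map_sub, map_neg, map_ofNat, hρx, hρy, hρz, hρW]
    linear_combination h0
  obtain ⟨d, hd⟩ := L.unit ((x' : R) * (A + μ)) (by
    rw [map_mul, map_add, hρx', hρμ]
    intro h
    exact pow_ne_zero 2 L.wne (by linear_combination hw - h))
  have hρd : ρ d = ρ A := by
    have := congrArg ρ hd
    rw [map_mul, map_mul, map_add, hρx', hρμ, map_one] at this
    linear_combination (-ρ A) * this + ρ d * hw - ρ A * h0
  obtain ⟨B, hB⟩ : ∃ B : R, B = 2 * (y : R) * (3 * i) ^ 2 - A * (A + μ) * (3 * i) := ⟨_, rfl⟩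
  have hρB : ρ B = 1 := by
    rw [hB]
    simp only [map_mul, map_add, map_pow, map_sub, map_neg, map_ofNat, hρi, hρy, hρμ]
    linear_combination (9 - ρ A ^ 2 - ρ A) * h0 - hw
  obtain ⟨Λ, hΛ⟩ : ∃ Λ : R, Λ = z * ((A + 1) - 2 ^ k * x' * B) * d := ⟨_, rfl⟩
  -- to the field
  have hiK : 3 * (z : K) * i = 1 := by exact_mod_cast toK hi
  have hzK : (z : K) ≠ 0 := by exact_mod_cast hz
  have hxK0 : (x : K) ≠ 0 := by exact_mod_cast hx0
  have hi' : (i : K) = 1 / (3 * z) := by field_simp; linear_combination hiK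
  have hdK : ((x' : K) * (A + μ)) * d = 1 := by exact_mod_cast toK hd
  have hAμ : (A : K) + μ ≠ 0 := by
    intro h; rw [h] at hdK; simp at hdK
  have hxK : (x : K) = 2 ^ (k + 1) * x' := by exact_mod_cast toK hxR
  have hxμK : (y : K) = z + x * μ := by exact_mod_cast toK hxμ
  have hBK : (B : K) = 2 * (y : K) * (3 * i) ^ 2 - A * (A + μ) * (3 * i) := by exact_mod_cast toK hB
  have hΛK : (Λ : K) = z * ((A + 1) - 2 ^ k * x' * B) * d := by exact_mod_cast toK hΛ
  have hdiff : Xi A x y z - (A ^ 2 - 1) / 3 = - x * (A + μ) / (3 * z) := by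
    unfold Xi; rw [hxμK]; field_simp; ring
  have hXi : Xi A x y z = ((-((y : R) + A * x - A ^ 2 * z) * i : R) : K) := by
    have := hxi
    push_cast at this ⊢
    linear_combination this
  have hEta : Eta A x y z - (A + 1) / 3 = (- 2 * (A + 1) + x * B) / 3 := by
    unfold Eta; rw [hBK, hi', hxμK]; field_simp; ring
  have h2k : (2 : K) ^ k ≠ 0 := pow_ne_zero _ two_ne_zero
  refine L.caseIV G (-((y : R) + A * x - A ^ 2 * z) * i) Λ (Eta A x y z) ((A + 1) / 3) (Λ / 2 ^ k) k
    (by rw [← hXi]; exact hE) (by rw [← hXi]; exact hC) ?_ rfl ?_ ?_ (by field_simp) ?_ ?_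
  · simp only [map_mul, map_add, map_pow, map_sub, map_neg, map_ofNat, hρi, hρy, hρz, hρx]
    linear_combination hw - (ρ A + 1) * h0
  · intro h
    rw [← hXi] at h
    rw [← sub_eq_zero, hdiff] at h
    have : - (x : K) * (A + μ) / (3 * z) ≠ 0 :=
      div_ne_zero (mul_ne_zero (neg_ne_zero.2 hxK0) hAμ) (mul_ne_zero (by norm_num) hzK)
    exact this h
  · rw [← hXi, hdiff, hEta, hΛK, hxK, pow_succ]
    field_simp
    linear_combination (-1 * ((A + 1) - 2 ^ k * x' * (B : K))) * hdK
  · rintro rfl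
    rw [hΛ]
    simp only [map_mul, map_add, map_pow, map_sub, map_neg, map_ofNat, hρz, hρx', hρB, hρd, map_one]
    ring
  · intro hk
    obtain ⟨j, rfl⟩ := Nat.exists_eq_succ_of_ne_zero hk
    rw [hΛ]
    simp only [map_mul, map_add, map_pow, map_sub, map_neg, map_ofNat, hρz, hρx', hρB, hρd, map_one]
    rw [pow_succ, h0]
    linear_combination hw - h0

theorem abstract_main (L : Loc R A ρ) (G : Glob A)
    (hN : ∀ x y z : ℤ, z ≠ 0 → 7 * x ^ 3 * z + 3 * x ^ 2 * y ^ 2 - 3 * x * y * z ^ 2 + y ^ 3 * z - z ^ 4 = 0 →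
      Cls2 A (Xi A x y z)) (x y z : ℤ) (hcop : Int.gcd x (Int.gcd y z : ℤ) = 1)
    (h : 7 * x ^ 3 * z + 3 * x ^ 2 * y ^ 2 - 3 * x * y * z ^ 2 + y ^ 3 * z - z ^ 4 = 0) :
    (x = 0 ∧ y = 0) ∨ (x = 0 ∧ z = 0) ∨ (y = 0 ∧ z = 0) ∨ (x = 0 ∧ y = z) := by
  by_cases hz : z = 0
  · subst hz
    have : x * y = 0 := by
      have : 3 * (x * y) ^ 2 = 0 := by linear_combination h
      simpa using this
    rcases mul_eq_zero.1 this with h | h <;> simp [h]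
  by_cases hx0 : x = 0
  · subst hx0
    have : z * (y ^ 3 - z ^ 3) = 0 := by linear_combination h
    have := (mul_eq_zero.1 this).resolve_left hz
    have : y = z := by
      have h3 : Odd 3 := by decide
      exact (Odd.strictMono_pow h3).injective (sub_eq_zero.1 this)
    simp [this]
  exfalso
  have par : ∀ n : ℤ, Even n ∨ Odd n := Int.even_or_odd
  rcases par x with hx | hx <;> rcases par y with hy | hy <;> rcases par z with hzp | hzp
  · have h1 : (2 : ℤ) ∣ (Int.gcd x (Int.gcd y z : ℤ) : ℤ) :=
      Int.dvd_coe_gcd hx.two_dvd (Int.dvd_coe_gcd hy.two_dvd hzp.two_dvd)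
    rw [hcop] at h1
    norm_num at h1
  · obtain ⟨a, rfl⟩ := hx
    obtain ⟨b, rfl⟩ := hy
    obtain ⟨c, rfl⟩ := hzp
    ring_nf at h
    omega
  · exact L.ptII G hN x y z hz h hx hy hzp
  · exact L.ptIV G hN x y z hz h hx hy hzp hx0
  · exact L.ptI G hN x y z hz h hx hy hzp
  · exact L.ptIII hN x y z hz h hx hy hzp
  · obtain ⟨a, rfl⟩ := hx
    obtain ⟨b, rfl⟩ := hy
    obtain ⟨c, rfl⟩ := hzp
    ring_nf at h
    omega
  · obtain ⟨a, rfl⟩ := hx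
    obtain ⟨b, rfl⟩ := hy
    obtain ⟨c, rfl⟩ := hzp
    ring_nf at h
    omega
end Loc
end
end C4
end

section
open NumberField Polynomial Module IsDedekindDomain

namespace C4
section D1
universe u
variable {K : Type u} [Field K] [NumberField K]

local instance fact7 : Fact (Nat.Prime 7) := ⟨by norm_num⟩

lemma v77 : padicValRat 7 (7 : ℚ) = 1 := by
  have := padicValRat.self (p := 7) (by norm_num)
  exact_mod_cast this

lemma resP (P : Ideal (𝓞 K)) (hP : P.IsMaximal) (hc : Ideal.absNorm P = 4) (A : 𝓞 K)
    (hA3 : A ^ 3 = 7) (h2 : 2 ∈ P) (hw : A ^ 2 + A + 1 ∈ P) (a : 𝓞 K) :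
    a ∈ P ∨ a - 1 ∈ P ∨ a - A ∈ P ∨ a - A ^ 2 ∈ P := by
  have hprime := hP.isPrime
  letI := Ideal.Quotient.field P
  have hcard : Nat.card (𝓞 K ⧸ P) = 4 := by
    rw [← hc, Ideal.absNorm_apply, Submodule.cardQuot_apply]
  have : Finite (𝓞 K ⧸ P) := Nat.finite_of_card_ne_zero (by omega)
  letI := Fintype.ofFinite (𝓞 K ⧸ P)
  have hp := FiniteField.pow_card (Ideal.Quotient.mk P a)
  rw [← Nat.card_eq_fintype_card, hcard, ← map_pow, Ideal.Quotient.eq] at hp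
  have : a * ((a - 1) * ((a - A) * (a - A ^ 2))) ∈ P := by
    have e : a * ((a - 1) * ((a - A) * (a - A ^ 2))) =
      (a ^ 4 - a) + (2 * (a * (a - 1) * 3) - (A ^ 2 + A + 1) * (a * (a - 1) * a)) := by
      linear_combination (a * (a - 1)) * hA3
    rw [e]
    exact P.add_mem hp (P.sub_mem (P.mul_mem_right _ h2) (P.mul_mem_right _ hw))
  rcases hprime.mem_or_mem this with h | h
  · exact Or.inl h
  rcases hprime.mem_or_mem h with h | h
  · exact Or.inr (Or.inl h)
  rcases hprime.mem_or_mem h with h | h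
  · exact Or.inr (Or.inr (Or.inl h))
  · exact Or.inr (Or.inr (Or.inr h))

lemma mkLoc (pb : PowerBasis ℚ K) (hm : minpoly ℚ pb.gen = X ^ 3 - C 7) :
    ∃ (R : Subring K) (A : R) (F : Type u) (_ : Field F) (ρ : R →+* F),
      Loc R A ρ ∧ (A : K) = pb.gen := by
  have h3 := gen3 pb hm
  have hint : IsIntegral ℤ pb.gen := by
    refine IsIntegral.of_pow (n := 3) (by norm_num) ?_
    rw [h3]
    have := isIntegral_algebraMap (R := ℤ) (A := K) (x := 7)
    rwa [map_ofNat] at this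
  let A : 𝓞 K := ⟨pb.gen, hint⟩
  have hA : algebraMap (𝓞 K) K A = pb.gen := rfl
  have hA3 : A ^ 3 = 7 := by
    apply FaithfulSMul.algebraMap_injective (𝓞 K) K
    rw [map_pow, hA, h3, map_ofNat]
  obtain ⟨c3, hn, hmax⟩ := P4_facts pb hm A hA hA3
  set P : Ideal (𝓞 K) := Ideal.span {2, A ^ 2 - A + 1} with hPdef
  have h2P : (2 : 𝓞 K) ∈ P := Ideal.subset_span (by simp)
  have hwP : A ^ 2 + A + 1 ∈ P := by
    have : A ^ 2 - A + 1 ∈ P := Ideal.subset_span (by simp)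
    have e : A ^ 2 + A + 1 = (A ^ 2 - A + 1) + 2 * A := by ring
    rw [e]
    exact P.add_mem this (P.mul_mem_right _ h2P)
  have hPb : P ≠ ⊥ := by
    intro h; rw [h] at hn; simp at hn
  have h2P2 : (2 : 𝓞 K) ∉ P ^ 2 := by
    intro h
    have hle : Ideal.span {(2 : 𝓞 K)} ≤ P ^ 2 := by
      rw [Ideal.span_singleton_le_iff_mem]; exact h
    have hd := Ideal.absNorm_dvd_absNorm_of_le hle
    rw [map_pow, hn, Ideal.absNorm_span_singleton] at hd
    have : Algebra.norm ℤ (2 : 𝓞 K) = 8 := by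
      have := Algebra.norm_algebraMap (S := 𝓞 K) (2 : ℤ)
      rw [RingOfIntegers.rank, finrank3 pb hm] at this
      simpa using this
    rw [this] at hd
    norm_num at hd
  let v : HeightOneSpectrum (𝓞 K) := ⟨P, hmax.isPrime, hPb⟩
  let w := v.valuation K
  have hw2 : w 2 = WithZero.exp (-1 : ℤ) := by
    have e : w 2 = v.intValuation 2 := by
      have := v.valuation_of_algebraMap (K := K) 2
      rw [← this]; rfl
    rw [e]
    apply le_antisymm
    · have := (v.intValuation_le_pow_iff_mem 2 1).2 (by simpa using h2P)
      simpa using this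
    · by_contra hlt
      push Not at hlt
      apply h2P2
      apply (v.intValuation_le_pow_iff_mem 2 2).1
      have h20 : v.intValuation 2 ≠ 0 := v.intValuation_ne_zero 2 (by norm_num)
      rw [← WithZero.exp_log h20] at hlt ⊢
      rw [WithZero.exp_lt_exp] at hlt
      rw [WithZero.exp_le_exp]
      push_cast
      omega
  have hlt1 : ∀ x, w x < 1 → w x ≤ w 2 := by
    intro x hx
    rw [hw2]
    by_cases h0 : w x = 0
    · rw [h0]; exact zero_le
    rw [← WithZero.exp_log h0] at hx ⊢
    rw [← WithZero.exp_zero, WithZero.exp_lt_exp] at hx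
    rw [WithZero.exp_le_exp]
    omega
  let V := w.valuationSubring
  have hV : ∀ x, x ∈ V ↔ w x ≤ 1 := fun x => Iff.rfl
  let ρ : V →+* IsLocalRing.ResidueField V := IsLocalRing.residue V
  have hunit : ∀ u : V, IsUnit u ↔ w u = 1 := by
    intro u
    constructor
    · rintro ⟨⟨a, b, hab, hba⟩, rfl⟩
      have h1 := (hV a).1 a.2
      have h2 := (hV b).1 b.2
      have h3 : w a * w b = 1 := by
        rw [← map_mul]
        have := congrArg (fun x : V => (x : K)) hab
        simp only [MulMemClass.coe_mul, OneMemClass.coe_one] at this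
        rw [this, map_one]
      apply le_antisymm h1
      by_contra hc
      push Not at hc
      have : w a * w b < 1 := by
        calc w a * w b ≤ w a * 1 := by gcongr
          _ < 1 := by rwa [mul_one]
      rw [h3] at this
      exact lt_irrefl _ this
    · intro hu
      have hu0 : (u : K) ≠ 0 := by
        intro h; rw [h, map_zero] at hu; exact zero_ne_one hu
      refine IsUnit.of_mul_eq_one ⟨(u : K)⁻¹, ?_⟩ ?_
      · rw [hV, map_inv₀, hu, inv_one]
      · apply Subtype.ext
        simp [hu0]
  have hρ : ∀ u : V, ρ u = 0 ↔ w u < 1 := by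
    intro u
    rw [IsLocalRing.residue_eq_zero_iff, IsLocalRing.mem_maximalIdeal, mem_nonunits_iff, hunit]
    exact ⟨fun h => lt_of_le_of_ne ((hV u).1 u.2) h, fun h => h.ne⟩
  have hO : ∀ a : 𝓞 K, algebraMap (𝓞 K) K a ∈ V := fun a => v.valuation_le_one a
  have hOP : ∀ a ∈ P, ρ ⟨algebraMap (𝓞 K) K a, hO a⟩ = 0 := by
    intro a ha
    rw [hρ]
    exact (v.valuation_lt_one_iff_mem a).2 ha
  have hAV : pb.gen ∈ V := hO A
  have hw20 : w 2 ≠ 0 := by rw [hw2]; exact WithZero.exp_ne_zero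
  have h20 : (2 : K) ≠ 0 := two_ne_zero
  have hdiv : ∀ (u : K) (n : ℕ), w (u * 2 ^ n) = w u * WithZero.exp (-(n : ℤ)) := by
    intro u n
    rw [map_mul, map_pow, hw2, ← WithZero.exp_nsmul]
    simp
  have two' : (2 : IsLocalRing.ResidueField V) = 0 := by
    have := hOP 2 h2P
    rw [← this]
    rw [← map_ofNat ρ 2]
    congr 1
  refine ⟨V.toSubring, ⟨pb.gen, hAV⟩, IsLocalRing.ResidueField V, inferInstance, ρ, ?_, rfl⟩
  constructor
  · exact Subtype.ext h3
  · intro a ha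
    have := hlt1 _ ((hρ a).1 ha)
    refine ⟨⟨(a : K) / 2, ?_⟩, Subtype.ext ?_⟩
    · change w (a / 2) ≤ 1
      rw [map_div₀]
      exact div_le_one_of_le₀ this zero_le
    · change (a : K) = 2 * (a / 2)
      field_simp
  · exact two'
  · intro a ha
    have : IsUnit (a : V) := by
      by_contra hc
      apply ha
      exact (IsLocalRing.residue_eq_zero_iff (R := V) a).2 hc
    obtain ⟨b, hb⟩ := this.exists_right_inv
    exact ⟨b, hb⟩
  · have := hOP _ hwP
    rw [← this]
    rw [← map_one ρ, ← map_pow, ← map_add, ← map_add]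
    congr 1
  · intro x
    obtain ⟨u, rfl⟩ := IsLocalRing.residue_surjective x
    obtain ⟨a, ha⟩ := v.exists_valuation_sub_lt_of_integer (K := K) ((hV u).1 u.2) 1
    have hau : ρ ⟨algebraMap (𝓞 K) K a, hO a⟩ = ρ u := by
      rw [← sub_eq_zero, ← map_sub, hρ]
      exact ha
    change ρ u = _ ∨ ρ u = _ ∨ ρ u = _ ∨ ρ u = _
    rw [← hau]
    rcases resP P hmax hn A hA3 h2P hwP a with h | h | h | h
    · exact Or.inl (hOP _ h)
    · right; left
      rw [← map_one ρ, ← sub_eq_zero, ← map_sub, ← hOP _ h]; congr 1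
    · right; right; left
      rw [← sub_eq_zero, ← map_sub, ← hOP _ h]; congr 1
    · right; right; right
      rw [← map_pow, ← sub_eq_zero, ← map_sub, ← hOP _ h]; congr 1
  · intro x hx
    have hwx : w x ≠ 0 := by rwa [Valuation.ne_zero_iff]
    have hu1 : ∀ (u : K) (h : w u = 1), ρ ⟨u, h.le⟩ ≠ 0 := by
      intro u h hc
      rw [hρ] at hc
      exact hc.ne h
    obtain ⟨n, hn⟩ : ∃ n : ℤ, w x = WithZero.exp n := ⟨_, (WithZero.exp_log hwx).symm⟩
    rcases lt_trichotomy n 0 with h | h | h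
    · obtain ⟨m, rfl⟩ : ∃ m : ℕ, n = -((m + 1 : ℕ) : ℤ) := ⟨(-n - 1).toNat, by push_cast; omega⟩
      have h1 : w (x / 2 ^ (m + 1)) = 1 := by
        rw [map_div₀, map_pow, hw2, hn, ← WithZero.exp_nsmul, ← WithZero.exp_sub,
          ← WithZero.exp_zero]
        congr 1
        simp
      refine ⟨⟨_, h1.le⟩, hu1 _ h1, Or.inr ⟨m, Or.inl ?_⟩⟩
      change x = 2 ^ (m + 1) * (x / 2 ^ (m + 1))
      field_simp
    · subst h
      have h1 : w x = 1 := by rw [hn, WithZero.exp_zero]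
      exact ⟨⟨x, h1.le⟩, hu1 _ h1, Or.inl rfl⟩
    · obtain ⟨m, rfl⟩ : ∃ m : ℕ, n = ((m + 1 : ℕ) : ℤ) := ⟨(n - 1).toNat, by push_cast; omega⟩
      have h1 : w (x * 2 ^ (m + 1)) = 1 := by
        rw [hdiv, hn, ← WithZero.exp_add, ← WithZero.exp_zero]
        congr 1
        ring
      exact ⟨⟨_, h1.le⟩, hu1 _ h1, Or.inr ⟨m, Or.inr rfl⟩⟩


lemma inst_main (pb : PowerBasis ℚ K) (hm : minpoly ℚ pb.gen = X ^ 3 - C 7) (φ : K →+* ℝ)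
    (x y z : ℤ) (hcop : Int.gcd x (Int.gcd y z : ℤ) = 1)
    (h : 7 * x ^ 3 * z + 3 * x ^ 2 * y ^ 2 - 3 * x * y * z ^ 2 + y ^ 3 * z - z ^ 4 = 0) :
    (x = 0 ∧ y = 0) ∨ (x = 0 ∧ z = 0) ∨ (y = 0 ∧ z = 0) ∨ (x = 0 ∧ y = z) := by
  obtain ⟨R, A, F, _, ρ, L, hA⟩ := mkLoc pb hm
  have hns : ∀ t : K, 2 - pb.gen ≠ t ^ 2 := by
    intro t ht
    obtain ⟨u, rfl⟩ := L.mem_of_sq t (2 - A) (by push_cast; rw [hA, ht])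
    apply L.M4b u 0
    apply Subtype.ext
    push_cast
    rw [hA, ht]; ring
  have G : Glob A := by
    constructor
    · intro ξ η hξ hE
      unfold E0 at hE
      rw [hA] at hE
      have := classA0 pb hm φ hns ξ η hξ hE
      unfold Loc.Cls
      rw [hA]; exact this
    · intro s η hs hE
      refine L.halve φ ?_ s η hs hE
      intro X t hX hh
      rw [hA] at hh
      have := classA1 pb hm φ hns X t hX hh
      unfold Loc.Cls
      rw [hA]; exact this
  refine L.abstract_main G ?_ x y z hcop h
  clear h hcop x y z
  intro x y z hz h
  have hE := L.ptE x y z hz h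
  have hzQ : (z : ℚ) ≠ 0 := by exact_mod_cast hz
  have hzK : (z : K) ≠ 0 := by exact_mod_cast hz
  have hQ : 7 * (x : ℚ) ^ 3 * z + 3 * x ^ 2 * y ^ 2 - 3 * x * y * z ^ 2 + y ^ 3 * z - z ^ 4 = 0 := by
    exact_mod_cast h
  have hNm : Algebra.norm ℚ (Loc.Xi A x y z) = (((x : ℚ) * y - 4 * z ^ 2) / (3 * z ^ 2)) ^ 2 := by
    have h1 := norm_form pb hm (-(y : ℚ) / (3 * z)) (-(x : ℚ) / (3 * z)) (1 / 3)
    have e : Loc.Xi A x y z = ((-(y : ℚ) / (3 * z) : ℚ) : K) + ((-(x : ℚ) / (3 * z) : ℚ) : K) * pb.gen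
        + ((1 / 3 : ℚ) : K) * pb.gen ^ 2 := by
      unfold Loc.Xi
      rw [hA]
      push_cast
      field_simp
      ring
    rw [e, h1]
    field_simp
    linear_combination (-1 : ℚ) * hQ
  have hξ : Loc.Xi A x y z ≠ 0 := by
    intro h0
    have h1 : (y : K) + x * pb.gen - z * pb.gen ^ 2 = 0 := by
      unfold Loc.Xi at h0
      rw [hA] at h0
      rcases div_eq_zero_iff.1 h0 with h0 | h0
      · linear_combination -h0
      · exact absurd h0 (mul_ne_zero (by norm_num) hzK)
    let p : ℚ[X] := C (y : ℚ) + C (x : ℚ) * X + C (-z : ℚ) * X ^ 2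
    have hp2 : p.coeff 2 = -z := by
      simp only [p, coeff_add, coeff_C_mul, coeff_C, coeff_X, coeff_X_pow]; norm_num
    have hp0 : p ≠ 0 := by
      intro hp
      rw [hp] at hp2
      simp at hp2
      exact hz hp2
    have hd := natDegree_le_natDegree (minpoly.degree_le_of_ne_zero ℚ pb.gen hp0 (by
      simp only [p, map_add, map_mul, aeval_C, aeval_X, map_pow, map_neg, map_intCast]
      linear_combination h1))
    rw [hm, natDegree_X_pow_sub_C] at hd
    have : p.natDegree ≤ 2 := by
      simp only [p]; compute_degree
    omega
  have hNA : Algebra.norm ℚ pb.gen = 7 := by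
    have := norm_form pb hm 0 1 0
    simpa using this
  have hNA2 : Algebra.norm ℚ (2 - pb.gen) = 1 := by
    have := norm_form pb hm 2 (-1) 0
    norm_num at this
    rw [← this]; congr 1; ring
  have no7 : ∀ r n : ℚ, r ≠ 0 → n ^ 2 ≠ 7 * r ^ 2 := by
    intro r n hr he
    have hn : n ≠ 0 := by
      rintro rfl
      have : r ^ 2 = 0 := by linear_combination -he / 7
      exact hr (pow_eq_zero_iff (by norm_num) |>.1 this)
    have hh := congrArg (padicValRat 7) he
    rw [padicValRat.mul (by norm_num) (pow_ne_zero 2 hr), padicValRat.pow, padicValRat.pow,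
      v77] at hh
    push_cast at hh
    omega
  obtain ⟨s, hs, hc⟩ := G.A0 _ _ hξ hE
  rw [hA] at hc
  have hNs : Algebra.norm ℚ s ≠ 0 := by
    rwa [Ne, Algebra.norm_eq_zero_iff]
  unfold Loc.Cls2
  rw [hA]
  refine ⟨s, hs, ?_⟩
  rcases hc with hc | hc | hc | hc
  · exact Or.inl hc
  · exfalso
    rw [hc, map_mul, map_pow, hNA] at hNm
    exact no7 _ _ hNs hNm.symm
  · exact Or.inr hc
  · exfalso
    rw [hc, map_mul, map_mul, map_pow, hNA, hNA2, mul_one] at hNm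
    exact no7 _ _ hNs hNm.symm

end D1

lemma irr7 : Irreducible (X ^ 3 - C 7 : ℚ[X]) := by
  have : Fact (Nat.Prime 7) := ⟨by norm_num⟩
  apply X_pow_sub_C_irreducible_of_prime Nat.prime_three
  intro b hb
  have hb0 : b ≠ 0 := by rintro rfl; norm_num at hb
  have hh := congrArg (padicValRat 7) hb
  rw [padicValRat.pow, v77] at hh
  push_cast at hh
  omega

lemma exK : ∃ (K : Type) (_ : Field K) (_ : CharZero K) (I : Algebra ℚ K)
    (pb : PowerBasis ℚ K) (_ : minpoly ℚ pb.gen = X ^ 3 - C 7), Nonempty (K →+* ℝ) := by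
  have : Fact (Irreducible (X ^ 3 - C 7 : ℚ[X])) := ⟨irr7⟩
  have hmon : (X ^ 3 - C 7 : ℚ[X]).Monic := monic_X_pow_sub_C 7 (by norm_num)
  have hr : ((7 : ℝ) ^ (1 / 3 : ℝ)) ^ 3 = 7 := by
    rw [← Real.rpow_natCast, ← Real.rpow_mul (by norm_num)]
    norm_num
  refine ⟨AdjoinRoot (X ^ 3 - C 7 : ℚ[X]), inferInstance, charZero_of_injective_algebraMap
    (algebraMap ℚ (AdjoinRoot (X ^ 3 - C 7 : ℚ[X]))).injective, inferInstance,
    AdjoinRoot.powerBasis irr7.ne_zero, ?_, ⟨AdjoinRoot.lift (algebraMap ℚ ℝ)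
      ((7 : ℝ) ^ (1 / 3 : ℝ)) ?_⟩⟩
  · rw [AdjoinRoot.powerBasis_gen, AdjoinRoot.minpoly_root irr7.ne_zero, hmon.leadingCoeff]
    simp
  · simp only [eval₂_sub, eval₂_X_pow, eval₂_C, hr]; simp

theorem conc (x y z : ℤ) (hcop : Int.gcd x (Int.gcd y z : ℤ) = 1)
    (h : 7 * x ^ 3 * z + 3 * x ^ 2 * y ^ 2 - 3 * x * y * z ^ 2 + y ^ 3 * z - z ^ 4 = 0) :
    (x = 0 ∧ y = 0) ∨ (x = 0 ∧ z = 0) ∨ (y = 0 ∧ z = 0) ∨ (x = 0 ∧ y = z) := by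
  obtain ⟨K, _, _, I, pb, hm, ⟨φ⟩⟩ := exK
  obtain rfl : I = DivisionRing.toRatAlgebra := Subsingleton.elim _ _
  have : FiniteDimensional ℚ K := pb.finite
  have : NumberField K := {}
  exact inst_main pb hm φ x y z hcop h

end C4
end

/-- The only rational points on `C₄ : 7x³z + 3x²y² - 3xyz² + y³z - z⁴ = 0` are
`(1:0:0)`, `(0:1:0)`, `(0:1:1)`. -/
theorem rational_points_C4 (x y z : ℤ)
    (hcop : Int.gcd x (Int.gcd y z : ℤ) = 1) (hnz : ¬ (x = 0 ∧ y = 0 ∧ z = 0))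
    (h : 7 * x ^ 3 * z + 3 * x ^ 2 * y ^ 2 - 3 * x * y * z ^ 2 + y ^ 3 * z - z ^ 4 = 0) :
    (x, y, z) = (1, 0, 0) ∨ (x, y, z) = (-1, 0, 0) ∨
    (x, y, z) = (0, 1, 0) ∨ (x, y, z) = (0, -1, 0) ∨
    (x, y, z) = (0, 1, 1) ∨ (x, y, z) = (0, -1, -1) := by
  have key := C4.conc x y z hcop h
  rcases key with ⟨rfl, rfl⟩ | ⟨rfl, rfl⟩ | ⟨rfl, rfl⟩ | ⟨rfl, rfl⟩
  · exfalso
    have hz : z ^ 4 = 0 := by linear_combination -h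
    exact hnz ⟨rfl, rfl, pow_eq_zero_iff (by norm_num) |>.1 hz⟩
  · have h1 : y.natAbs = 1 := by simpa [Int.natAbs_abs] using hcop
    rcases Int.natAbs_eq_iff.1 h1 with h2 | h2 <;> simp [h2]
  · have h1 : x.natAbs = 1 := by simpa using hcop
    rcases Int.natAbs_eq_iff.1 h1 with h2 | h2 <;> simp [h2]
  · have h1 : y.natAbs = 1 := by simpa [Int.natAbs_abs] using hcop
    rcases Int.natAbs_eq_iff.1 h1 with h2 | h2 <;> simp [h2]
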